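/- arXiv:1607.08137 — 2 statements merged into one kernel-verified Lean document; each statement's English description precedes it below -/
import Mathlib

section
/- Take k = 6, n = 8 and the weight vectors w¹,…,w⁶ the six vectors in ℤ⁶ with five coordinates 1 and one coordinate 0, together with w⁷ = w⁸ = w⁹ = (1,1,1,1,1,1), in the Vandermonde-quotient construction. Then for every δ ≥ 0 the power series F_δ ∈ ℚ[[x₁,…,x₆]] is divisible by Δ = ∏_{1≤i<j≤6}(x_i−x_j), and the resulting series I₀(q) = Σ_{δ≥0} a_δ q^δ with a_δ = (−1)^δ (F_δ/Δ)(0) satisfies {361θ⁴ − 19q(700θ⁴+1238θ³+999θ²+380θ+57) + q²(−64745θ⁴−368006θ³−609133θ²−412756θ−102258) + 27q³(6397θ⁴+12198θ³−11923θ²−27360θ−11286) + 729q⁴(64θ⁴+1154θ³+2425θ²+1848θ+486) − 177147q⁵(θ+1)⁴} I₀ = 0. -/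
noncomputable section
namespace Stmt9

/-- The multivariable power series ring `ℚ[[x₁,…,x_6]]`. -/
abbrev R := MvPowerSeries (Fin 6) ℚ

/-- The constant `a` in `R`. -/
def Cc (a : ℚ) : R := MvPowerSeries.C a

/-- The pairs `i < j`. -/
def pairs : Finset (Fin 6 × Fin 6) := Finset.univ.filter fun p => p.1 < p.2

/-- The Vandermonde element `Δ = ∏_{i<j}(x_i − x_j)`. -/
def Vand : R := ∏ p ∈ pairs, (MvPowerSeries.X p.1 - MvPowerSeries.X p.2)

/-- The weight vectors. -/
def ws : List (Fin 6 → ℕ) := [![0, 1, 1, 1, 1, 1], ![1, 0, 1, 1, 1, 1], ![1, 1, 0, 1, 1, 1], ![1, 1, 1, 0, 1, 1], ![1, 1, 1, 1, 0, 1], ![1, 1, 1, 1, 1, 0], ![1, 1, 1, 1, 1, 1], ![1, 1, 1, 1, 1, 1], ![1, 1, 1, 1, 1, 1]]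

/-- `n = 8`. -/
def n : ℕ := 8

/-- The term `T_d` of the Vandermonde-quotient construction:
`T_d = ∏_{i<j}(x_i−x_j+d_i−d_j) · ∏_s ∏_{m=1}^{⟨wˢ,d⟩}(⟨wˢ,x⟩+m) · u_d⁻¹`. -/
def T (d : Fin 6 → ℕ) : R :=
  (∏ p ∈ pairs,
      (MvPowerSeries.X p.1 - MvPowerSeries.X p.2 + Cc ((d p.1 : ℚ) - (d p.2 : ℚ)))) *
    (ws.map fun w =>
      ∏ m ∈ Finset.Icc 1 (∑ j, w j * d j),
        ((∑ j, Cc ((w j : ℚ)) * MvPowerSeries.X j) + Cc (m : ℚ))).prod *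
    (∏ j, ∏ m ∈ Finset.Icc 1 (d j), (MvPowerSeries.X j + Cc (m : ℚ)) ^ n)⁻¹

/-- `F_δ = Σ_{d₁+⋯+d_k=δ} T_d`. -/
def F (δ : ℕ) : R :=
  ∑ d ∈ (Fintype.piFinset fun _ : Fin 6 => Finset.range (δ + 1)).filter
      (fun d => ∑ j, d j = δ), T d

/-- The Euler operator `θ = q·d/dq` on `ℚ[[q]]`. -/
def th (f : PowerSeries ℚ) : PowerSeries ℚ :=
  PowerSeries.mk fun d => (d : ℚ) * PowerSeries.coeff d f

/-!
Up to a factor coming from the three line bundles, `F N` is the coefficient of `q ^ N` in a `6 × 6`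
determinant whose `i`-th column consists of the values at `x_i` of polynomials that do not depend on
`i`. Reducing them modulo `∏ i, (X - x_i)` splits off the Vandermonde determinant, which proves the
divisibility. At `x = 0` the quotient becomes a minor of the `9 × 9` matrix `M` of a shift
operator acting on the polynomials modulo `Q = z ^ 8 (z - N - 1)`.

The same minor is computed by duality. Modulo `q ^ (N + 1)`, the matrix `M` satisfies a first-order
system `θ M = A M - M B` with `tr A = tr B`, so its determinant is `1`; and its product with the
matrix of the dual solutions, paired with powers of `z` by the residue at the zeros of `Q`, is a
constant Hankel matrix, because the residues of a rational function add up to zero. The `6 × 6`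
minor is therefore a `3 × 3` minor of the dual matrix, and expanding the latter gives a double sum,
with values in the dual numbers since two points collide in the eightfold zero.

The recurrence for this double sum is proved by creative telescoping. The certificate is verified as
an identity in `ℤ[t, x, y]`: an integer polynomial vanishes as soon as it vanishes at a point whose
coordinates grow fast enough compared with bounds on its coefficients.
-/

/-! ### Vanishing at a single point -/

theorem polynomial_eq_zero_of_natAbs_coeff_lt {p : Polynomial ℤ} {M : ℕ}
    (hp : ∀ k, (p.coeff k).natAbs < M) (hM : p.eval (M : ℤ) = 0) : p = 0 := by
  by_contra hne
  obtain ⟨q, hq⟩ : Polynomial.X ^ p.natTrailingDegree ∣ p :=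
    Polynomial.X_pow_dvd_iff.mpr fun _ hd => Polynomial.coeff_eq_zero_of_lt_natTrailingDegree hd
  have hM_ne : (M : ℤ) ≠ 0 := by have := hp 0; omega
  have hq_root : q.eval (M : ℤ) = 0 := by
    rw [hq, Polynomial.eval_mul, Polynomial.eval_pow, Polynomial.eval_X] at hM
    exact (mul_eq_zero.mp hM).resolve_left (pow_ne_zero _ hM_ne)
  have hq_coeff : q.coeff 0 = p.trailingCoeff := by
    have := Polynomial.coeff_X_pow_mul q p.natTrailingDegree 0
    rw [← hq, zero_add] at this
    exact this.symm
  have hdvd : (M : ℤ) ∣ p.trailingCoeff := by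
    simpa [hq_root, ← hq_coeff, Polynomial.coeff_zero_eq_eval_zero] using
      Polynomial.sub_dvd_eval_sub (M : ℤ) 0 q
  refine hne (Polynomial.trailingCoeff_eq_zero.mp (Int.eq_zero_of_abs_lt_dvd hdvd ?_))
  rw [Int.abs_eq_natAbs]
  exact_mod_cast hp _

section Specialize

open MvPolynomial

variable {n : ℕ} {R : Type*} [CommSemiring R]

theorem coeff_eval_C_finSuccEquiv (M : R)
    (p : MvPolynomial (Fin (n + 1)) R) (m : Fin n →₀ ℕ) {N : ℕ}
    (hN : (finSuccEquiv R n p).natDegree < N) :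
    coeff m ((finSuccEquiv R n p).eval (C M)) =
      ∑ k ∈ Finset.range N, coeff (m.cons k) p * M ^ k := by
  rw [Polynomial.eval_eq_sum_range' hN, coeff_sum]
  refine Finset.sum_congr rfl fun k _ => ?_
  rw [← C_pow, mul_comm, coeff_C_mul, finSuccEquiv_coeff_coeff, mul_comm]

theorem eval_eval_C_finSuccEquiv (M : R) (w : Fin n → R)
    (p : MvPolynomial (Fin (n + 1)) R) :
    eval w ((finSuccEquiv R n p).eval (C M)) = eval (Fin.cons M w : Fin (n + 1) → R) p := by
  rw [eval_eq_eval_mv_eval', Polynomial.eval_map, ← Polynomial.eval₂_at_apply, eval_C]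

end Specialize

/-- `P` bounds the absolute values of the coefficients of `p`. Such a `P` can be read off from any
expression for `p`, and it tells how large a point has to be for `p` to vanish as soon as it
vanishes at that point. -/
def Majorizes {σ : Type*} (P : MvPolynomial σ ℕ) (p : MvPolynomial σ ℤ) : Prop :=
  ∀ m, (p.coeff m).natAbs ≤ P.coeff m

namespace Majorizes

open MvPolynomial

section Ring
variable {σ : Type*} {P Q : MvPolynomial σ ℕ} {p q : MvPolynomial σ ℤ}

theorem add (hp : Majorizes P p) (hq : Majorizes Q q) : Majorizes (P + Q) (p + q) := fun m => by
  simpa only [coeff_add] using (Int.natAbs_add_le _ _).trans (add_le_add (hp m) (hq m))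

theorem neg (hp : Majorizes P p) : Majorizes P (-p) := fun m => by
  simpa only [coeff_neg, Int.natAbs_neg] using hp m

theorem sub (hp : Majorizes P p) (hq : Majorizes Q q) : Majorizes (P + Q) (p - q) := by
  simpa only [sub_eq_add_neg] using hp.add hq.neg

theorem mul (hp : Majorizes P p) (hq : Majorizes Q q) : Majorizes (P * Q) (p * q) := fun m => by
  classical
  simp only [coeff_mul]
  refine (Int.natAbs_sum_le _ _).trans (Finset.sum_le_sum fun a _ => ?_)
  simpa only [Int.natAbs_mul] using Nat.mul_le_mul (hp a.1) (hq a.2)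

theorem intCast (c : ℤ) : Majorizes (C c.natAbs : MvPolynomial σ ℕ) (c : MvPolynomial σ ℤ) :=
  fun m => by
    classical
    rw [← eq_intCast (C : ℤ →+* MvPolynomial σ ℤ), coeff_C, coeff_C]
    split_ifs <;> simp

theorem X (i : σ) : Majorizes (X i) (X i) := fun m => by
  classical
  rw [coeff_X, coeff_X]
  split_ifs <;> simp

theorem natCast (c : ℕ) : Majorizes (C c : MvPolynomial σ ℕ) (c : MvPolynomial σ ℤ) := by
  simpa only [Int.natAbs_natCast, Int.cast_natCast] using intCast (σ := σ) c

theorem one : Majorizes (C 1 : MvPolynomial σ ℕ) 1 := by simpa using intCast (σ := σ) 1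

theorem ofNat (c : ℕ) [c.AtLeastTwo] :
    Majorizes (C c : MvPolynomial σ ℕ) (ofNat(c) : MvPolynomial σ ℤ) := by
  exact natCast c

theorem pow (hp : Majorizes P p) (k : ℕ) : Majorizes (P ^ k) (p ^ k) := by
  induction k with
  | zero => simpa using one
  | succ k ih => simpa only [pow_succ] using ih.mul hp

end Ring

theorem coeff_le_eval_one {σ : Type*} (P : MvPolynomial σ ℕ) (m : σ →₀ ℕ) :
    P.coeff m ≤ eval (fun _ => 1) P := by
  classical
  by_cases hm : m ∈ P.support
  · simpa [eval_eq] using Finset.single_le_sum (f := fun m => P.coeff m) (by simp) hm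
  · simp [notMem_support_iff.mp hm]

section Specialize

variable {n : ℕ}

variable {P : MvPolynomial (Fin (n + 1)) ℕ} {p : MvPolynomial (Fin (n + 1)) ℤ}

theorem eval_C_finSuccEquiv (hp : Majorizes P p) (M : ℕ) :
    Majorizes ((finSuccEquiv ℕ n P).eval (C M)) ((finSuccEquiv ℤ n p).eval (C (M : ℤ))) := by
  intro m
  have hN := Nat.lt_succ_self
    (max (finSuccEquiv ℕ n P).natDegree (finSuccEquiv ℤ n p).natDegree)
  rw [coeff_eval_C_finSuccEquiv _ _ _ ((le_max_left _ _).trans_lt hN),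
    coeff_eval_C_finSuccEquiv _ _ _ ((le_max_right _ _).trans_lt hN)]
  refine (Int.natAbs_sum_le _ _).trans (Finset.sum_le_sum fun k _ => ?_)
  rw [Int.natAbs_mul, Int.natAbs_pow, Int.natAbs_natCast]
  exact Nat.mul_le_mul_right _ (hp _)

theorem eq_zero_of_eval_C_finSuccEquiv (hp : Majorizes P p) {M : ℕ} (hM : eval (fun _ => 1) P < M)
    (h₀ : (finSuccEquiv ℤ n p).eval (C (M : ℤ)) = 0) : p = 0 := by
  ext m
  set N := (finSuccEquiv ℤ n p).natDegree + 1 + m 0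
  let q : Polynomial ℤ :=
    ∑ k ∈ Finset.range (N + 1), Polynomial.monomial k (coeff (m.tail.cons k) p)
  have hq_coeff (k : ℕ) : q.coeff k = if k < N + 1 then coeff (m.tail.cons k) p else 0 := by
    simp [q, Polynomial.finsetSum_coeff, Polynomial.coeff_monomial]
  have hq : q = 0 := by
    refine polynomial_eq_zero_of_natAbs_coeff_lt (M := M) (fun k => ?_) ?_
    · rw [hq_coeff]
      split_ifs
      · exact (hp _).trans_lt ((coeff_le_eval_one P _).trans_lt hM)
      · exact (Nat.zero_le _).trans_lt hM
    · rw [← coeff_zero m.tail, ← h₀, coeff_eval_C_finSuccEquiv _ _ _ (N := N + 1) (by omega)]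
      simp [q, Polynomial.eval_finsetSum]
  simpa [hq, Finsupp.cons_tail, N, Nat.lt_succ_iff] using (hq_coeff (m 0)).symm

end Specialize

theorem eq_zero_of_eval_eq_zero {n : ℕ} {P : MvPolynomial (Fin n) ℕ} {p : MvPolynomial (Fin n) ℤ}
    (hp : Majorizes P p) {M : Fin n → ℕ}
    (hM : ∀ i, eval (fun j => if j < i then M j else 1) P < M i)
    (h₀ : eval (fun i => (M i : ℤ)) p = 0) : p = 0 := by
  induction n with
  | zero =>
    rw [eq_C_of_isEmpty p] at h₀ ⊢
    simpa using h₀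
  | succ n ih =>
    refine hp.eq_zero_of_eval_C_finSuccEquiv (by simpa using hM 0)
      (ih (hp.eval_C_finSuccEquiv (M 0)) (M := fun i => M i.succ) (fun i => ?_) ?_)
    · rw [eval_eval_C_finSuccEquiv]
      convert hM i.succ using 3
      ext j
      cases j using Fin.cases <;> simp
    · rw [eval_eval_C_finSuccEquiv, ← h₀]
      congr 2
      ext j
      cases j using Fin.cases <;> simp

end Majorizes

section ListEval

/-- The value at `x` of the polynomial with a given list of coefficients, each coefficient being
interpreted by `v`. -/
def listEval {α K : Type*} [CommSemiring K] (v : α → K) (x : K) (p : List α) : K :=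
  p.foldr (fun a s => v a + x * s) 0

theorem map_listEval {α K L : Type*} [CommSemiring K] [CommSemiring L] (f : K →+* L) (v : α → K)
    (x : K) (p : List α) : f (listEval v x p) = listEval (fun a => f (v a)) (f x) p := by
  induction p with
  | nil => exact map_zero f
  | cons a p ih =>
    simpa only [listEval, List.foldr_cons, map_add, map_mul] using congrArg (f (v a) + f x * ·) ih

theorem Majorizes.listEval {α σ : Type*} {V : α → MvPolynomial σ ℕ} {v : α → MvPolynomial σ ℤ}
    (hv : ∀ a, Majorizes (V a) (v a)) {P : MvPolynomial σ ℕ} {p : MvPolynomial σ ℤ}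
    (hp : Majorizes P p) (l : List α) : Majorizes (listEval V P l) (listEval v p l) := by
  induction l with
  | nil => exact fun _ => by simp [Stmt9.listEval]
  | cons a l ih => exact (hv a).add (hp.mul ih)

/-- The value of a polynomial in three variables given by nested coefficient lists, each coefficient
being interpreted by `v`. The innermost lists are polynomials in `t`, the outer one is a polynomial
in `y`. -/
def evalCoeffs {K : Type*} [CommSemiring K] (v : ℤ → K) (t y z : K) : List (List (List ℤ)) → K :=
  listEval (listEval (listEval v t) z) y

theorem map_evalCoeffs {K L : Type*} [CommSemiring K] [CommSemiring L] (f : K →+* L)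
    (v : ℤ → K) (t y z : K) (p : List (List (List ℤ))) :
    f (evalCoeffs v t y z p) = evalCoeffs (fun c => f (v c)) (f t) (f y) (f z) p := by
  simp only [evalCoeffs, map_listEval]

theorem Majorizes.evalCoeffs {σ : Type*} {T Y Z : MvPolynomial σ ℕ} {t y z : MvPolynomial σ ℤ}
    (ht : Majorizes T t) (hy : Majorizes Y y) (hz : Majorizes Z z) (p : List (List (List ℤ))) :
    Majorizes (evalCoeffs (fun c => MvPolynomial.C c.natAbs) T Y Z p)
      (evalCoeffs (fun c => (c : MvPolynomial σ ℤ)) t y z p) :=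
  .listEval (.listEval (.listEval .intCast ht) hz) hy p

end ListEval

/-! ### The telescoping certificate -/

/-- Coefficients of the telescoping certificate along the symmetric syzygy. -/
def certEven : List (List (List ℤ)) :=
  [[[0, 0, 0, -3976535322321408, 24908437266007680, -69219000728250912, 112736849645872760,
       -119843974345320148, 87660626105934728, -45296010508641816, 16686116928558000,
       -4356963595291692, 787872257702992, -93826858338752, 6618643255840, -209489167272],
     [0, 0, -343699563626496, 6797476636296192, -32114883471213312, 74473769561467584,
       -103518502806139344, 94196798775525600, -58616352526936512, 25420515514499952,
       -7684988880569616, 1588625932618032, -214118182022976, 16956911974464, -598540477920],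
     [],
     [349837055834112, -6835835962593792, 32221650262741632, -74916651837180384,
       104006974776122880, -94035378773935368, 57935070183131064, -24838192527129828,
       7423695075981492, -1518752942506800, 202887482592564, -15950735555832, 559773081252],
     [0, 0, 0, 618369534478080, -1827917903972160, 2269167188959440, -1556675064903420,
       648762599586024, -168868330707384, 26896199249304, -2403096840144, 92426801544],
     [0, 267832331585280, -300037107230784, -303842848289904, 757177821673812, -610969378510260,
       268981827649920, -71315904584232, 11410508772432, -1019495629152, 39211370352],
     [0, -618369534478080, 1827917903972160, -2269167188959440, 1556675064903420,
       -648762599586024, 168868330707384, -26896199249304, 2403096840144, -92426801544],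
     [0, 1971771766272, -1478828824704, 369707206176, -30808933848]],
   [[0, 0, 36824953245696, -728301068174592, 3440880371915712, -7979332453014384,
       11091268157800644, -10092514154520600, 6280323485028912, -2723626662267852,
       823391665775316, -170209921351932, 22941233788176, -1816811997264, 64129336920],
     [0, 3788983364576256, -23728367315600640, 71493326925894720, -131511787657636848,
       159854132606102088, -133376186323984296, 77946641251311756, -32141688559482348,
       9299294359296480, -1846138912982364, 239438268097644, -18269967219504, 621961627056],
     [449790500358144, -8788931951906304, 41427836052096384, -96321409504946208,
       133723253283586560, -120902629852202616, 74487947378311368, -31934818963452636,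
       9544750811976204, -1952682354651600, 260855334761868, -20508088571784, 719708247324],
     [-4649354363630592, 20592729347275008, -44720129530536768, 65675384501913648,
       -70422522504170760, 54418651121995776, -29536383725981748, 11020437147077820,
       -2752301323429812, 438385815601272, -40202990255736, 1614267214560],
     [0, 612188186480640, -1304168636719872, 1139898643684416, -543334034129040,
       161388380557404, -34048222883136, 5860548800568, -815036340888, 72821116368, -2800812168],
     [4344094882778112, -19075405185365760, 35149542682871232, -35992235112493968,
       22731955829401896, -9234101506305060, 2423390165048160, -397689714667476, 37146608657928,
       -1508677809408]],
   [[0, 3272303814861312, -20492680863473280, 61744236890545440, -113578362067959096,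
       138055841796179076, -115188524552531892, 67317553807951062, -27758731028643846,
       8031208764846960, -1594392697575678, 206787595175238, -15778608053208, 537148677912],
     [2377853417161728, -19873084871059200, 69296156579846592, -139546603643025744,
       180929790087393072, -158705249086982328, 96616148700026352, -41232417437741544,
       12282049328483520, -2498519261217276, 330515395336896, -25600800596844, 880370570904],
     [-4649354363630592, 16618482511513344, -28412342413608384, 35713468375477200,
       -38193852175460352, 32105588913116208, -19196065351120896, 7779208285960272,
       -2074012702775244, 347636032238880, -33185535934320, 1375794920808],
     [-3489378769046016, 21481640357772672, -49005377830332000, 61327436253845832,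
       -48438547328463768, 25501386619242576, -9072779474527272, 2151867984495768,
       -325502979611040, 28374447409308, -1083933868248],
     [8764713288866304, -36867520558737792, 67339005535172448, -69209884397347848,
       43913518554911544, -17854974863959464, 4666809787422552, -758922413234832, 69927818122008,
       -2790489833208],
     [-3412542266090496, 9027757980299520, -10265588328663360, 6627185180708400,
       -2675943200162232, 694555717169160, -113248098477360, 10592006405904, -434078135568],
     [-1238836032580608, 2604194086830336, -2197105374252096, 962943497063856, -232610384736576,
       29468011679568, -1533111231960]],
   [[-37482541696512, 732410995992192, -3714401001608352, 8317832374238904, -10842827172760440,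
       9331002577881468, -5607224348994279, 2397056332893453, -725353494709932, 151516779867090,
       -20736654213429, 1670496213672, -59975687277],
     [2324677181815296, -26036690055159168, 86857978153228128, -149563708337763720,
       157656035317163544, -109389417820458300, 51577226029751688, -16648864047063360,
       3625839890863344, -509693326613856, 41779770306120, -1517677021476],
     [-3317834625380352, 21176350764484608, -48390746996148480, 60225762711578688,
       -47313018424272384, 24823200727341828, -8816501207820348, 2089620541645560,
       -315959812322616, 27525801322404, -1050324122232],
     [8266105415715840, -32232495683646720, 57333548638352448, -58563348231803184,
       36945333205681824, -14811298041435588, 3771558885285576, -589303695111516, 51367971193308,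
       -1905286917996],
     [-6898932079522560, 16893804870169920, -17309703752299728, 9701268247470492,
       -3250940398860924, 662983985996640, -79012363532256, 4823979907824, -101600655156],
     [-4804456643255808, 10335378166033536, -8881276689442080, 3931853253756120,
       -948673092323880, 117699663397932, -5600135015244, -48903069600],
     [-584771169540096, 1280618815246848, -1095436583531136, 481775436594144, -116375612788512,
       14734005839784, -766555615980],
     [-102766866580224, 168136577775936, -102196656788688, 29653598828700, -4166297014572,
       228621850380]],
   [[0, -4811146583177088, 19651498816406688, -35567485808062824, 37471766469068862,
       -25357505562960480, 11486508765700311, -3522791304623241, 722132183763144,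
       -94730913065250, 7186469474646, -239598209466],
     [-3108169560900096, 20178276932322432, -46939444948607904, 59588239472595288,
       -47704120236388476, 25419902075987076, -9130896479695032, 2179944111080736,
       -330920461661328, 28867390350876, -1100738741256],
     [4342889911143168, -14770958303255616, 24584858737495056, -24462942585723180,
       15128084708241120, -5872506960626460, 1414737127174140, -202001236942428, 15237079290972,
       -442822509360],
     [-1419973002379008, -2278051631900352, 10307958985502640, -12137185740615012,
       7199798228801640, -2451071521192140, 487257307686072, -52797420266976, 2416391230176],
     [-6803504585627904, 14260444162759872, -11711533039989552, 4756644356623236,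
       -955837392020280, 67015544003100, 5232139416504, -771445922940],
     [-1843559654517504, 4099833830740032, -3531169050182928, 1562553243507564,
       -380304501358320, 48598811001972, -2555592912180],
     [-263090689956864, 468248847542784, -291775274461440, 84346058323296, -11592228133332,
       613244492784],
     [9295495469568, -10070120092032, 4066779267936, -726210583560, 48414038904],
     [-4647747734784, 3485810801088, -871452700272, 72621058356]],
   [[314497596720384, -483174064384704, 422728773744816, -272150487225540, 5779980207540,
       139986335759886, -102168389220282, 34372046076984, -6140247190308, 555961215348,
       -19605685176],
     [-1540728374080896, 8053328159886240, -15158767247388072, 15256573876853694,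
       -9533121930656478, 3921336868455468, -1069050574611558, 186103529322480, -18703141978752,
       823659005862],
     [1223038384977024, -9441524836785888, 18158720094717048, -16636182564678138,
       8628291976476942, -2684108431256868, 498152259552024, -51009125572944, 2223287498124],
     [-6079254037097472, 12693374639269632, -10339779442297536, 4110644343305808,
       -778866963751800, 39168913596120, 7500752815248, -841132797120],
     [-2243500694443008, 5096873525990400, -4412822604753024, 1955533339001088,
       -476772897089412, 61122561106068, -3229640221500],
     [-77556356140032, 279271737626112, -199837503613440, 57269406747168, -7104882466836,
       304177092912],
     [39576276165888, -43062086966976, 17455461663024, -3127106785572, 209060622540],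
     [-23238738673920, 17429054005440, -4357263501360, 363105291780]],
   [[0, 310663596063744, -654525322488576, 583658550611136, -312369601875408, 120065942154312,
       -35085099758940, 7197309268380, -876343007232, 46213400772],
     [-1167836600012544, 428278620103488, 2057646949486128, -2534308199385732, 1278615360219120,
       -330426386055612, 42959635036164, -2158336976796, -12837055770],
     [-3482970510805632, 7467496771797216, -6359063219458488, 2736229562823834,
       -618189815697300, 65039370960564, -1225510924176, -188276817960],
     [-991190888126208, 2439883685219904, -2136985570588176, 939314919420108, -226270835308980,
       28729249308144, -1510289799480],
     [267879278532096, -202458708144000, 72515427725664, -20320692510888, 3985355657052,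
       -330095719800],
     [58167267105024, -64610735555520, 26645326502256, -4843604528532, 327895081668],
     [-44364864741120, 33273648555840, -8318412138960, 693201011580]],
   [[-633642941175552, 1316145917249856, -1427548087860048, 1144502744868252, -668697639526224,
       255795574549284, -58927954352652, 7367002919892, -383277807990],
     [-640614562777728, 1175134894119648, -781805060173368, 187481776305978, 21353280825492,
       -19881542945880, 3698294638500, -232289580600],
     [625474172429568, -1085659881856704, 879166670470704, -392352506100324, 97562357398044,
       -12623593871196, 662025304710],
     [236870820160128, -212057402645088, 84715276498776, -21025997032194, 3256088631642,
       -226543469922],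
     [26759759685120, -34717267170432, 16003040495904, -3164517633816, 228866365728],
     [-38027026920960, 28520270190720, -7130067547680, 594172295640]],
   [[0, -123564364019712, 261697930534656, -225083224263744, 100389199336272, -24535892595060,
       3125395178136, -162602706420],
     [955745943280128, -1910060004682368, 1596049482535200, -701459272943352, 170022035624364,
       -21534711213708, 1114989986880],
     [58730630466816, -29118843762624, -3987556295184, 4733572621932, -946274396760, 59417229564],
     [-17041741694208, 7429354333632, 818637385104, -737213774220, 83624249016],
     [-8239189166208, 6179391874656, -1544847968664, 128737330722]],
   [[323793092189952, -662174948102976, 556987379577552, -244547379510588, 59032851436944,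
       -7439623978248, 383277807990],
     [6971621602176, 4278040528608, -8146762364664, 3416490699930, -584269424046, 36310529178],
     [-28449849770496, 18943093040256, -3538626116256, -4401276264, 37410848244],
     [10774324294272, -8080743220704, 2020185805176, -168348817098]],
   [[0, 2957657649408, -2218243237056, 554560809264, -46213400772],
     [-17182582534656, 11901051017856, -2482319812896, 83624249016, 15404466924],
     [9084234208896, -6813175656672, 1703293914168, -141941159514]],
   [[-4647747734784, 3485810801088, -871452700272, 72621058356],
     [2323873867392, -1742905400544, 435726350136, -36310529178]]]

/-- Coefficients of the telescoping certificate along the antisymmetric syzygy. -/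
def certOdd : List (List (List ℤ)) :=
  [[[0, 0, 0, -3976535322321408, 24908437266007680, -69219000728250912, 112736849645872760,
       -119843974345320148, 87660626105934728, -45296010508641816, 16686116928558000,
       -4356963595291692, 787872257702992, -93826858338752, 6618643255840, -209489167272]],
   [[0, 0, 135024828567552, -2670437249973504, 12616561363690944, -29257552327719408,
       40667983245269028, -37005885233242200, 23027852778439344, -9986631094982124,
       3019102774509492, -624103044957084, 84117857223312, -6661643989968, 235140902040]],
   [[0, 1894491682288128, -11864183657800320, 35746663462947360, -65755893828818424,
       79927066303051044, -66688093161992148, 38973320625655878, -16070844279741174,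
       4649647179648240, -923069456491182, 119719134048822, -9134983609752, 310980813528]],
   [[-137435986220544, 2685506985304704, -12710921726482848, 29489751442943352,
       -40799727494254872, 36793626917323716, -22640185223533251, 9705025633798341,
       -2902443155735112, 594411591761658, -79505538662781, 6258658163472, -219910853349]],
   [[0, -2824023165296256, 11497605257942496, -20530312332619320, 21191256949807098,
       -13994686532251656, 6174833663278665, -1843198455920283, 367636207007916, -46910912361390,
       3459278964834, -111959626086]]]

section Certificate

variable {K : Type*} [CommRing K]

/-- The multiplier of `z ^ 8` in the syzygy of `z ^ 8`, `y ^ 8` and `(y + z) ^ 6` from which the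
telescoping is built. -/
def certAlpha (t y z : K) : K :=
  (7 * z ^ 3 + 33 * y * z ^ 2 + 55 * y ^ 2 * z + 33 * y ^ 3) *
      evalCoeffs (fun c => (c : K)) t y z certEven -
    (15 * y ^ 3 + 35 * y ^ 2 * z + 27 * y * z ^ 2 + 7 * z ^ 3) *
      evalCoeffs (fun c => (c : K)) t y z certOdd

/-- The multiplier of `y ^ 8` in the syzygy `syzygy`. -/
def certBeta (t y z : K) : K :=
  (33 * z ^ 3 + 55 * y * z ^ 2 + 33 * y ^ 2 * z + 7 * y ^ 3) *
      evalCoeffs (fun c => (c : K)) t y z certEven +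
    (15 * z ^ 3 + 35 * y * z ^ 2 + 27 * y ^ 2 * z + 7 * y ^ 3) *
      evalCoeffs (fun c => (c : K)) t y z certOdd

/-- The multiplier of `(y + z) ^ 6` in the syzygy `syzygy`. -/
def certGamma (t y z : K) : K :=
  (7 * z ^ 5 - 9 * y * z ^ 4 + 4 * y ^ 2 * z ^ 3 + 4 * y ^ 3 * z ^ 2 - 9 * y ^ 4 * z + 7 * y ^ 5) *
      evalCoeffs (fun c => (c : K)) t y z certEven +
    (7 * y ^ 5 - 15 * y ^ 4 * z + 20 * y ^ 3 * z ^ 2 - 20 * y ^ 2 * z ^ 3 + 15 * y * z ^ 4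
      - 7 * z ^ 5) * evalCoeffs (fun c => (c : K)) t y z certOdd

/-- The multiplier of the summand at `(x, y, z)`, where `x + y + z = -1`, whose double sum vanishes
by telescoping: once the weights absorb the eighth powers, its three terms differ by shifts of `y`
and of `z`. -/
def telescoped (t x y z : K) : K :=
  x ^ 2 * (t + 1 + x) * ((t + 1 + y) * certAlpha t y (z + 1) +
      (t + 1 + z) * certBeta t (y + 1) z) -
    (t + 1 + y) * (t + 1 + z) * certGamma t y z

/-- The coefficients of the Picard–Fuchs operator as polynomials in the Euler operator, up to the
sign `(-1) ^ j`. -/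
def recurrencePolynomial (t : K) : ℕ → K
  | 0 => 361 * t ^ 4
  | 1 => 19 * (700 * t ^ 4 + 1238 * t ^ 3 + 999 * t ^ 2 + 380 * t + 57)
  | 2 => -(64745 * t ^ 4 + 368006 * t ^ 3 + 609133 * t ^ 2 + 412756 * t + 102258)
  | 3 => -27 * (6397 * t ^ 4 + 12198 * t ^ 3 - 11923 * t ^ 2 - 27360 * t - 11286)
  | 4 => 729 * (64 * t ^ 4 + 1154 * t ^ 3 + 2425 * t ^ 2 + 1848 * t + 486)
  | 5 => 177147 * (t + 1) ^ 4
  | _ => 0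

theorem map_recurrencePolynomial {L : Type*} [CommRing L] (f : K →+* L) (t : K)
    (j : ℕ) : f (recurrencePolynomial t j) = recurrencePolynomial (f t) j := by
  unfold recurrencePolynomial
  split <;> simp only [map_add, map_sub, map_mul, map_neg, map_pow, map_one, map_ofNat, map_zero]

/-- The multiplier of the summand at `(x, y, z)` that realises the recurrence operator: its factors
are the Vandermonde determinant, and the products by which the normalisation by `n ! ^ 3` and the
weights at `(x, y, z)` change under `n ↦ n - j`. -/
def recurrenceSum (t x y z : K) : K :=
  (x - y) * (x - z) * (y - z) * ∑ j ∈ Finset.range 6, recurrencePolynomial (t - (j : ℕ)) j *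
    (∏ i ∈ Finset.Ico j 5, (t - (i : ℕ)) ^ 3) *
      ∏ i ∈ Finset.range j,
        ((t + 1 - (i : ℕ) + x) * (t + 1 - (i : ℕ) + y) * (t + 1 - (i : ℕ) + z))

theorem syzygy (t y z : K) :
    z ^ 8 * certAlpha t y z + y ^ 8 * certBeta t y z = (y + z) ^ 6 * certGamma t y z := by
  simp only [certAlpha, certBeta, certGamma]
  ring

/-- The failure of the proportionality between `recurrenceSum` and the antisymmetrisation of
`telescoped`. The constant `8608908` clears the denominators of the certificate. -/
def telescopingDefect (t x y : K) : K :=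
  8608908 * recurrenceSum t x y (-1 - x - y) -
    (telescoped t x y (-1 - x - y) - telescoped t y x (-1 - x - y))

theorem map_telescopingDefect {L : Type*} [CommRing L] (f : K →+* L) (t x y : K) :
    f (telescopingDefect t x y) = telescopingDefect (f t) (f x) (f y) := by
  simp only [telescopingDefect, recurrenceSum, map_recurrencePolynomial, telescoped, certAlpha,
    certBeta, certGamma, map_evalCoeffs, Finset.sum_range_succ, Finset.sum_range_zero, map_add,
    map_sub, map_mul, map_neg, map_pow, map_prod, map_intCast, map_natCast, map_one, map_ofNat,
    map_zero]

set_option maxHeartbeats 400000 in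
-- `simp` expands the certificate into a large expression
theorem exists_majorizes_telescopingDefect :
    ∃ P, Majorizes P (telescopingDefect (.X 0) (.X 1) (.X 2) : MvPolynomial (Fin 3) ℤ) ∧
      ∀ i, P.eval (fun j : Fin 3 => if j < i then 2 ^ (200 * 30 ^ (j : ℕ)) else 1) <
        2 ^ (200 * 30 ^ (i : ℕ)) := by
  apply Exists.intro
  constructor
  case h.left =>
    simp only [telescopingDefect, recurrenceSum, recurrencePolynomial, telescoped, certAlpha,
      certBeta, certGamma, Finset.sum_range_succ, Finset.prod_range_succ, Finset.prod_Ico_succ_top,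
      Finset.sum_range_zero, Finset.prod_range_zero, Nat.reduceLeDiff, Finset.Ico_self,
      Finset.prod_empty, zero_add, one_mul, Nat.le_refl]
    repeat' with_reducible first
      | exact Majorizes.natCast _ | exact Majorizes.ofNat _ | exact Majorizes.one
      | exact Majorizes.X _ | apply Majorizes.mul | apply Majorizes.sub | apply Majorizes.add
      | apply Majorizes.pow | apply Majorizes.neg | apply Majorizes.evalCoeffs
  case h.right =>
    simp only [map_add, map_mul, map_pow, map_evalCoeffs, MvPolynomial.eval_C, MvPolynomial.eval_X]
    decide +kernel

theorem telescopingDefect_eq_zero (t x y : K) : telescopingDefect t x y = 0 := by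
  obtain ⟨P, hP, hlt⟩ := exists_majorizes_telescopingDefect
  have h : (telescopingDefect (.X 0) (.X 1) (.X 2) : MvPolynomial (Fin 3) ℤ) = 0 := by
    refine hP.eq_zero_of_eval_eq_zero hlt ?_
    rw [map_telescopingDefect]
    simp only [MvPolynomial.eval_X]
    decide +kernel
  simpa [map_telescopingDefect] using
    congrArg (MvPolynomial.eval₂Hom (Int.castRingHom K) ![t, x, y]) h

theorem recurrenceSum_eq_telescoped (t x y : K) :
    8608908 * recurrenceSum t x y (-1 - x - y) =
      telescoped t x y (-1 - x - y) - telescoped t y x (-1 - x - y) :=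
  sub_eq_zero.mp (telescopingDefect_eq_zero t x y)

end Certificate

/-! ### Telescoping -/

section Telescoping

theorem sum_range_succ_eq_sum_range {K : Type*} [AddCommGroup K] {f : ℕ → K} {M : ℕ} (h₀ : f 0 = 0)
    (hM : f M = 0) : ∑ i ∈ Finset.range M, f (i + 1) = ∑ i ∈ Finset.range M, f i := by
  rw [← sub_eq_zero, ← Finset.sum_sub_distrib, Finset.sum_range_sub, h₀, hM, sub_zero]

theorem sum_sum_eq_zero_of_telescoping {K : Type*} [AddCommGroup K] {A B C D : ℕ → ℕ → K} {M : ℕ}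
    (hA₀ : ∀ j, A 0 j = 0) (hAM : ∀ j, A M j = 0) (hB₀ : ∀ j, B 0 j = 0) (hBM : ∀ j, B M j = 0)
    (hD₀ : ∀ i, D i 0 = 0) (hDM : ∀ i, D i M = 0) (hBD : ∀ i j, B (i + 1) j = D i (j + 1))
    (hAC : ∀ i j, A (i + 1) j + D i j = C i j) :
    ∑ i ∈ Finset.range M, ∑ j ∈ Finset.range M, (A i j + B i j - C i j) = 0 := by
  have hshift {f : ℕ → ℕ → K} (h₀ : ∀ j, f 0 j = 0) (hM : ∀ j, f M j = 0) :
      ∑ i ∈ Finset.range M, ∑ j ∈ Finset.range M, f i j =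
        ∑ i ∈ Finset.range M, ∑ j ∈ Finset.range M, f (i + 1) j :=
    (sum_range_succ_eq_sum_range (f := fun i => ∑ j ∈ Finset.range M, f i j)
      (Finset.sum_eq_zero fun j _ => h₀ j) (Finset.sum_eq_zero fun j _ => hM j)).symm
  simp only [← hAC, Finset.sum_sub_distrib, Finset.sum_add_distrib, hshift hA₀ hAM, hshift hB₀ hBM,
    hBD, fun i => sum_range_succ_eq_sum_range (hD₀ i) (hDM i), sub_self]

variable {K : Type*} [CommRing K]

/-- Weights at the points `i - ε` that are compatible with the telescoping of the pole of order
eight: the quotient of successive weights cancels `(i + 1 - ε) ^ 8 (t + 1 + (i + 1 - ε))`. -/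
def IsNearWeight (t ε : K) (g : ℕ → K) : Prop :=
  ∀ i : ℕ, ((i + 1 : ℕ) - ε) ^ 8 * (t + 1 + ((i + 1 : ℕ) - ε)) * g (i + 1) = g i

/-- Weights at the points `-1 - s` that are compatible with the telescoping of the simple pole. -/
def IsFarWeight (t : K) (h : ℕ → K) : Prop :=
  ∀ s : ℕ, (-1 - s) ^ 8 * (t + 1 + (-1 - s)) * h s = h (s + 1)

variable {t ε : K} {g g' h : ℕ → K} {M : ℕ}

theorem sum_eq_zero_of_syzygy {α β γ : K → K → K}
    (hsyz : ∀ y z, z ^ 8 * α y z + y ^ 8 * β y z = (y + z) ^ 6 * γ y z) {x y z : ℕ → K}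
    (hy : ∀ j, y (j + 1) = y j + 1) (hz : ∀ s, z (s + 1) + 1 = z s)
    (hxyz : ∀ i j, y j + z (i + j) = -x (i + 1)) (hx₀ : x 0 ^ 2 = 0) (hy₀ : y 0 ^ 8 = 0)
    (hg : ∀ i, x (i + 1) ^ 8 * (t + x (i + 1)) * g (i + 1) = g i)
    (hg' : ∀ j, y (j + 1) ^ 8 * (t + y (j + 1)) * g' (j + 1) = g' j)
    (hh : ∀ s, z s ^ 8 * (t + z s) * h s = h (s + 1)) (hM : ∀ s, M ≤ s → h s = 0) :
    ∑ i ∈ Finset.range M, ∑ j ∈ Finset.range M,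
      (x i ^ 2 * (t + x i) * ((t + y j) * α (y j) (z (i + j) + 1) +
        (t + z (i + j)) * β (y j + 1) (z (i + j))) -
        (t + y j) * (t + z (i + j)) * γ (y j) (z (i + j))) * (g i * g' j * h (i + j)) = 0 := by
  let A (i j : ℕ) : K := x i ^ 2 * (t + x i) * (t + y j) * α (y j) (z (i + j) + 1) *
    (g i * g' j * h (i + j))
  let B (i j : ℕ) : K := x i ^ 2 * (t + x i) * (t + z (i + j)) * β (y j + 1) (z (i + j)) *
    (g i * g' j * h (i + j))
  let C (i j : ℕ) : K := (t + y j) * (t + z (i + j)) * γ (y j) (z (i + j)) *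
    (g i * g' j * h (i + j))
  let D (i j : ℕ) : K := x (i + 1) ^ 2 * (t + x (i + 1)) * (t + y j) * (t + z (i + j)) *
    (y j ^ 8 * β (y j) (z (i + j))) * (g (i + 1) * g' j * h (i + j))
  have hw {i j : ℕ} (hij : M ≤ i + j) : h (i + j) = 0 := hM _ hij
  have hABC : ∑ i ∈ Finset.range M, ∑ j ∈ Finset.range M, (A i j + B i j - C i j) = 0 := by
    refine sum_sum_eq_zero_of_telescoping (D := D) (fun j => by simp [A, hx₀])
      (fun j => by simp [A, hw]) (fun j => by simp [B, hx₀]) (fun j => by simp [B, hw])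
      (fun i => by simp [D, hy₀]) (fun i => by simp [D, hw]) (fun i j => ?_) fun i j => ?_
    · simp only [B, D, ← hg' j, show i + 1 + j = i + (j + 1) by ring, hy]
      ring
    · have hsyz := hsyz (y j) (z (i + j))
      rw [hxyz] at hsyz
      simp only [A, C, D, show i + 1 + j = i + j + 1 by ring, hz, ← hh (i + j), ← hg i]
      linear_combination x (i + 1) ^ 2 * (t + x (i + 1)) * (t + y j) * (t + z (i + j)) *
        (g (i + 1) * g' j * h (i + j)) * hsyz
  refine Eq.trans (Finset.sum_congr rfl fun i _ => Finset.sum_congr rfl fun j _ => ?_) hABC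
  simp only [A, B, C]
  ring

theorem sum_telescoped_eq_zero (hε : ε ^ 2 = 0) (hg : IsNearWeight t ε g)
    (hg' : IsNearWeight t (-ε) g') (hh : IsFarWeight t h) (hM : ∀ s, M ≤ s → h s = 0) :
    ∑ i ∈ Finset.range M, ∑ j ∈ Finset.range M,
      telescoped t (i - ε) (j + ε) (-1 - (i + j : ℕ)) * (g i * g' j * h (i + j)) = 0 :=
  sum_eq_zero_of_syzygy (t := t + 1) (x := fun i : ℕ => i - ε) (y := fun j : ℕ => j + ε)
    (z := fun s : ℕ => -1 - (s : K)) (syzygy t)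
    (fun j => by push_cast; ring) (fun s => by push_cast; ring) (fun i j => by push_cast; ring)
    (by simp [hε])
    (by rw [show 8 = 2 * 4 by rfl, pow_mul, Nat.cast_zero, zero_add, hε, zero_pow four_ne_zero])
    hg (by simpa only [IsNearWeight, sub_neg_eq_add] using hg') hh hM

theorem sum_recurrenceSum_eq_zero (hε : ε ^ 2 = 0) (hg : IsNearWeight t ε g)
    (hg' : IsNearWeight t (-ε) g') (hh : IsFarWeight t h) (hM : ∀ s, M ≤ s → h s = 0) :
    8608908 * ∑ i ∈ Finset.range M, ∑ j ∈ Finset.range M,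
      recurrenceSum t (i - ε) (j + ε) (-1 - (i + j : ℕ)) * (g i * g' j * h (i + j)) = 0 := by
  have h₁ := sum_telescoped_eq_zero hε hg hg' hh hM
  have h₂ := sum_telescoped_eq_zero (ε := -ε) (by rw [neg_sq, hε]) hg'
    (by simpa only [neg_neg] using hg) hh hM
  rw [Finset.sum_comm] at h₂
  refine Eq.trans ?_ ((congrArg₂ (· - ·) h₁ h₂).trans (sub_zero 0))
  simp only [Finset.mul_sum, ← Finset.sum_sub_distrib]
  refine Finset.sum_congr rfl fun i _ => Finset.sum_congr rfl fun j _ => ?_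
  have hz : -1 - ((i + j : ℕ) : K) = -1 - (i - ε) - (j + ε) := by push_cast; ring
  rw [← mul_assoc, add_comm j i, sub_neg_eq_add, ← sub_eq_add_neg, hz, recurrenceSum_eq_telescoped,
    mul_comm (g' j) (g i), sub_mul]

end Telescoping

/-! ### The dual sum -/

section DualSum

local notation "ε" => (DualNumber.eps : DualNumber ℚ)

/-- The coefficient `1 / (∏_{a ≤ i} (a - x) ^ 8 ∏_{a ≤ n + 1 + i} (a - x))` of the dual solution at
the point `i - x`. -/
def nearFactor (x : DualNumber ℚ) (n i : ℕ) : DualNumber ℚ :=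
  ((∏ a ∈ Finset.range i, ((a + 1 : ℕ) - x) ^ 8) *
    ∏ a ∈ Finset.range (n + 1 + i), ((a + 1 : ℕ) - x))⁻¹

theorem mul_inv_mul_cancel_of_fst_ne_zero {K : Type*} [Field K] {u v : DualNumber K}
    (hu : u.fst ≠ 0) : u * (v * u)⁻¹ = v⁻¹ := by
  rw [TrivSqZeroExt.mul_inv_rev, ← mul_assoc, TrivSqZeroExt.mul_inv_cancel hu, one_mul]

theorem succ_sub_ne_zero {x : DualNumber ℚ} (hx : x.fst = 0) (a : ℕ) :
    (((a + 1 : ℕ) : DualNumber ℚ) - x).fst ≠ 0 := by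
  rw [TrivSqZeroExt.fst_sub, TrivSqZeroExt.fst_natCast, hx, sub_zero]
  exact Nat.cast_ne_zero.mpr a.succ_ne_zero

theorem isNearWeight_nearFactor {x : DualNumber ℚ} (hx : x.fst = 0) (n : ℕ) :
    IsNearWeight (n : DualNumber ℚ) x (nearFactor x n) := fun i => by
  have hcast : (n : DualNumber ℚ) + 1 + ((i + 1 : ℕ) - x) = (n + 1 + i + 1 : ℕ) - x := by
    push_cast
    ring
  rw [nearFactor, Finset.prod_range_succ, ← add_assoc, Finset.prod_range_succ,
    mul_mul_mul_comm, hcast, mul_inv_mul_cancel_of_fst_ne_zero, ← nearFactor]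
  simp only [TrivSqZeroExt.fst_mul, TrivSqZeroExt.fst_pow]
  exact mul_ne_zero (pow_ne_zero _ (succ_sub_ne_zero hx _)) (succ_sub_ne_zero hx _)

theorem mul_nearFactor_succ {x : DualNumber ℚ} (hx : x.fst = 0) (n i : ℕ) :
    (((n + 1 + i + 1 : ℕ) : DualNumber ℚ) - x) * nearFactor x (n + 1) i = nearFactor x n i := by
  rw [nearFactor, add_right_comm (n + 1) 1 i, Finset.prod_range_succ, ← mul_assoc,
    mul_inv_mul_cancel_of_fst_ne_zero (succ_sub_ne_zero hx _), ← nearFactor]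

/-- The coefficient `s ! ^ 8 / (n - s) !` of the dual solution at the point `-1 - s`; it vanishes
for `n < s`. -/
def farFactor (n s : ℕ) : ℚ :=
  if s ≤ n then (s.factorial : ℚ) ^ 8 / (n - s).factorial else 0

theorem farFactor_of_lt {n s : ℕ} (h : n < s) : farFactor n s = 0 := if_neg h.not_ge

theorem mul_farFactor_succ (n s : ℕ) :
    ((n : ℚ) + 1 - s) * farFactor (n + 1) s = farFactor n s := by
  rcases lt_trichotomy s (n + 1) with h | rfl | h
  · obtain ⟨k, rfl⟩ := Nat.exists_eq_add_of_le (Nat.le_of_lt_succ h)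
    have hk : ((k : ℚ) + 1) ≠ 0 := by positivity
    rw [farFactor, farFactor, if_pos (by lia), if_pos (by lia),
      show s + k + 1 - s = k + 1 by lia, show s + k - s = k by lia, Nat.factorial_succ]
    push_cast
    field_simp
    ring
  · rw [farFactor_of_lt n.lt_succ_self]
    push_cast
    ring
  · rw [farFactor_of_lt h, farFactor_of_lt (by lia), mul_zero]

theorem isFarWeight_farFactor (n : ℕ) : IsFarWeight (n : ℚ) (farFactor n) := fun s => by
  rcases lt_trichotomy s n with h | rfl | h
  · obtain ⟨k, rfl⟩ := Nat.exists_eq_add_of_lt h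
    have hk : ((k : ℚ) + 1) ≠ 0 := by positivity
    rw [farFactor, farFactor, if_pos (by lia), if_pos (by lia),
      show s + k + 1 - s = k + 1 by lia, show s + k + 1 - (s + 1) = k by lia,
      Nat.factorial_succ, Nat.factorial_succ, mul_comm (s + 1)]
    push_cast
    field_simp
    ring
  · rw [farFactor_of_lt s.lt_succ_self]
    ring
  · rw [farFactor_of_lt h, farFactor_of_lt (by lia), mul_zero]

/-- The summand of the dual sum at `(i, j)`, up to its Vandermonde factor. -/
def dualWeight (n i j : ℕ) : DualNumber ℚ :=
  nearFactor ε n i * nearFactor (-ε) n j * algebraMap ℚ (DualNumber ℚ) (farFactor n (i + j))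

/-- The Vandermonde determinant of the points `i - ε`, `j + ε`, `-1 - (i + j)`. -/
def dualVandermonde (i j : ℕ) : DualNumber ℚ :=
  ((i - ε) - (j + ε)) * ((i - ε) - (-1 - (i + j : ℕ))) * ((j + ε) - (-1 - (i + j : ℕ)))

/-- A `3 × 3` determinant of solutions of the dual equation, expanded as a sum over the positions of
its coefficients. Deforming the two points near the pole of order eight in opposite directions and
taking the coefficient of `ε` extracts a value and a first derivative there. -/
def dualSum (n : ℕ) : ℚ :=
  (∑ i ∈ Finset.range (n + 1), ∑ j ∈ Finset.range (n + 1),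
    dualVandermonde i j * dualWeight n i j).snd

theorem dualWeight_eq_zero {n i j : ℕ} (h : n < i + j) : dualWeight n i j = 0 := by
  rw [dualWeight, farFactor_of_lt h, map_zero, mul_zero]

theorem dualSum_eq_sum_range {n M : ℕ} (h : n < M) : dualSum n =
    (∑ i ∈ Finset.range M, ∑ j ∈ Finset.range M, dualVandermonde i j * dualWeight n i j).snd := by
  have hsub : Finset.range (n + 1) ⊆ Finset.range M := Finset.range_subset_range.mpr h
  have hzero {i j : ℕ} (hij : n < i + j) : dualVandermonde i j * dualWeight n i j = 0 := by
    rw [dualWeight_eq_zero hij, mul_zero]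
  rw [dualSum, ← Finset.sum_subset hsub fun i _ hi => Finset.sum_eq_zero fun j _ =>
    hzero (by rw [Finset.mem_range] at hi; lia)]
  congr 1
  exact Finset.sum_congr rfl fun i _ => Finset.sum_subset hsub fun j _ hj =>
    hzero (by rw [Finset.mem_range] at hj; lia)

theorem mul_dualWeight_succ (n i j : ℕ) :
    (n + 1 + 1 + (i - ε)) * (n + 1 + 1 + (j + ε)) * (n + 1 + 1 + (-1 - (i + j : ℕ))) *
      dualWeight (n + 1) i j = dualWeight n i j := by
  have hfar := congrArg (algebraMap ℚ (DualNumber ℚ)) (mul_farFactor_succ n (i + j))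
  simp only [map_mul, map_sub, map_add, map_one, map_natCast] at hfar
  rw [dualWeight, dualWeight, ← mul_nearFactor_succ (x := ε) DualNumber.fst_eps n i,
    ← mul_nearFactor_succ (x := -ε) (by simp) n j, ← hfar]
  push_cast
  ring

theorem prod_mul_dualWeight {n k : ℕ} (h : k ≤ n) (i j : ℕ) :
    (∏ a ∈ Finset.range k, (((n : DualNumber ℚ) + 1 - a + (i - ε)) * (n + 1 - a + (j + ε)) *
      (n + 1 - a + (-1 - (i + j : ℕ))))) * dualWeight n i j = dualWeight (n - k) i j := by
  induction k with
  | zero => simp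
  | succ k ih =>
    obtain ⟨m, rfl⟩ := Nat.exists_eq_add_of_le' h
    rw [Finset.prod_range_succ, mul_right_comm, ih (by lia), show m + (k + 1) - k = m + 1 by lia,
      Nat.add_sub_cancel, mul_comm, ← mul_dualWeight_succ m]
    push_cast
    ring

theorem sum_recurrenceSum_mul_dualWeight (n : ℕ) :
    ∑ i ∈ Finset.range (n + 1), ∑ j ∈ Finset.range (n + 1),
      recurrenceSum (n : DualNumber ℚ) (i - ε) (j + ε) (-1 - (i + j : ℕ)) *
        dualWeight n i j = 0 := by
  have hfar : IsFarWeight (n : DualNumber ℚ) fun s =>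
      algebraMap ℚ (DualNumber ℚ) (farFactor n s) := fun s => by
    simpa using congrArg (algebraMap ℚ (DualNumber ℚ)) (isFarWeight_farFactor n s)
  have h := sum_recurrenceSum_eq_zero (M := n + 1) DualNumber.eps_pow_two
    (isNearWeight_nearFactor DualNumber.fst_eps n)
    (isNearWeight_nearFactor (x := -ε) (by simp) n) hfar
    fun s hs => by rw [farFactor_of_lt (by lia), map_zero]
  rw [← map_ofNat (algebraMap ℚ (DualNumber ℚ)), ← Algebra.smul_def] at h
  exact (smul_eq_zero.mp h).resolve_left (by norm_num)

theorem recurrenceSum_mul_dualWeight {n : ℕ} (hn : 5 ≤ n) (i j : ℕ) :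
    recurrenceSum (n : DualNumber ℚ) (i - ε) (j + ε) (-1 - (i + j : ℕ)) * dualWeight n i j =
      ∑ k ∈ Finset.range 6, (recurrencePolynomial ((n : ℚ) - k) k *
        ∏ a ∈ Finset.Ico k 5, ((n : ℚ) - a) ^ 3) •
          (dualVandermonde i j * dualWeight (n - k) i j) := by
  rw [recurrenceSum, Finset.mul_sum, Finset.sum_mul]
  refine Finset.sum_congr rfl fun k hk => ?_
  rw [← prod_mul_dualWeight (by rw [Finset.mem_range] at hk; lia), Algebra.smul_def, map_mul,
    map_prod, map_recurrencePolynomial]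
  simp only [map_pow, map_sub, map_natCast, dualVandermonde]
  ring

theorem dualSum_recurrence {n : ℕ} (hn : 5 ≤ n) :
    ∑ k ∈ Finset.range 6, recurrencePolynomial ((n : ℚ) - k) k *
      (∏ a ∈ Finset.Ico k 5, ((n : ℚ) - a) ^ 3) * dualSum (n - k) = 0 := by
  have h := congrArg TrivSqZeroExt.snd (sum_recurrenceSum_mul_dualWeight n)
  simp only [recurrenceSum_mul_dualWeight hn] at h
  rw [Finset.sum_congr rfl fun i _ => Finset.sum_comm, Finset.sum_comm] at h
  simp only [← Finset.smul_sum, TrivSqZeroExt.snd_sum, TrivSqZeroExt.snd_smul, smul_eq_mul,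
    TrivSqZeroExt.snd_zero] at h
  refine (Finset.sum_congr rfl fun k _ => ?_).trans h
  rw [dualSum_eq_sum_range (n := n - k) (M := n + 1) (by lia)]
  simp only [TrivSqZeroExt.snd_sum]

/-- The coefficients `(-1) ^ n * (F n / Vand)(0)` of the solution of the Picard–Fuchs equation,
expressed by the dual sum. -/
def solutionCoeff (n : ℕ) : ℚ := (-1) ^ (n + 1) * ((n.factorial : ℚ) ^ 3 / 2) * dualSum n

theorem solutionCoeff_recurrence {n : ℕ} (hn : 5 ≤ n) :
    ∑ k ∈ Finset.range 6, (-1) ^ k * recurrencePolynomial ((n : ℚ) - k) k *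
      solutionCoeff (n - k) = 0 := by
  have hfactorial {k : ℕ} (hk : k ≤ 5) : ((n - k).factorial : ℚ) =
      (n - 5).factorial * ∏ a ∈ Finset.Ico k 5, ((n : ℚ) - a) := by
    induction hk using Nat.decreasingInduction with
    | self => simp
    | of_succ k hk ih =>
      rw [Finset.prod_eq_prod_Ico_succ_bot hk, mul_left_comm, ← ih,
        show n - k = n - (k + 1) + 1 by lia, Nat.factorial_succ, Nat.cast_mul]
      congr 1
      rw [← Nat.cast_sub (by lia)]
      exact congrArg Nat.cast (by lia)
  rw [← mul_zero ((-1) ^ (n + 1) * ((n - 5).factorial : ℚ) ^ 3 / 2), ← dualSum_recurrence hn,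
    Finset.mul_sum]
  refine Finset.sum_congr rfl fun k hk => ?_
  have hk : k ≤ 5 := Nat.le_of_lt_succ (Finset.mem_range.mp hk)
  have hsign : (-1 : ℚ) ^ k * (-1) ^ (n - k + 1) = (-1) ^ (n + 1) := by
    rw [← pow_add]
    congr 1
    lia
  rw [solutionCoeff, hfactorial hk, Finset.prod_pow, ← hsign]
  ring

theorem solutionCoeff_zero : solutionCoeff 0 = 1 := by decide +kernel

theorem solutionCoeff_one : solutionCoeff 1 = 3 := by decide +kernel

theorem solutionCoeff_two : solutionCoeff 2 = 51 := by decide +kernel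

theorem solutionCoeff_three : solutionCoeff 3 = 1029 := by decide +kernel

theorem solutionCoeff_four : solutionCoeff 4 = 25299 := by decide +kernel

theorem sum_recurrencePolynomial_mul_solutionCoeff (n : ℕ) :
    ∑ k ∈ Finset.range 6, (if k ≤ n then
      (-1) ^ k * recurrencePolynomial ((n : ℚ) - k) k * solutionCoeff (n - k) else 0) = 0 := by
  rcases lt_or_ge n 5 with hn | hn
  · interval_cases n <;> norm_num [Finset.sum_range_succ, recurrencePolynomial, solutionCoeff_zero,
      solutionCoeff_one, solutionCoeff_two, solutionCoeff_three, solutionCoeff_four]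
  · rw [← solutionCoeff_recurrence hn]
    exact Finset.sum_congr rfl fun k hk => if_pos (by rw [Finset.mem_range] at hk; lia)

end DualSum

/-! ### The differential equation -/

section PicardFuchs

theorem coeff_th (f : PowerSeries ℚ) (d : ℕ) :
    PowerSeries.coeff d (th f) = d * PowerSeries.coeff d f := by
  rw [th, PowerSeries.coeff_mk]

theorem coeff_ofNat_mul {K : Type*} [CommSemiring K] (a : ℕ) [a.AtLeastTwo] (f : PowerSeries K)
    (d : ℕ) : PowerSeries.coeff d (ofNat(a) * f) = ofNat(a) * PowerSeries.coeff d f := by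
  rw [← map_ofNat (PowerSeries.C (R := K)) a, PowerSeries.coeff_C_mul]

/-- The Picard–Fuchs operator of the determinantal Calabi–Yau threefold, in the form in which it is
usually displayed. -/
def picardFuchs (f : PowerSeries ℚ) : PowerSeries ℚ :=
  361 * th^[4] f
    - 19 * PowerSeries.X * (700 * th^[4] f + 1238 * th^[3] f + 999 * th^[2] f + 380 * th f + 57 * f)
    + PowerSeries.X ^ 2 * (-64745 * th^[4] f - 368006 * th^[3] f - 609133 * th^[2] f
      - 412756 * th f - 102258 * f)
    + 27 * PowerSeries.X ^ 3 * (6397 * th^[4] f + 12198 * th^[3] f - 11923 * th^[2] f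
      - 27360 * th f - 11286 * f)
    + 729 * PowerSeries.X ^ 4 * (64 * th^[4] f + 1154 * th^[3] f + 2425 * th^[2] f + 1848 * th f
      + 486 * f)
    - 177147 * PowerSeries.X ^ 5 * (fun g => th g + g)^[4] f

theorem coeff_picardFuchs (f : PowerSeries ℚ) (n : ℕ) :
    PowerSeries.coeff n (picardFuchs f) = ∑ k ∈ Finset.range 6, if k ≤ n then
      (-1) ^ k * recurrencePolynomial ((n : ℚ) - k) k * PowerSeries.coeff (n - k) f else 0 := by
  have hX (g : PowerSeries ℚ) : PowerSeries.coeff n (PowerSeries.X * g) =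
      if 1 ≤ n then PowerSeries.coeff (n - 1) g else 0 := by
    rw [← PowerSeries.coeff_X_pow_mul', pow_one]
  simp only [picardFuchs, Function.iterate_succ, Function.iterate_zero, Function.comp_apply, id_eq,
    mul_assoc, neg_mul, map_add, map_sub, map_neg, coeff_ofNat_mul, PowerSeries.coeff_X_pow_mul',
    hX, coeff_th, Finset.sum_range_succ, Finset.sum_range_zero, recurrencePolynomial]
  rcases lt_or_ge n 5 with hn | hn
  · interval_cases n <;> norm_num <;> ring
  · simp only [show 1 ≤ n by lia, show 2 ≤ n by lia, show 3 ≤ n by lia, show 4 ≤ n by lia, hn,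
      if_true, Nat.cast_sub, Nat.zero_le, Nat.sub_zero]
    push_cast
    ring

theorem picardFuchs_solutionCoeff : picardFuchs (PowerSeries.mk solutionCoeff) = 0 := by
  ext n
  simp only [coeff_picardFuchs, PowerSeries.coeff_mk, map_zero]
  exact sum_recurrencePolynomial_mul_solutionCoeff n

end PicardFuchs

section DualDeterminant

open Polynomial

/-! ### Residues -/

section Residue

variable {R : Type*} [CommRing R]

/-- The coefficient of `X ^ l` in the remainder of a polynomial modulo `Q`, that is, the coordinate
functions of `R[X] ⧸ (Q)` with respect to the basis of powers of `X`. -/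
def remainderCoeff (Q : R[X]) (l : ℕ) : R[X] →ₗ[R] R :=
  Polynomial.lcoeff R l ∘ₗ Polynomial.modByMonicHom Q

theorem remainderCoeff_apply (Q f : R[X]) (l : ℕ) : remainderCoeff Q l f = (f %ₘ Q).coeff l := rfl

theorem remainderCoeff_congr {Q f g : R[X]} (hQ : Q.Monic) (l : ℕ)
    (h : AdjoinRoot.mk Q f = AdjoinRoot.mk Q g) : remainderCoeff Q l f = remainderCoeff Q l g := by
  rw [remainderCoeff_apply, remainderCoeff_apply,
    modByMonic_eq_of_dvd_sub hQ (AdjoinRoot.mk_eq_mk.mp h)]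

theorem modByMonic_eq_sum_remainderCoeff [Nontrivial R] {Q : R[X]} (hQ : Q.Monic) {m : ℕ}
    (hm : Q.natDegree = m) (f : R[X]) :
    f %ₘ Q = ∑ l : Fin m, C (remainderCoeff Q l f) * X ^ (l : ℕ) := by
  subst hm
  conv_lhs => rw [← sum_modByMonic_coeff (p := f) hQ degree_le_natDegree]
  exact Finset.sum_congr rfl fun l _ => (C_mul_X_pow_eq_monomial).symm

theorem remainderCoeff_mul [Nontrivial R] {Q : R[X]} (hQ : Q.Monic) {m : ℕ}
    (hm : Q.natDegree = m) (l : ℕ) (f g : R[X]) : remainderCoeff Q l (f * g) =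
      ∑ b : Fin m, remainderCoeff Q b f * remainderCoeff Q l (X ^ (b : ℕ) * g) := by
  have hf : AdjoinRoot.mk Q f = AdjoinRoot.mk Q (f %ₘ Q) :=
    (AdjoinRoot.mk_eq_mk.mpr (dvd_modByMonic_sub f Q)).symm
  rw [remainderCoeff_congr hQ l (g := (f %ₘ Q) * g) (by rw [map_mul, map_mul, hf]),
    modByMonic_eq_sum_remainderCoeff hQ hm, Finset.sum_mul, map_sum]
  refine Finset.sum_congr rfl fun b _ => ?_
  rw [mul_assoc, ← smul_eq_C_mul, map_smul, smul_eq_mul]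

theorem remainderCoeff_of_natDegree_lt [Nontrivial R] {Q f : R[X]} (hQ : Q.Monic) (l : ℕ)
    (h : f.natDegree < Q.natDegree) : remainderCoeff Q l f = f.coeff l := by
  rw [remainderCoeff_apply, (modByMonic_eq_self_iff hQ).mpr (degree_lt_degree h)]

/-- The sum of the residues of `f / Q`, read off from the remainder of `f`. -/
def residue (Q : R[X]) : R[X] →ₗ[R] R := remainderCoeff Q (Q.natDegree - 1)

theorem residue_apply (Q f : R[X]) : residue Q f = (f %ₘ Q).coeff (Q.natDegree - 1) := rfl

theorem residue_X_pow_of_lt [Nontrivial R] {Q : R[X]} (hQ : Q.Monic) {k : ℕ}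
    (h : k + 1 < Q.natDegree) : residue Q (X ^ k) = 0 := by
  rw [residue, remainderCoeff_of_natDegree_lt hQ _ (by rw [natDegree_X_pow]; lia), coeff_X_pow,
    if_neg (by lia)]

theorem residue_X_pow_pred [Nontrivial R] {Q : R[X]} (hQ : Q.Monic) {k : ℕ}
    (h : k + 1 = Q.natDegree) : residue Q (X ^ k) = 1 := by
  rw [residue, remainderCoeff_of_natDegree_lt hQ _ (by rw [natDegree_X_pow]; lia), coeff_X_pow,
    if_pos (by lia)]

theorem coeff_taylor_of_natDegree_le {f : R[X]} {k : ℕ} (h : f.natDegree ≤ k) (a : R) :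
    (taylor a f).coeff k = f.coeff k := by
  rcases h.eq_or_lt with rfl | h
  · exact coeff_taylor_natDegree a f
  · rw [coeff_eq_zero_of_natDegree_lt h,
      coeff_eq_zero_of_natDegree_lt ((natDegree_taylor f a).trans_lt h)]

theorem monic_taylor {Q : R[X]} (hQ : Q.Monic) (a : R) : (taylor a Q).Monic := by
  rwa [Monic, leadingCoeff_taylor]

theorem taylor_modByMonic [Nontrivial R] {Q : R[X]} (hQ : Q.Monic) (a : R) (f : R[X]) :
    taylor a f %ₘ taylor a Q = taylor a (f %ₘ Q) := by
  refine (div_modByMonic_unique (taylor a (f /ₘ Q)) _ (monic_taylor hQ a) ⟨?_, ?_⟩).2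
  · rw [← taylor_mul, ← map_add, modByMonic_add_div]
  · rw [degree_taylor, degree_taylor]
    exact degree_modByMonic_lt f hQ

theorem residue_taylor [Nontrivial R] {Q : R[X]} (hQ : Q.Monic) (hQ1 : Q ≠ 1) (a : R) (f : R[X]) :
    residue (taylor a Q) (taylor a f) = residue Q f := by
  rw [residue_apply, residue_apply, taylor_modByMonic hQ, natDegree_taylor,
    coeff_taylor_of_natDegree_le (Nat.le_sub_one_of_lt (natDegree_modByMonic_lt f hQ hQ1))]

theorem prod_dvd_sum_mul_prod_erase_sub {ι : Type*} [DecidableEq ι] {s : Finset ι}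
    {Q r : ι → R} {f : R} (hcop : (s : Set ι).Pairwise fun i j => IsCoprime (Q i) (Q j))
    (hr : ∀ i ∈ s, Q i ∣ r i * ∏ j ∈ s.erase i, Q j - f) :
    ∏ i ∈ s, Q i ∣ ∑ i ∈ s, r i * ∏ j ∈ s.erase i, Q j - f := by
  refine Finset.prod_dvd_of_coprime hcop fun i hi => ?_
  rw [← Finset.add_sum_erase s _ hi, add_sub_right_comm]
  exact dvd_add (hr i hi) (Finset.dvd_sum fun l hl => dvd_mul_of_dvd_right
    (Finset.dvd_prod_of_mem Q (Finset.mem_erase.mpr ⟨(Finset.ne_of_mem_erase hl).symm, hi⟩)) _)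

theorem sum_modByMonic_mul_prod_erase_eq {ι : Type*} [DecidableEq ι] [Nontrivial R] {s : Finset ι}
    {Q r : ι → R[X]} {f : R[X]} (hQ : ∀ i ∈ s, (Q i).Monic) (hQ1 : ∀ i ∈ s, Q i ≠ 1)
    (hcop : (s : Set ι).Pairwise fun i j => IsCoprime (Q i) (Q j))
    (hr : ∀ i ∈ s, Q i ∣ r i * ∏ j ∈ s.erase i, Q j - f)
    (hf : f.natDegree < ∑ i ∈ s, (Q i).natDegree) :
    ∑ i ∈ s, (r i %ₘ Q i) * ∏ j ∈ s.erase i, Q j = f := by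
  have hdvd : ∏ i ∈ s, Q i ∣ ∑ i ∈ s, (r i %ₘ Q i) * ∏ j ∈ s.erase i, Q j - f := by
    refine prod_dvd_sum_mul_prod_erase_sub hcop fun i hi => ?_
    rw [← sub_add_sub_cancel _ (r i * ∏ j ∈ s.erase i, Q j), ← sub_mul]
    exact dvd_add ((dvd_modByMonic_sub _ _).mul_right _) (hr i hi)
  have hterm : ∀ i ∈ s, ((r i %ₘ Q i) * ∏ j ∈ s.erase i, Q j).natDegree ≤
      ∑ i ∈ s, (Q i).natDegree - 1 := fun i hi => by
    have hlt := natDegree_modByMonic_lt (r i) (hQ i hi) (hQ1 i hi)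
    have hdeg := natDegree_prod_of_monic (s.erase i) Q fun j hj =>
      hQ j (Finset.mem_of_mem_erase hj)
    rw [← Finset.sum_erase_add _ _ hi, ← hdeg]
    exact natDegree_mul_le.trans (by lia)
  by_contra hne
  refine (monic_prod_of_monic s Q hQ).not_dvd_of_natDegree_lt (sub_ne_zero.mpr hne) ?_ hdvd
  rw [natDegree_prod_of_monic s Q hQ]
  exact (natDegree_sub_le _ _).trans_lt (max_lt
    ((natDegree_sum_le_of_forall_le s _ hterm).trans_lt (by lia)) hf)

theorem sum_residue_eq_zero {ι : Type*} [DecidableEq ι] [Nontrivial R] {s : Finset ι}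
    {Q r : ι → R[X]} {f : R[X]} (hQ : ∀ i ∈ s, (Q i).Monic) (hQ1 : ∀ i ∈ s, Q i ≠ 1)
    (hcop : (s : Set ι).Pairwise fun i j => IsCoprime (Q i) (Q j))
    (hr : ∀ i ∈ s, Q i ∣ r i * ∏ j ∈ s.erase i, Q j - f)
    (hf : f.natDegree + 1 < ∑ i ∈ s, (Q i).natDegree) : ∑ i ∈ s, residue (Q i) (r i) = 0 := by
  have hterm : ∀ i ∈ s, residue (Q i) (r i) =
      ((r i %ₘ Q i) * ∏ j ∈ s.erase i, Q j).coeff (∑ i ∈ s, (Q i).natDegree - 1) := fun i hi => by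
    have hlt := natDegree_modByMonic_lt (r i) (hQ i hi) (hQ1 i hi)
    have hmonic : (∏ j ∈ s.erase i, Q j).Monic :=
      monic_prod_of_monic _ _ fun j hj => hQ j (Finset.mem_of_mem_erase hj)
    rw [← Finset.sum_erase_add _ _ hi, ← natDegree_prod_of_monic _ _ fun j hj =>
        hQ j (Finset.mem_of_mem_erase hj), add_comm, Nat.sub_add_comm (by lia),
      coeff_mul_add_eq_of_natDegree_le (by lia) le_rfl, hmonic.coeff_natDegree, mul_one,
      residue_apply]
  rw [Finset.sum_congr rfl hterm, ← finsetSum_coeff,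
    sum_modByMonic_mul_prod_erase_eq hQ hQ1 hcop hr (by lia)]
  exact coeff_eq_zero_of_natDegree_lt (by lia)

/-- `u d` represents the inverse of `∏_{1 ≤ a ≤ d} Q(z + c a)` modulo `Q`, for all `d ≤ n`. -/
def IsShiftInverse (Q : R[X]) (c : R) (n : ℕ) (u : ℕ → R[X]) : Prop :=
  ∀ d ≤ n, AdjoinRoot.mk Q (u d * ∏ a ∈ Finset.range d, taylor (c * (a + 1)) Q) = 1

theorem IsShiftInverse.mk_zero {Q : R[X]} {c : R} {n : ℕ} {u : ℕ → R[X]}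
    (h : IsShiftInverse Q c n u) : AdjoinRoot.mk Q (u 0) = 1 := by
  simpa using h 0 n.zero_le

theorem IsShiftInverse.mk_succ {Q : R[X]} {c : R} {n d : ℕ} {u : ℕ → R[X]}
    (h : IsShiftInverse Q c n u) (hd : d < n) :
    AdjoinRoot.mk Q (taylor (c * (d + 1)) Q * u (d + 1)) = AdjoinRoot.mk Q (u d) := by
  have h₁ := h d hd.le
  have h₂ := h (d + 1) hd
  rw [Finset.prod_range_succ] at h₂
  simp only [map_mul] at h₁ h₂ ⊢
  linear_combination AdjoinRoot.mk Q (u d) * h₂ -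
    AdjoinRoot.mk Q (taylor (c * (d + 1)) Q) * AdjoinRoot.mk Q (u (d + 1)) * h₁

theorem exists_isShiftInverse {Q : R[X]} {c : R} {n : ℕ}
    (h : ∀ a < n, IsCoprime Q (taylor (c * (a + 1)) Q)) : ∃ u, IsShiftInverse Q c n u := by
  have hex (d : ℕ) : ∃ u, d ≤ n →
      AdjoinRoot.mk Q (u * ∏ a ∈ Finset.range d, taylor (c * (a + 1)) Q) = 1 := by
    by_cases hd : d ≤ n
    · obtain ⟨v, u, huv⟩ := IsCoprime.prod_right fun a ha =>
        h a ((Finset.mem_range.mp ha).trans_le hd)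
      refine ⟨u, fun _ => ?_⟩
      rw [← map_one (AdjoinRoot.mk Q), ← huv, AdjoinRoot.mk_eq_mk]
      exact ⟨-v, by ring⟩
    · exact ⟨0, fun hd' => (hd hd').elim⟩
  choose u hu using hex
  exact ⟨u, hu⟩

theorem prod_range_erase {M : Type*} [CommMonoid M] (f : ℕ → M) (d k : ℕ) :
    ∏ a ∈ (Finset.range (d + k + 1)).erase d, f a =
      (∏ a ∈ Finset.range d, f (d - 1 - a)) * ∏ a ∈ Finset.range k, f (d + 1 + a) := by
  rw [Finset.prod_range_reflect]
  induction k with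
  | zero =>
    rw [Finset.range_zero, Finset.prod_empty, mul_one, add_zero, Finset.range_add_one,
      Finset.erase_insert Finset.notMem_range_self]
  | succ k ih =>
    rw [Finset.range_add_one, Finset.erase_insert_of_ne (by lia), Finset.prod_insert (by simp),
      ← add_assoc, ih, Finset.prod_range_succ, mul_comm, mul_assoc, add_right_comm d k 1]

theorem prod_erase_taylor_neg (Q : R[X]) (d k : ℕ) :
    ∏ c ∈ (Finset.range (d + k + 1)).erase d, taylor (-(c : R)) Q =
      taylor (-(d : R)) ((∏ a ∈ Finset.range d, taylor (1 * (a + 1 : R)) Q) *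
        ∏ a ∈ Finset.range k, taylor (-1 * (a + 1 : R)) Q) := by
  simp only [prod_range_erase, ← taylorAlgHom_apply, map_mul, map_prod]
  simp only [taylorAlgHom_apply, taylor_taylor]
  congr 1
  · refine Finset.prod_congr rfl fun a ha => ?_
    obtain ⟨b, rfl⟩ := Nat.exists_eq_add_of_lt (Finset.mem_range.mp ha)
    rw [show a + b + 1 - 1 - a = b by lia]
    congr 2
    push_cast
    ring
  · refine Finset.prod_congr rfl fun a _ => ?_
    congr 2
    push_cast
    ring

theorem isCoprime_taylor {p q : R[X]} (h : IsCoprime p q) (a : R) :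
    IsCoprime (taylor a p) (taylor a q) :=
  IsCoprime.map h (taylorAlgHom a : R[X] →+* R[X])

theorem pairwise_isCoprime_taylor_neg {Q : R[X]} {n : ℕ}
    (h : ∀ a < n, IsCoprime Q (taylor (1 * (a + 1 : R)) Q)) :
    (Finset.range (n + 1) : Set ℕ).Pairwise fun c d =>
      IsCoprime (taylor (-(c : R)) Q) (taylor (-(d : R)) Q) := by
  have hlt {c d : ℕ} (hcd : c < d) (hd : d < n + 1) :
      IsCoprime (taylor (-(c : R)) Q) (taylor (-(d : R)) Q) := by
    obtain ⟨a, rfl⟩ := Nat.exists_eq_add_of_lt hcd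
    have := isCoprime_taylor (h a (by lia)).symm (-((c + a + 1 : ℕ) : R))
    rwa [taylor_taylor, show -((c + a + 1 : ℕ) : R) + 1 * (a + 1) = -c by push_cast; ring] at this
  intro c hc d hd hne
  rw [Finset.coe_range, Set.mem_Iio] at hc hd
  rcases hne.lt_or_gt with h | h
  · exact hlt h hd
  · exact (hlt h hc).symm

theorem mk_mul_prod_taylor {Q : R[X]} {n d k : ℕ} {u v : ℕ → R[X]} (hu : IsShiftInverse Q 1 n u)
    (hv : IsShiftInverse Q (-1) n v) (hd : d ≤ n) (hk : k ≤ n) (f g : R[X]) :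
    AdjoinRoot.mk Q (f * u d * (g * v k) * ((∏ a ∈ Finset.range d, taylor (1 * (a + 1 : R)) Q) *
      ∏ a ∈ Finset.range k, taylor (-1 * (a + 1 : R)) Q)) = AdjoinRoot.mk Q (f * g) := by
  calc _ = AdjoinRoot.mk Q (f * g) *
      AdjoinRoot.mk Q (u d * ∏ a ∈ Finset.range d, taylor (1 * (a + 1 : R)) Q) *
      AdjoinRoot.mk Q (v k * ∏ a ∈ Finset.range k, taylor (-1 * (a + 1 : R)) Q) := by
        rw [← map_mul, ← map_mul]
        congr 1
        ring
    _ = AdjoinRoot.mk Q (f * g) := by rw [hu d hd, hv k hk, mul_one, mul_one]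

/- Translating the `(d, k)` term by `-d` turns the sum into the sum of all residues of the rational
function `z ^ a (z - j) ^ b / ∏_{c ≤ j} Q(z - c)`. -/
theorem sum_residue_shift_eq_zero [Nontrivial R] {Q : R[X]} (hQ : Q.Monic) (hQ1 : Q ≠ 1) {n j : ℕ}
    (hcop : ∀ a < n, IsCoprime Q (taylor (1 * (a + 1 : R)) Q)) {u v : ℕ → R[X]}
    (hu : IsShiftInverse Q 1 n u) (hv : IsShiftInverse Q (-1) n v) (hj : j ≤ n) {a b : ℕ}
    (hab : a + b + 1 < (j + 1) * Q.natDegree) :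
    ∑ x ∈ Finset.HasAntidiagonal.antidiagonal j, residue Q ((X + C (x.1 : R)) ^ a * u x.1 *
      ((X - C (x.2 : R)) ^ b * v x.2)) = 0 := by
  rw [Finset.Nat.sum_antidiagonal_eq_sum_range_succ_mk]
  refine (Finset.sum_congr rfl fun (d : ℕ) _ => (residue_taylor hQ hQ1 (-(d : R)) _).symm).trans ?_
  refine sum_residue_eq_zero (f := X ^ a * (X - C (j : R)) ^ b) (fun c _ => monic_taylor hQ _)
    (fun c _ => ?_) ((pairwise_isCoprime_taylor_neg hcop).mono ?_) (fun d hd => ?_) ?_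
  · exact fun h => hQ1 (taylor_injective _ (h.trans ((taylor_one _).trans C_1).symm))
  · exact_mod_cast Finset.range_subset_range.mpr (Nat.succ_le_succ hj)
  · obtain ⟨k, rfl⟩ := Nat.exists_eq_add_of_le (Nat.lt_succ_iff.mp (Finset.mem_range.mp hd))
    have hf : X ^ a * (X - C ((d + k : ℕ) : R)) ^ b =
        taylor (-(d : R)) ((X + C (d : R)) ^ a * (X - C (k : R)) ^ b) := by
      simp only [← taylorAlgHom_apply, map_mul, map_pow, map_add, map_sub]
      simp only [taylorAlgHom_apply, taylor_X, map_natCast, map_neg, Nat.cast_add, C_add]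
      ring
    obtain ⟨g, hg⟩ := AdjoinRoot.mk_eq_mk.mp (mk_mul_prod_taylor hu hv (d := d) (k := k) (by lia)
      (by lia) ((X + C (d : R)) ^ a) ((X - C (k : R)) ^ b))
    refine ⟨taylor (-(d : R)) g, ?_⟩
    rw [Nat.succ_eq_add_one, prod_erase_taylor_neg, ← taylor_mul, hf, ← map_sub,
      Nat.add_sub_cancel_left, hg, taylor_mul]
  · simp only [natDegree_taylor, Finset.sum_const, Finset.card_range, smul_eq_mul]
    refine lt_of_le_of_lt (Nat.succ_le_succ ?_) hab
    exact natDegree_mul_le_of_le (natDegree_X_pow_le a) ((natDegree_pow_le_of_le b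
      (natDegree_X_sub_C_le _)).trans_eq (mul_one b))

end Residue

/-! ### Determinants -/

section Determinant

variable {R : Type*} [CommRing R]

theorem derivation_prod {S ι : Type*} [CommSemiring S] [Algebra S R] [DecidableEq ι]
    (D : Derivation S R R) (s : Finset ι) (f : ι → R) :
    D (∏ i ∈ s, f i) = ∑ i ∈ s, (∏ j ∈ s.erase i, f j) * D (f i) := by
  induction s using Finset.induction_on with
  | empty => simp
  | insert a s ha ih =>
    rw [Finset.prod_insert ha, Derivation.leibniz, ih, Finset.sum_insert ha,
      Finset.erase_insert ha, smul_eq_mul, smul_eq_mul, Finset.mul_sum, add_comm]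
    refine congrArg _ (Finset.sum_congr rfl fun i hi => ?_)
    have hne : a ≠ i := fun h => ha (h ▸ hi)
    rw [Finset.erase_insert_of_ne hne, Finset.prod_insert fun h => ha (Finset.mem_of_mem_erase h),
      mul_assoc]

theorem derivation_det {S ι : Type*} [CommSemiring S] [Algebra S R] [Fintype ι] [DecidableEq ι]
    (D : Derivation S R R) (M : Matrix ι ι R) :
    D M.det = (M.adjugate * M.map D).trace := by
  have hrow : D M.det = ∑ i, (M.updateRow i fun j => D (M i j)).det := by
    simp only [← Matrix.det_transpose M, ← Matrix.det_transpose (M.updateRow _ _),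
      Matrix.det_apply, map_sum, Units.smul_def, map_zsmul, derivation_prod]
    rw [Finset.sum_comm]
    simp only [← Finset.smul_sum]
    refine Finset.sum_congr rfl fun σ _ => congrArg _ (Finset.sum_congr rfl fun i _ => ?_)
    rw [← Finset.mul_prod_erase _ _ (Finset.mem_univ i), mul_comm]
    simp only [Matrix.transpose_apply, Matrix.updateRow_self]
    refine congrArg _ (Finset.prod_congr rfl fun j hj => ?_)
    rw [Matrix.updateRow_ne (Finset.ne_of_mem_erase hj)]
  rw [hrow, Matrix.trace_mul_comm, Matrix.trace]
  refine Finset.sum_congr rfl fun i _ => ?_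
  rw [← Matrix.cramer_transpose_apply, Matrix.cramer_eq_adjugate_mulVec,
    ← Matrix.adjugate_transpose, Matrix.diag_apply, Matrix.mul_apply]
  exact Finset.sum_congr rfl fun j _ => mul_comm _ _

theorem det_mul_det_toRows₂ {m r : Type*} [Fintype m] [DecidableEq m] [Fintype r] [DecidableEq r]
    (M : Matrix (m ⊕ r) (m ⊕ r) R) (D : Matrix (m ⊕ r) r R) (h : (M * D).toRows₁ = 0) :
    M.det * D.toRows₂.det = M.toBlocks₁₁.det * (M * D).toRows₂.det := by
  let N : Matrix (m ⊕ r) (m ⊕ r) R := Matrix.fromBlocks 1 D.toRows₁ 0 D.toRows₂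
  have hN : N.det = D.toRows₂.det := by
    rw [Matrix.det_fromBlocks_zero₂₁, Matrix.det_one, one_mul]
  have hinl (i : m ⊕ r) (j : m) : (M * N) i (Sum.inl j) = M i (Sum.inl j) := by
    simp [N, Matrix.mul_apply, Fintype.sum_sum_type, Matrix.one_apply]
  have hinr (i : m ⊕ r) (j : r) : (M * N) i (Sum.inr j) = (M * D) i j := by
    simp [N, Matrix.mul_apply, Fintype.sum_sum_type]
  have hM : M * N = Matrix.fromBlocks M.toBlocks₁₁ 0 M.toBlocks₂₁ (M * D).toRows₂ := by
    ext (i | i) (j | j)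
    · exact hinl _ _
    · exact (hinr _ _).trans (congrFun (congrFun h i) j)
    · exact hinl _ _
    · exact hinr _ _
  rw [← hN, ← Matrix.det_mul, hM, Matrix.det_fromBlocks_zero₁₂]

theorem det_mul_det_submatrix_natAdd {p r : ℕ} (M : Matrix (Fin (p + r)) (Fin (p + r)) R)
    (D : Matrix (Fin (p + r)) (Fin r) R) (h : (M * D).submatrix (Fin.castAdd r) id = 0) :
    M.det * (D.submatrix (Fin.natAdd p) id).det =
      (M.submatrix (Fin.castAdd r) (Fin.castAdd r)).det *
        ((M * D).submatrix (Fin.natAdd p) id).det := by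
  let e : Fin p ⊕ Fin r ≃ Fin (p + r) := finSumFinEquiv
  have hMD : M.submatrix e e * D.submatrix e id = (M * D).submatrix e id :=
    Matrix.submatrix_mul_equiv M D e e id
  have key := det_mul_det_toRows₂ (M.submatrix e e) (D.submatrix e id) (hMD ▸ h)
  rwa [Matrix.det_submatrix_equiv_self, hMD] at key

end Determinant

section ShiftMatrix

variable {K : Type*} [CommRing K]

/-- The matrix of multiplication by `X` on row vectors of coordinates in `K[X] ⧸ (Q)`. -/
def mulXMatrix (Q : K[X]) (m : ℕ) : Matrix (Fin m) (Fin m) K :=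
  Matrix.of fun a b => remainderCoeff Q b (X ^ (a + 1 : ℕ))

theorem X_pow_succ_eq [Nontrivial K] {Q : K[X]} (hQ : Q.Monic) {m : ℕ} (hm : Q.natDegree = m)
    (a : Fin m) : X ^ (a + 1 : ℕ) =
      ∑ b, C (mulXMatrix Q m a b) * X ^ (b : ℕ) + if (a : ℕ) + 1 = m then Q else 0 := by
  have hsum : ∑ b, C (mulXMatrix Q m a b) * X ^ (b : ℕ) = X ^ (a + 1 : ℕ) %ₘ Q :=
    (modByMonic_eq_sum_remainderCoeff hQ hm _).symm
  rw [hsum]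
  split_ifs with ha
  · have hdeg : (X ^ (a + 1 : ℕ) : K[X]).degree = Q.degree := by
      rw [ha, degree_X_pow, degree_eq_natDegree hQ.ne_zero, hm]
    have hlt : (X ^ (a + 1 : ℕ) - Q).degree < Q.degree := by
      rw [← hdeg]
      exact degree_sub_lt_left hdeg (monic_X_pow _).ne_zero
        ((monic_X_pow _).leadingCoeff.trans hQ.leadingCoeff.symm)
    rw [(div_modByMonic_unique 1 (X ^ (a + 1 : ℕ) - Q) hQ ⟨by ring, hlt⟩).2, sub_add_cancel]
  · rw [add_zero, (modByMonic_eq_self_iff hQ).mpr (degree_lt_degree ?_)]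
    rw [natDegree_X_pow]
    lia

theorem remainderCoeff_mul_X [Nontrivial K] {Q : K[X]} (hQ : Q.Monic) {m : ℕ}
    (hm : Q.natDegree = m) (l : Fin m) (f : K[X]) :
    remainderCoeff Q l (f * X) = ∑ b : Fin m, remainderCoeff Q b f * mulXMatrix Q m b l := by
  simp only [remainderCoeff_mul hQ hm, ← pow_succ]
  rfl

/-- Row `a` consists of the coordinates of `∑ d, (X + d) ^ a * u d * q ^ d` in `K[X] ⧸ (Q)`. -/
def shiftMatrix (Q : K[X]) (u : ℕ → K[X]) (m : ℕ) : Matrix (Fin m) (Fin m) (PowerSeries K) :=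
  Matrix.of fun a l => PowerSeries.mk fun d =>
    remainderCoeff Q l ((X + C (d : K)) ^ (a : ℕ) * u d)

theorem coeff_shiftMatrix (Q : K[X]) (u : ℕ → K[X]) {m : ℕ} (a l : Fin m) (d : ℕ) :
    PowerSeries.coeff d (shiftMatrix Q u m a l) =
      remainderCoeff Q l ((X + C (d : K)) ^ (a : ℕ) * u d) := by
  rw [shiftMatrix, Matrix.of_apply, PowerSeries.coeff_mk]

theorem remainderCoeff_taylor_mul {Q : K[X]} (hQ : Q.Monic) {n m : ℕ} {u : ℕ → K[X]}
    (hu : IsShiftInverse Q 1 n u) [NeZero m] (l : Fin m) {d : ℕ} (hd : d ≤ n) :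
    remainderCoeff Q l (taylor (d : K) Q * u d) =
      PowerSeries.coeff d (PowerSeries.X * shiftMatrix Q u m 0 l) := by
  cases d with
  | zero =>
    rw [PowerSeries.coeff_zero_X_mul, Nat.cast_zero, taylor_zero,
      remainderCoeff_congr hQ l (g := 0) (by simp), map_zero]
  | succ d =>
    rw [PowerSeries.coeff_succ_X_mul, coeff_shiftMatrix, Fin.val_zero, pow_zero, one_mul]
    refine remainderCoeff_congr hQ l ?_
    rw [← hu.mk_succ hd, one_mul, Nat.cast_succ]

/-- The first-order system `q (d/dq) M = A M - M B` satisfied by the shift matrix modulo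
`q ^ (n + 1)`, in terms of coefficients. -/
theorem natCast_mul_coeff_shiftMatrix [Nontrivial K] {Q : K[X]} (hQ : Q.Monic) {n m : ℕ}
    (hm : Q.natDegree = m) [NeZero m] {u : ℕ → K[X]} (hu : IsShiftInverse Q 1 n u) (a l : Fin m)
    {d : ℕ} (hd : d ≤ n) :
    (d : K) * PowerSeries.coeff d (shiftMatrix Q u m a l) =
      ∑ b, mulXMatrix Q m a b * PowerSeries.coeff d (shiftMatrix Q u m b l) +
        (if (a : ℕ) + 1 = m then PowerSeries.coeff d (PowerSeries.X * shiftMatrix Q u m 0 l)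
          else 0) -
        ∑ b, PowerSeries.coeff d (shiftMatrix Q u m a b) * mulXMatrix Q m b l := by
  have hpow : (X + C (d : K)) ^ (a + 1 : ℕ) = ∑ b, C (mulXMatrix Q m a b) *
      (X + C (d : K)) ^ (b : ℕ) + if (a : ℕ) + 1 = m then taylor (d : K) Q else 0 := by
    have h := congrArg (taylorAlgHom (d : K)) (X_pow_succ_eq hQ hm a)
    simpa only [map_add, map_sum, map_mul, map_pow, taylorAlgHom_apply, taylor_X, taylor_C,
      apply_ite (taylor (d : K)), map_zero] using h
  have hsplit : C (d : K) * ((X + C (d : K)) ^ (a : ℕ) * u d) =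
      ∑ b, C (mulXMatrix Q m a b) * ((X + C (d : K)) ^ (b : ℕ) * u d) +
        (if (a : ℕ) + 1 = m then taylor (d : K) Q * u d else 0) -
        (X + C (d : K)) ^ (a : ℕ) * u d * X := by
    rw [eq_sub_iff_add_eq]
    calc _ = (X + C (d : K)) ^ (a + 1 : ℕ) * u d := by ring
      _ = _ := by
        rw [hpow, add_mul, Finset.sum_mul, ite_mul, zero_mul]
        simp only [mul_assoc]
  have h := congrArg (remainderCoeff Q l) hsplit
  simp only [map_sub, map_add, map_sum, ← smul_eq_C_mul, map_smul, smul_eq_mul,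
    apply_ite (remainderCoeff Q l), map_zero, remainderCoeff_mul_X hQ hm] at h
  rw [remainderCoeff_taylor_mul hQ hu l hd] at h
  simpa only [coeff_shiftMatrix] using h

/-- The derivation `q (d/dq)`. -/
def eulerDerivation (K : Type*) [CommRing K] :
    Derivation K (PowerSeries K) (PowerSeries K) :=
  (PowerSeries.X : PowerSeries K) • PowerSeries.derivative K

theorem coeff_eulerDerivation (f : PowerSeries K) (d : ℕ) :
    PowerSeries.coeff d (eulerDerivation K f) = d * PowerSeries.coeff d f := by
  rw [eulerDerivation, Derivation.smul_apply, smul_eq_mul]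
  cases d with
  | zero => rw [PowerSeries.coeff_zero_X_mul, Nat.cast_zero, zero_mul]
  | succ d =>
    rw [PowerSeries.coeff_succ_X_mul, PowerSeries.coeff_derivative, mul_comm, Nat.cast_succ]

theorem X_pow_dvd_sub_one_of_eulerDerivation [IsDomain K] [CharZero K] {n : ℕ} {f : PowerSeries K}
    (hf : PowerSeries.X ^ (n + 1) ∣ eulerDerivation K f) (h₀ : PowerSeries.coeff 0 f = 1) :
    PowerSeries.X ^ (n + 1) ∣ f - 1 := by
  rw [PowerSeries.X_pow_dvd_iff] at hf ⊢
  intro d hd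
  rw [map_sub, PowerSeries.coeff_one]
  cases d with
  | zero => rw [h₀, if_pos rfl, sub_self]
  | succ d =>
    have := hf (d + 1) hd
    rw [coeff_eulerDerivation, mul_eq_zero] at this
    rw [if_neg d.succ_ne_zero, sub_zero]
    exact this.resolve_left (Nat.cast_ne_zero.mpr d.succ_ne_zero)

theorem coeff_zero_det_shiftMatrix [Nontrivial K] {Q : K[X]} (hQ : Q.Monic) {n m : ℕ}
    (hm : Q.natDegree = m) {u : ℕ → K[X]} (hu : IsShiftInverse Q 1 n u) :
    PowerSeries.coeff 0 (shiftMatrix Q u m).det = 1 := by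
  have h₁ : (PowerSeries.constantCoeff (R := K)).mapMatrix (shiftMatrix Q u m) = 1 := by
    ext a l
    rw [RingHom.mapMatrix_apply, Matrix.map_apply, ← PowerSeries.coeff_zero_eq_constantCoeff_apply,
      coeff_shiftMatrix, remainderCoeff_congr hQ (g := X ^ (a : ℕ)) l (by simp [hu.mk_zero]),
      remainderCoeff_of_natDegree_lt hQ _ (by rw [natDegree_X_pow, hm]; exact a.2), coeff_X_pow,
      Matrix.one_apply]
    exact if_congr (by rw [Fin.ext_iff, eq_comm]) rfl rfl
  rw [PowerSeries.coeff_zero_eq_constantCoeff_apply, RingHom.map_det, h₁, Matrix.det_one]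

/- The determinant satisfies `q (d/dq) (det M) = (tr A - tr B) det M`, where `A` and `B` have the
same diagonal entries. -/
theorem X_pow_dvd_det_shiftMatrix_sub_one [IsDomain K] [CharZero K] {Q : K[X]} (hQ : Q.Monic)
    {n m : ℕ} (hm : Q.natDegree = m) (hm₁ : 1 < m) {u : ℕ → K[X]} (hu : IsShiftInverse Q 1 n u) :
    PowerSeries.X ^ (n + 1) ∣ (shiftMatrix Q u m).det - 1 := by
  have : NeZero m := ⟨by lia⟩
  set M := shiftMatrix Q u m with hM
  let B : Matrix (Fin m) (Fin m) (PowerSeries K) := (mulXMatrix Q m).map PowerSeries.C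
  let E : Matrix (Fin m) (Fin m) (PowerSeries K) :=
    Matrix.of fun a b => if (a : ℕ) + 1 = m ∧ b = 0 then PowerSeries.X else 0
  have hsystem (a l : Fin m) : PowerSeries.X ^ (n + 1) ∣
      (M.map (eulerDerivation K) - ((B + E) * M - M * B)) a l := by
    have hE : (E * M) a l = if (a : ℕ) + 1 = m then PowerSeries.X * M 0 l else 0 := by
      rw [Matrix.mul_apply, Fintype.sum_eq_single 0 fun b hb => by simp [E, hb]]
      simp [E, ite_mul]
    refine PowerSeries.X_pow_dvd_iff.mpr fun d hd => ?_
    rw [Matrix.sub_apply, Matrix.sub_apply, add_mul, Matrix.add_apply, hE, map_sub,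
      Matrix.map_apply, coeff_eulerDerivation,
      natCast_mul_coeff_shiftMatrix hQ hm hu a l (Nat.lt_succ_iff.mp hd), sub_eq_zero]
    simp only [hM, B, Matrix.mul_apply, Matrix.map_apply, map_sub, map_add, map_sum,
      PowerSeries.coeff_C_mul, PowerSeries.coeff_mul_C, apply_ite (PowerSeries.coeff d), map_zero]
  have htrace : (M.adjugate * ((B + E) * M - M * B)).trace = 0 := by
    have hE : E.trace = 0 := Finset.sum_eq_zero fun a _ =>
      if_neg fun ⟨h, h₀⟩ => by simp [h₀] at h; lia
    rw [mul_sub, ← mul_assoc, ← mul_assoc, Matrix.trace_sub, Matrix.trace_mul_comm _ M,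
      ← mul_assoc, Matrix.mul_adjugate, Matrix.adjugate_mul, ← Matrix.trace_sub, ← mul_sub,
      add_sub_cancel_left, smul_mul_assoc, one_mul, Matrix.trace_smul, hE, smul_zero]
  refine X_pow_dvd_sub_one_of_eulerDerivation ?_ (coeff_zero_det_shiftMatrix hQ hm hu)
  rw [derivation_det, ← sub_zero (Matrix.trace _), ← htrace, ← Matrix.trace_sub, ← mul_sub]
  refine Finset.dvd_sum fun a _ => ?_
  rw [Matrix.diag_apply, Matrix.mul_apply]
  exact Finset.dvd_sum fun b _ => (hsystem b a).mul_left _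

/-- Column `c` consists of the values on `X ^ l`, `l < m`, of the functional
`f ↦ ∑ k, residue Q (f * (X - k) ^ c * v k) * q ^ k`. -/
def dualShiftMatrix (Q : K[X]) (v : ℕ → K[X]) (m r : ℕ) :
    Matrix (Fin m) (Fin r) (PowerSeries K) :=
  Matrix.of fun l c => PowerSeries.mk fun k =>
    residue Q (X ^ (l : ℕ) * ((X - C (k : K)) ^ (c : ℕ) * v k))

theorem coeff_shiftMatrix_mul_dualShiftMatrix [Nontrivial K] {Q : K[X]} (hQ : Q.Monic) {n m r : ℕ}
    (hm : Q.natDegree = m) (hr : r ≤ m)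
    (hcop : ∀ a < n, IsCoprime Q (taylor (1 * (a + 1 : K)) Q)) {u v : ℕ → K[X]}
    (hu : IsShiftInverse Q 1 n u) (hv : IsShiftInverse Q (-1) n v) (a : Fin m) (c : Fin r) {j : ℕ}
    (hj : j ≤ n) :
    PowerSeries.coeff j ((shiftMatrix Q u m * dualShiftMatrix Q v m r) a c) =
      if j = 0 then residue Q (X ^ (a + c : ℕ)) else 0 := by
  have hsum : PowerSeries.coeff j ((shiftMatrix Q u m * dualShiftMatrix Q v m r) a c) =
      ∑ x ∈ Finset.HasAntidiagonal.antidiagonal j, residue Q ((X + C (x.1 : K)) ^ (a : ℕ) * u x.1 *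
        ((X - C (x.2 : K)) ^ (c : ℕ) * v x.2)) := by
    simp only [Matrix.mul_apply, map_sum, PowerSeries.coeff_mul]
    rw [Finset.sum_comm]
    refine Finset.sum_congr rfl fun x _ => ?_
    simp only [coeff_shiftMatrix, dualShiftMatrix, Matrix.of_apply, PowerSeries.coeff_mk]
    exact (remainderCoeff_mul hQ hm _ _ _).symm
  rw [hsum]
  split_ifs with h₀
  · subst h₀
    rw [Finset.Nat.antidiagonal_zero, Finset.sum_singleton]
    exact remainderCoeff_congr hQ _ (by simp [hu.mk_zero, hv.mk_zero, pow_add])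
  · refine sum_residue_shift_eq_zero hQ (fun h => ?_) hcop hu hv hj ?_
    · rw [h, natDegree_one] at hm
      exact absurd a.2 (by lia)
    · have := Nat.mul_le_mul_right m (show 2 ≤ j + 1 by lia)
      rw [hm]
      lia

theorem sign_revPerm_mul_det_residue [Nontrivial K] {Q : K[X]} (hQ : Q.Monic) {p r : ℕ}
    (hm : Q.natDegree = p + r) :
    ((Equiv.Perm.sign (Fin.revPerm : Equiv.Perm (Fin r)) : ℤ) : K) *
      (Matrix.of fun i c : Fin r => residue Q (X ^ (p + i + c : ℕ))).det = 1 := by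
  rw [← Matrix.det_permute, Matrix.det_of_isUpperTriangular]
  · refine Finset.prod_eq_one fun i _ => ?_
    exact residue_X_pow_pred hQ (by simp; lia)
  · intro i c hic
    exact residue_X_pow_of_lt hQ (by simp at hic ⊢; lia)

theorem mk_span_X_pow_eq_iff {n : ℕ} {f g : PowerSeries K} :
    Ideal.Quotient.mk (Ideal.span {(PowerSeries.X : PowerSeries K) ^ n}) f =
      Ideal.Quotient.mk (Ideal.span {(PowerSeries.X : PowerSeries K) ^ n}) g ↔
      ∀ j < n, PowerSeries.coeff j f = PowerSeries.coeff j g := by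
  rw [Ideal.Quotient.eq, Ideal.mem_span_singleton, PowerSeries.X_pow_dvd_iff]
  simp only [map_sub, sub_eq_zero]

/- The product of the two matrices is congruent to the Hankel matrix of the residues of the powers
of `X`, whose upper left block vanishes. -/
theorem coeff_det_dualShiftMatrix [IsDomain K] [CharZero K] {Q : K[X]} (hQ : Q.Monic) {n p r : ℕ}
    (hm : Q.natDegree = p + r) (hpr : 1 < p + r)
    (hcop : ∀ a < n, IsCoprime Q (taylor (1 * (a + 1 : K)) Q)) {u v : ℕ → K[X]}
    (hu : IsShiftInverse Q 1 n u) (hv : IsShiftInverse Q (-1) n v) :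
    PowerSeries.coeff n ((shiftMatrix Q u (p + r)).submatrix (Fin.castAdd r) (Fin.castAdd r)).det =
      Equiv.Perm.sign (Fin.revPerm : Equiv.Perm (Fin r)) *
        PowerSeries.coeff n ((dualShiftMatrix Q v (p + r) r).submatrix (Fin.natAdd p) id).det := by
  let π := Ideal.Quotient.mk (Ideal.span {(PowerSeries.X : PowerSeries K) ^ (n + 1)})
  let M := shiftMatrix Q u (p + r)
  let D := dualShiftMatrix Q v (p + r) r
  have hMD (a : Fin (p + r)) (c : Fin r) :
      (M.map π * D.map π) a c = π (PowerSeries.C (residue Q (X ^ (a + c : ℕ)))) := by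
    rw [← Matrix.map_mul, Matrix.map_apply]
    refine mk_span_X_pow_eq_iff.mpr fun j hj => ?_
    rw [coeff_shiftMatrix_mul_dualShiftMatrix hQ hm (Nat.le_add_left r p) hcop hu hv a c
      (Nat.lt_succ_iff.mp hj), PowerSeries.coeff_C]
  have htop : (M.map π * D.map π).submatrix (Fin.castAdd r) id = 0 := by
    ext i c
    rw [Matrix.submatrix_apply, hMD, residue_X_pow_of_lt hQ (by simp; lia), map_zero, map_zero,
      Matrix.zero_apply]
  have hbot : (M.map π * D.map π).submatrix (Fin.natAdd p) id = (π.comp PowerSeries.C).mapMatrix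
      (Matrix.of fun i c : Fin r => residue Q (X ^ (p + i + c : ℕ))) :=
    Matrix.ext fun i c => hMD (Fin.natAdd p i) c
  have hdet : (M.map π).det = 1 := by
    rw [← RingHom.mapMatrix_apply, ← RingHom.map_det, ← map_one π, Ideal.Quotient.eq,
      Ideal.mem_span_singleton]
    exact X_pow_dvd_det_shiftMatrix_sub_one hQ hm hpr hu
  have h := det_mul_det_submatrix_natAdd (M.map π) (D.map π) htop
  rw [hdet, one_mul, hbot, ← RingHom.map_det, RingHom.comp_apply, Matrix.submatrix_map,
    Matrix.submatrix_map, ← RingHom.mapMatrix_apply, ← RingHom.mapMatrix_apply, ← RingHom.map_det,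
    ← RingHom.map_det, ← map_mul] at h
  have hn := mk_span_X_pow_eq_iff.mp h n n.lt_succ_self
  rw [PowerSeries.coeff_mul_C] at hn
  rw [hn, mul_left_comm, sign_revPerm_mul_det_residue hQ hm, mul_one]

end ShiftMatrix

/-! ### The dual determinant -/

local notation "ε" => (DualNumber.eps : DualNumber ℚ)

theorem aeval_eq_of_sq_eq_zero {K A : Type*} [CommSemiring K] [Semiring A] [Algebra K A] {x : A}
    (hx : x ^ 2 = 0) (f : K[X]) :
    aeval x f = algebraMap K A (f.coeff 0) + algebraMap K A (f.coeff 1) * x := by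
  conv_lhs => rw [← divX_mul_X_add f, ← divX_mul_X_add f.divX, coeff_divX]
  simp [add_mul, mul_assoc, ← pow_two, hx, add_comm]

section ResidueEval

variable {K : Type*} [CommRing K]

theorem monic_X_pow_mul_X_sub_C (t : K) (k : ℕ) : (X ^ k * (X - C t)).Monic :=
  (monic_X_pow k).mul (monic_X_sub_C t)

theorem eval_divX (t : K) (f : K[X]) : t * f.divX.eval t = f.eval t - f.coeff 0 := by
  have h := congrArg (eval t) (divX_mul_X_add f)
  rw [eval_add, eval_mul, eval_X, eval_C] at h
  linear_combination h

theorem X_pow_mul_eq_add_smul (k : ℕ) (f : K[X]) :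
    X ^ k * f = X ^ (k + 1) * f.divX + f.coeff 0 • X ^ k := by
  conv_lhs => rw [← divX_mul_X_add f]
  rw [smul_eq_C_mul]
  ring

variable [Nontrivial K] (t : K) (k : ℕ) (f : K[X])

theorem natDegree_X_pow_mul_X_sub_C : (X ^ k * (X - C t)).natDegree = k + 1 := by
  rw [(monic_X_pow k).natDegree_mul (monic_X_sub_C t), natDegree_X_pow, natDegree_X_sub_C]

theorem residue_X_pow_mul : residue (X ^ k * (X - C t)) (X ^ k * f) = f.eval t := by
  have hQ := monic_X_pow_mul_X_sub_C t k
  have hf : AdjoinRoot.mk (X ^ k * (X - C t)) (X ^ k * f) =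
      AdjoinRoot.mk (X ^ k * (X - C t)) (f.eval t • X ^ k) := by
    rw [AdjoinRoot.mk_eq_mk, smul_eq_C_mul, mul_comm (C _), ← mul_sub]
    exact mul_dvd_mul_left _ (X_sub_C_dvd_sub_C_eval)
  rw [residue, remainderCoeff_congr hQ _ hf, ← residue, map_smul,
    residue_X_pow_pred hQ (natDegree_X_pow_mul_X_sub_C t k).symm, smul_eq_mul, mul_one]

theorem residue_X_pow_succ_mul : t * residue (X ^ (k + 1) * (X - C t)) (X ^ k * f) =
    f.eval t - f.coeff 0 := by
  rw [X_pow_mul_eq_add_smul k f, map_add, map_smul, residue_X_pow_mul, residue_X_pow_of_lt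
    (monic_X_pow_mul_X_sub_C t _) (by rw [natDegree_X_pow_mul_X_sub_C]; lia), smul_zero, add_zero,
    eval_divX]

theorem residue_X_pow_add_two_mul : t ^ 2 * residue (X ^ (k + 2) * (X - C t)) (X ^ k * f) =
    f.eval t - f.coeff 0 - t * f.coeff 1 := by
  have hdivX := residue_X_pow_succ_mul t (k + 1) f.divX
  rw [coeff_divX] at hdivX
  rw [X_pow_mul_eq_add_smul k f, map_add, map_smul, residue_X_pow_of_lt
    (monic_X_pow_mul_X_sub_C t _) (by rw [natDegree_X_pow_mul_X_sub_C]; lia), smul_zero, add_zero]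
  linear_combination eval_divX t f + t * hdivX

end ResidueEval

theorem pow_three_mul_det_of_rows {A : Type*} [CommRing A] {t : A} {a b c : Fin 3 → A}
    {M : Matrix (Fin 3) (Fin 3) A} (h₀ : ∀ j, t ^ 2 * M 0 j = c j - a j - t * b j)
    (h₁ : ∀ j, t * M 1 j = c j - a j) (h₂ : ∀ j, M 2 j = c j) :
    t ^ 3 * M.det = t * (Matrix.of ![b, a, c]).det := by
  calc t ^ 3 * M.det = (Matrix.of ![fun j => t ^ 2 * M 0 j, fun j => t * M 1 j, M 2]).det := by
        rw [Matrix.det_fin_three, Matrix.det_fin_three]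
        simp
        ring
    _ = t * (Matrix.of ![b, a, c]).det := by
        simp only [h₀, h₁, funext h₂, Matrix.det_fin_three]
        simp
        ring

theorem det_add_sub_rows {A : Type*} [CommRing A] {e : A} (a b c : Fin 3 → A) :
    (Matrix.of ![a + e • b, a - e • b, c]).det = 2 * e * (Matrix.of ![b, a, c]).det := by
  simp [Matrix.det_fin_three]
  ring

/-- The polynomial whose roots `0`, eight times, and `n + 1` are the points at which the weights of
the dual sum are evaluated. -/
def nodePolynomial (n : ℕ) : ℚ[X] := X ^ 8 * (X - C (n + 1 : ℚ))

theorem aeval_taylor_nodePolynomial {A : Type*} [CommRing A] [Algebra ℚ A] (x : A) (n : ℕ) (a : ℚ) :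
    aeval x (taylor a (nodePolynomial n)) =
      (x + algebraMap ℚ A a) ^ 8 * (x + algebraMap ℚ A a - (n + 1)) := by
  simp [nodePolynomial, taylor_apply]

theorem nodePolynomial_eq_prod (n : ℕ) :
    nodePolynomial n = (X - C 0) ^ 8 * (X - C (n + 1 : ℚ)) := by
  rw [nodePolynomial, C_0, sub_zero]

theorem taylor_nodePolynomial (n : ℕ) (a : ℚ) :
    taylor a (nodePolynomial n) = (X - C (-a)) ^ 8 * (X - C (n + 1 - a : ℚ)) := by
  rw [nodePolynomial, taylor_mul, taylor_pow, map_sub, taylor_X, taylor_C, C_neg, C_sub,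
    sub_neg_eq_add, add_sub_assoc, ← neg_sub (C _) (C a), ← sub_eq_add_neg]

theorem isCoprime_taylor_nodePolynomial {n a : ℕ} (ha : a < n) :
    IsCoprime (nodePolynomial n) (taylor (1 * (a + 1 : ℚ)) (nodePolynomial n)) := by
  have hcop {b c : ℚ} (h : b ≠ c) : IsCoprime (X - C b : ℚ[X]) (X - C c) :=
    isCoprime_X_sub_C_of_isUnit_sub (sub_ne_zero.mpr h).isUnit
  have ha' : (a : ℚ) < n := Nat.cast_lt.mpr ha
  have : (0 : ℚ) ≤ a := a.cast_nonneg
  rw [taylor_nodePolynomial, nodePolynomial_eq_prod]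
  refine IsCoprime.mul_left (IsCoprime.pow_left (IsCoprime.mul_right ?_ ?_))
    (IsCoprime.mul_right ?_ ?_)
  · exact (hcop (by linarith)).pow_right
  · exact hcop (by linarith)
  · exact (hcop (by linarith)).pow_right
  · exact hcop (by linarith)

theorem aeval_mul_prod_eq_one {A : Type*} [CommRing A] [Algebra ℚ A] {n k : ℕ} {v : ℕ → ℚ[X]}
    (hv : IsShiftInverse (nodePolynomial n) (-1) n v) (hk : k ≤ n) {x : A}
    (hx : aeval x (nodePolynomial n) = 0) :
    (-1) ^ k * aeval x (v k) * ((∏ a ∈ Finset.range k, (((a + 1 : ℕ) : A) - x) ^ 8) *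
      ∏ a ∈ Finset.range k, (((n + 1 + a + 1 : ℕ) : A) - x)) = 1 := by
  obtain ⟨q, hq⟩ := AdjoinRoot.mk_eq_mk.mp ((hv k hk).trans (map_one _).symm)
  have h := congrArg (aeval x) hq
  rw [map_sub, map_mul, map_mul, hx, zero_mul, map_one, sub_eq_zero, map_prod] at h
  have hsign : (-1 : A) ^ k = ∏ _a ∈ Finset.range k, (-1 : A) := by
    rw [Finset.prod_const, Finset.card_range]
  refine Eq.trans ?_ h
  rw [hsign, mul_comm (∏ _a ∈ _, _), mul_assoc, ← Finset.prod_mul_distrib,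
    ← Finset.prod_mul_distrib]
  congr 1
  refine Finset.prod_congr rfl fun a _ => ?_
  rw [aeval_taylor_nodePolynomial]
  simp only [map_mul, map_neg, map_add, map_natCast, map_one]
  push_cast
  ring

theorem fst_prod {ι : Type*} (s : Finset ι) (f : ι → DualNumber ℚ) :
    (∏ a ∈ s, f a).fst = ∏ a ∈ s, (f a).fst :=
  map_prod (TrivSqZeroExt.fstHom ℚ ℚ ℚ) f s

theorem aeval_eq_mul_nearFactor {n k : ℕ} {v : ℕ → ℚ[X]}
    (hv : IsShiftInverse (nodePolynomial n) (-1) n v) (hk : k ≤ n) {x : DualNumber ℚ}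
    (hx : x.fst = 0) :
    aeval x (v k) = (-1) ^ k *
      ((∏ a ∈ Finset.range (n + 1), (((a + 1 : ℕ) : DualNumber ℚ) - x)) * nearFactor x n k) := by
  have hx₂ : x ^ 2 = 0 := by ext <;> simp [pow_two, hx]
  have hnode : aeval x (nodePolynomial n) = 0 := by
    simp [nodePolynomial, show x ^ 8 = (x ^ 2) ^ 4 by rw [← pow_mul], hx₂]
  have hne (r : ℕ) : (∏ a ∈ Finset.range r, (((a + 1 : ℕ) : DualNumber ℚ) - x)).fst ≠ 0 := by
    rw [fst_prod]
    exact Finset.prod_ne_zero_iff.mpr fun a _ => succ_sub_ne_zero hx a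
  have hcancel := TrivSqZeroExt.mul_inv_cancel (x := (∏ a ∈ Finset.range k,
      (((a + 1 : ℕ) : DualNumber ℚ) - x) ^ 8) * ∏ a ∈ Finset.range (n + 1 + k),
      (((a + 1 : ℕ) : DualNumber ℚ) - x)) (by
    rw [TrivSqZeroExt.fst_mul, Finset.prod_pow, TrivSqZeroExt.fst_pow]
    exact mul_ne_zero (pow_ne_zero _ (hne k)) (hne _))
  rw [← nearFactor, Finset.prod_range_add] at hcancel
  have hsign : (-1 : DualNumber ℚ) ^ k * (-1) ^ k = 1 := by rw [← mul_pow]; simp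
  have h := aeval_mul_prod_eq_one hv hk hnode
  linear_combination ((-1) ^ k * ((∏ a ∈ Finset.range (n + 1),
    (((a + 1 : ℕ) : DualNumber ℚ) - x)) * nearFactor x n k)) * h -
    (-1) ^ k * (-1) ^ k * aeval x (v k) * hcancel - aeval x (v k) * hsign

theorem eval_eq_mul_farFactor {n k : ℕ} {v : ℕ → ℚ[X]}
    (hv : IsShiftInverse (nodePolynomial n) (-1) n v) (hk : k ≤ n) :
    (v k).eval (n + 1 : ℚ) = (-1) ^ k * (farFactor n (n - k) / (n.factorial : ℚ) ^ 8) := by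
  have h := aeval_mul_prod_eq_one hv hk (x := (n + 1 : ℚ)) (by simp [nodePolynomial])
  have hfar : ∏ a ∈ Finset.range k, (((n + 1 + a + 1 : ℕ) : ℚ) - (n + 1)) = k.factorial := by
    rw [← Finset.prod_range_add_one_eq_factorial, Nat.cast_prod]
    exact Finset.prod_congr rfl fun a _ => by push_cast; ring
  have hnear : ∏ a ∈ Finset.range k, (((a + 1 : ℕ) : ℚ) - (n + 1)) ^ 8 =
      (n.descFactorial k : ℚ) ^ 8 := by
    rw [Nat.descFactorial_eq_prod_range, Nat.cast_prod, ← Finset.prod_pow]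
    refine Finset.prod_congr rfl fun a ha => ?_
    rw [Nat.cast_sub ((Finset.mem_range.mp ha).le.trans hk)]
    push_cast
    ring
  have hdesc : ((n - k).factorial : ℚ) * n.descFactorial k = n.factorial := by
    exact_mod_cast Nat.factorial_mul_descFactorial hk
  have hsign : (-1 : ℚ) ^ k * (-1) ^ k = 1 := by rw [← mul_pow]; simp
  rw [hnear, hfar, coe_aeval_eq_eval] at h
  rw [farFactor, if_pos (n.sub_le k), Nat.sub_sub_self hk, div_div, mul_div_assoc', eq_div_iff
    (by positivity), ← hdesc]
  linear_combination (-1) ^ k * ((n - k).factorial : ℚ) ^ 8 * h -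
    (v k).eval (n + 1 : ℚ) * (n - k).factorial ^ 8 * n.descFactorial k ^ 8 * k.factorial * hsign

theorem coeff_prod_univ {ι : Type*} [Fintype ι] [DecidableEq ι] {A : Type*} [CommSemiring A]
    (f : ι → PowerSeries A) (N : ℕ) :
    PowerSeries.coeff N (∏ i, f i) =
      ∑ d ∈ (Fintype.piFinset fun _ : ι => Finset.range (N + 1)).filter (fun d => ∑ i, d i = N),
        ∏ i, PowerSeries.coeff (d i) (f i) := by
  rw [PowerSeries.coeff_prod]
  refine Finset.sum_bij' (fun l _ => ⇑l) (fun d _ => Finsupp.equivFunOnFinite.symm d)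
    (fun l hl => ?_) (fun d hd => ?_) (fun l _ => ?_) (fun d _ => ?_) (fun l _ => rfl)
  · have hl := (Finset.mem_finsuppAntidiag.mp hl).1
    refine Finset.mem_filter.mpr ⟨Fintype.mem_piFinset.mpr fun i => ?_, hl⟩
    rw [Finset.mem_range, Nat.lt_succ_iff, ← hl]
    exact Finset.single_le_sum (f := l) (fun _ _ => Nat.zero_le _) (Finset.mem_univ i)
  · exact Finset.mem_finsuppAntidiag.mpr ⟨(Finset.mem_filter.mp hd).2, Finset.subset_univ _⟩
  · exact Finsupp.equivFunOnFinite.symm_apply_apply l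
  · exact Finsupp.equivFunOnFinite.apply_symm_apply d

theorem coeff_det {ι : Type*} [Fintype ι] [DecidableEq ι] {A : Type*} [CommRing A]
    (M : Matrix ι ι (PowerSeries A)) (N : ℕ) :
    PowerSeries.coeff N M.det =
      ∑ d ∈ (Fintype.piFinset fun _ : ι => Finset.range (N + 1)).filter (fun d => ∑ i, d i = N),
        (Matrix.of fun i j => PowerSeries.coeff (d i) (M i j)).det := by
  have h (d : ι → ℕ) : (Matrix.of fun i j => PowerSeries.coeff (d i) (M i j)).det =
      ∑ σ : Equiv.Perm ι, Equiv.Perm.sign σ • ∏ i, PowerSeries.coeff (d i) (M i (σ i)) := by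
    rw [← Matrix.det_transpose, Matrix.det_apply]
    rfl
  simp only [h]
  rw [← Matrix.det_transpose, Matrix.det_apply, map_sum, Finset.sum_comm]
  refine Finset.sum_congr rfl fun σ _ => ?_
  simp only [Units.smul_def, map_zsmul, Matrix.transpose_apply, coeff_prod_univ, Finset.smul_sum]

theorem coeff_det_mk_pow_mul {m : ℕ} {A : Type*} [CommRing A] (x w : Fin m → ℕ → A) (N : ℕ) :
    PowerSeries.coeff N
        (Matrix.of fun i c : Fin m => PowerSeries.mk fun k => x i k ^ (c : ℕ) * w i k).det =
      ∑ d ∈ (Fintype.piFinset fun _ : Fin m => Finset.range (N + 1)).filter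
        (fun d => ∑ i, d i = N),
        (Matrix.vandermonde fun i => x i (d i)).det * ∏ i, w i (d i) := by
  rw [coeff_det]
  refine Finset.sum_congr rfl fun d _ => ?_
  rw [mul_comm, ← Matrix.det_mul_column]
  congr 1
  ext i c
  simp [mul_comm]

theorem sum_piFinset_fin_three {A : Type*} [AddCommMonoid A] (N : ℕ) (g : (Fin 3 → ℕ) → A) :
    ∑ d ∈ (Fintype.piFinset fun _ : Fin 3 => Finset.range (N + 1)).filter (fun d => ∑ i, d i = N),
      g d = ∑ i ∈ Finset.range (N + 1), ∑ j ∈ Finset.range (N + 1),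
        if i + j ≤ N then g ![i, j, N - (i + j)] else 0 := by
  rw [← Finset.sum_product', ← Finset.sum_filter]
  refine Finset.sum_bij' (fun d _ => (d 0, d 1)) (fun p _ => ![p.1, p.2, N - (p.1 + p.2)])
    (fun d hd => ?_) (fun p hp => ?_) (fun d hd => ?_) (fun p _ => rfl) (fun d hd => ?_)
  · simp only [Finset.mem_filter, Fintype.mem_piFinset, Fin.sum_univ_three, Finset.mem_product,
      Finset.mem_range] at hd ⊢
    lia
  · simp only [Finset.mem_filter, Finset.mem_product, Finset.mem_range] at hp
    simp [Fintype.mem_piFinset, Fin.forall_fin_succ, Fin.sum_univ_three]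
    lia
  · simp only [Finset.mem_filter, Fin.sum_univ_three] at hd
    ext i
    fin_cases i <;> simp
    lia
  · simp only [Finset.mem_filter, Fin.sum_univ_three] at hd
    congr 1
    ext i
    fin_cases i <;> simp
    lia

theorem prod_mul_prod_sub_neg {x : DualNumber ℚ} (hx : x ^ 2 = 0) (n : ℕ) :
    (∏ a ∈ Finset.range n, (((a + 1 : ℕ) : DualNumber ℚ) - x)) *
      ∏ a ∈ Finset.range n, (((a + 1 : ℕ) : DualNumber ℚ) - -x) =
        (n.factorial : DualNumber ℚ) ^ 2 := by
  rw [← Finset.prod_mul_distrib, ← Finset.prod_range_add_one_eq_factorial, Nat.cast_prod,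
    ← Finset.prod_pow]
  refine Finset.prod_congr rfl fun a _ => ?_
  linear_combination -hx

theorem det_vandermonde_eq_dualVandermonde (i j k : ℕ) :
    (Matrix.vandermonde ![ε - i, -ε - j, ((i + j + k : ℕ) : DualNumber ℚ) + 1 - k]).det =
      dualVandermonde i j := by
  rw [Matrix.det_fin_three, dualVandermonde]
  simp [Matrix.vandermonde_apply]
  ring

theorem prod_aeval_eq_dualWeight {i j k n : ℕ} {v : ℕ → ℚ[X]}
    (hv : IsShiftInverse (nodePolynomial n) (-1) n v) (hn : i + j + k = n) :
    aeval ε (v i) * aeval (-ε) (v j) * aeval ((n : DualNumber ℚ) + 1) (v k) =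
      algebraMap ℚ (DualNumber ℚ) ((-1) ^ n * ((n + 1).factorial ^ 2 / (n.factorial : ℚ) ^ 8)) *
        dualWeight n i j := by
  have hfar := congrArg (algebraMap ℚ (DualNumber ℚ)) (eval_eq_mul_farFactor hv (k := k) (by lia))
  rw [show n - k = i + j by lia, ← coe_aeval_eq_eval, ← aeval_algebraMap_apply, map_add,
    map_natCast, map_one] at hfar
  rw [hfar, aeval_eq_mul_nearFactor hv (by lia) DualNumber.fst_eps,
    aeval_eq_mul_nearFactor hv (by lia) (by simp), dualWeight, ← hn, pow_add, pow_add, hn]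
  simp only [map_mul, map_pow, map_neg, map_one, map_natCast, div_eq_mul_inv]
  rw [← prod_mul_prod_sub_neg DualNumber.eps_pow_two (n + 1)]
  ring

theorem coeff_det_aeval_shift {n : ℕ} {v : ℕ → ℚ[X]}
    (hv : IsShiftInverse (nodePolynomial n) (-1) n v) :
    PowerSeries.coeff n (Matrix.of fun i c : Fin 3 => PowerSeries.mk fun k =>
        aeval ((![ε, -ε, n + 1] : Fin 3 → DualNumber ℚ) i)
          ((X - C (k : ℚ)) ^ (c : ℕ) * v k)).det =
      algebraMap ℚ (DualNumber ℚ) ((-1) ^ n * ((n + 1).factorial ^ 2 / (n.factorial : ℚ) ^ 8)) *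
        ∑ i ∈ Finset.range (n + 1), ∑ j ∈ Finset.range (n + 1),
          dualVandermonde i j * dualWeight n i j := by
  have hshift (x : DualNumber ℚ) (c k : ℕ) :
      aeval x ((X - C (k : ℚ)) ^ c * v k) = (x - k) ^ c * aeval x (v k) := by simp
  simp only [hshift]
  rw [coeff_det_mk_pow_mul, sum_piFinset_fin_three]
  simp only [Finset.mul_sum]
  refine Finset.sum_congr rfl fun i _ => Finset.sum_congr rfl fun j _ => ?_
  split_ifs with hij
  · obtain ⟨k, rfl⟩ := Nat.exists_eq_add_of_le hij
    rw [Nat.add_sub_cancel_left, ← det_vandermonde_eq_dualVandermonde i j k, mul_left_comm,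
      ← prod_aeval_eq_dualWeight hv rfl, Fin.prod_univ_three]
    refine congrArg₂ _ (congrArg _ (congrArg _ (funext fun a => ?_))) rfl
    fin_cases a <;> rfl
  · rw [dualWeight_eq_zero (not_le.mp hij), mul_zero, mul_zero]

theorem snd_coeff_det_aeval (f : Fin 3 → ℕ → ℚ[X]) (t : ℚ) (n : ℕ) :
    (PowerSeries.coeff n (Matrix.of fun i c : Fin 3 => PowerSeries.mk fun k =>
      aeval ((![ε, -ε, algebraMap ℚ _ t] : Fin 3 → DualNumber ℚ) i) (f c k)).det).snd =
    2 * PowerSeries.coeff n (Matrix.of ![fun c => PowerSeries.mk fun k => (f c k).coeff 1,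
      fun c => PowerSeries.mk fun k => (f c k).coeff 0,
      fun c => PowerSeries.mk fun k => (f c k).eval t]).det := by
  let φ : PowerSeries ℚ →+* PowerSeries (DualNumber ℚ) :=
    PowerSeries.map (algebraMap ℚ (DualNumber ℚ))
  let a : Fin 3 → PowerSeries ℚ := fun c => PowerSeries.mk fun k => (f c k).coeff 0
  let b : Fin 3 → PowerSeries ℚ := fun c => PowerSeries.mk fun k => (f c k).coeff 1
  let e : Fin 3 → PowerSeries ℚ := fun c => PowerSeries.mk fun k => (f c k).eval t
  have hφ : (Matrix.of ![φ ∘ b, φ ∘ a, φ ∘ e]).det = φ (Matrix.of ![b, a, e]).det := by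
    rw [RingHom.map_det]
    refine congrArg _ (Matrix.ext fun i c => ?_)
    fin_cases i <;> rfl
  have heps : ε ^ 2 = 0 := DualNumber.eps_pow_two
  have hmat : (Matrix.of fun i c : Fin 3 => PowerSeries.mk fun k =>
      aeval ((![ε, -ε, algebraMap ℚ _ t] : Fin 3 → DualNumber ℚ) i) (f c k)) = Matrix.of
        ![φ ∘ a + PowerSeries.C ε • (φ ∘ b), φ ∘ a - PowerSeries.C ε • (φ ∘ b), φ ∘ e] := by
    refine Matrix.ext fun i c => PowerSeries.ext fun k => ?_
    fin_cases i
    · simp [φ, a, b, aeval_eq_of_sq_eq_zero heps, mul_comm]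
    · simp [φ, a, b, aeval_eq_of_sq_eq_zero (x := -ε) (by rw [neg_sq, heps]), mul_comm,
        sub_eq_add_neg]
    · simp [φ, e, aeval_algebraMap_apply]
  rw [hmat, det_add_sub_rows, hφ, ← map_ofNat (PowerSeries.C (R := DualNumber ℚ)), ← map_mul,
    PowerSeries.coeff_C_mul, PowerSeries.coeff_map]
  have hfst (x : ℚ) : (algebraMap ℚ (DualNumber ℚ) x).fst = x := rfl
  have htwo : (2 : DualNumber ℚ).fst = 2 := TrivSqZeroExt.fst_natCast 2
  simp [a, b, e, htwo, hfst]

theorem pow_three_mul_det_dualShiftMatrix (n : ℕ) (v : ℕ → ℚ[X]) :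
    PowerSeries.C (n + 1 : ℚ) ^ 3 * ((dualShiftMatrix (nodePolynomial n) v 9 3).submatrix
        (Fin.natAdd 6) id).det = PowerSeries.C (n + 1 : ℚ) * (Matrix.of
      ![fun c : Fin 3 => PowerSeries.mk fun k => ((X - C (k : ℚ)) ^ (c : ℕ) * v k).coeff 1,
        fun c : Fin 3 => PowerSeries.mk fun k => ((X - C (k : ℚ)) ^ (c : ℕ) * v k).coeff 0,
        fun c : Fin 3 => PowerSeries.mk fun k =>
          ((X - C (k : ℚ)) ^ (c : ℕ) * v k).eval (n + 1 : ℚ)]).det := by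
  have hentry (i c : Fin 3) (k : ℕ) : PowerSeries.coeff k
      ((dualShiftMatrix (nodePolynomial n) v 9 3).submatrix (Fin.natAdd 6) id i c) =
      residue (nodePolynomial n) (X ^ (6 + i : ℕ) * ((X - C (k : ℚ)) ^ (c : ℕ) * v k)) := by
    rw [Matrix.submatrix_apply, dualShiftMatrix, Matrix.of_apply, PowerSeries.coeff_mk,
      Fin.val_natAdd, id_eq]
  refine pow_three_mul_det_of_rows (A := PowerSeries ℚ) (fun c => PowerSeries.ext fun k => ?_)
    (fun c => PowerSeries.ext fun k => ?_) (fun c => PowerSeries.ext fun k => ?_)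
  · rw [← map_pow, map_sub, map_sub, PowerSeries.coeff_C_mul, PowerSeries.coeff_C_mul, hentry]
    simp only [PowerSeries.coeff_mk]
    exact residue_X_pow_add_two_mul _ 6 _
  · rw [map_sub, PowerSeries.coeff_C_mul, hentry]
    simp only [PowerSeries.coeff_mk]
    exact residue_X_pow_succ_mul _ 7 _
  · rw [hentry, PowerSeries.coeff_mk]
    exact residue_X_pow_mul _ 8 _

theorem coeff_det_dualShiftMatrix_nodePolynomial {n : ℕ} {v : ℕ → ℚ[X]}
    (hv : IsShiftInverse (nodePolynomial n) (-1) n v) :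
    PowerSeries.coeff n ((dualShiftMatrix (nodePolynomial n) v 9 3).submatrix
        (Fin.natAdd 6) id).det = (-1) ^ n * (dualSum n / (2 * (n.factorial : ℚ) ^ 6)) := by
  have hdual := congrArg TrivSqZeroExt.snd (coeff_det_aeval_shift hv)
  rw [show (n + 1 : DualNumber ℚ) = algebraMap ℚ _ (n + 1 : ℚ) by simp,
    snd_coeff_det_aeval fun c k => (X - C (k : ℚ)) ^ (c : ℕ) * v k, ← Algebra.smul_def,
    TrivSqZeroExt.snd_smul, smul_eq_mul, ← dualSum, Nat.factorial_succ, Nat.cast_mul,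
    Nat.cast_succ] at hdual
  have h := congrArg (PowerSeries.coeff n) (pow_three_mul_det_dualShiftMatrix n v)
  rw [← map_pow, PowerSeries.coeff_C_mul, PowerSeries.coeff_C_mul] at h
  have hn : (n + 1 : ℚ) ≠ 0 := by positivity
  have hfac : (n.factorial : ℚ) ≠ 0 := Nat.cast_ne_zero.mpr n.factorial_ne_zero
  refine mul_left_cancel₀ (pow_ne_zero 3 hn) (h.trans ?_)
  rw [← mul_left_cancel_iff_of_pos (two_pos (α := ℚ)), mul_left_comm, hdual]
  field_simp

theorem coeff_det_shiftMatrix_nodePolynomial {n : ℕ} {u : ℕ → ℚ[X]}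
    (hu : IsShiftInverse (nodePolynomial n) 1 n u) :
    (n.factorial : ℚ) ^ 9 * PowerSeries.coeff n ((shiftMatrix (nodePolynomial n) u 9).submatrix
        (Fin.castAdd 3 : Fin 6 → Fin 9) (Fin.castAdd 3)).det = solutionCoeff n := by
  have hcop {a : ℕ} (ha : a < n) := isCoprime_taylor_nodePolynomial ha
  obtain ⟨v, hv⟩ : ∃ v, IsShiftInverse (nodePolynomial n) (-1) n v := by
    refine exists_isShiftInverse fun a ha => ?_
    have h := (isCoprime_taylor (hcop ha) (-(a + 1 : ℚ))).symm
    rwa [taylor_taylor, show (-(a + 1 : ℚ) + 1 * (a + 1)) = 0 by ring, taylor_zero,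
      show -(a + 1 : ℚ) = -1 * (a + 1) by ring] at h
  have hsign : (Equiv.Perm.sign (Fin.revPerm : Equiv.Perm (Fin 3)) : ℤ) = -1 := by decide
  have hfac : (n.factorial : ℚ) ≠ 0 := Nat.cast_ne_zero.mpr n.factorial_ne_zero
  have hdet := coeff_det_dualShiftMatrix (p := 6) (r := 3) (monic_X_pow_mul_X_sub_C _ 8)
    (natDegree_X_pow_mul_X_sub_C _ 8) (by lia) (fun a ha => hcop ha) hu hv
  rw [hsign] at hdet
  refine (congrArg _ (hdet.trans (congrArg _
    (coeff_det_dualShiftMatrix_nodePolynomial hv)))).trans ?_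
  rw [solutionCoeff]
  push_cast
  field_simp
  ring

/-! ### The Vandermonde quotient -/

section Interpolation

variable {A : Type*} [CommRing A]

theorem remainderCoeff_map {B : Type*} [CommRing B] (φ : A →+* B) {Q : A[X]} (hQ : Q.Monic)
    (l : ℕ) (f : A[X]) : remainderCoeff (Q.map φ) l (f.map φ) = φ (remainderCoeff Q l f) := by
  rw [remainderCoeff_apply, remainderCoeff_apply, ← map_modByMonic φ hQ, coeff_map]

theorem coeff_eq_of_X_pow_dvd_sub {p l : ℕ} {f g : A[X]} (h : X ^ p ∣ f - g) (hl : l < p) :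
    f.coeff l = g.coeff l := by
  rw [← sub_eq_zero, ← coeff_sub]
  exact X_pow_dvd_iff.mp h l hl

theorem remainderCoeff_X_pow_mul {p l : ℕ} {Q : A[X]} (hl : l < p) (f : A[X]) :
    remainderCoeff (X ^ p * Q) l f = f.coeff l :=
  coeff_eq_of_X_pow_dvd_sub ((dvd_mul_right _ _).trans (dvd_modByMonic_sub f (X ^ p * Q))) hl

theorem eval_eq_sum_remainderCoeff [Nontrivial A] {Q : A[X]} (hQ : Q.Monic) {m : ℕ}
    (hm : Q.natDegree = m) {x : A} (hx : Q.IsRoot x) (f : A[X]) :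
    f.eval x = ∑ l : Fin m, x ^ (l : ℕ) * remainderCoeff Q l f := by
  conv_lhs => rw [← modByMonic_add_div f Q, eval_add, eval_mul, hx.eq_zero, zero_mul, add_zero,
    modByMonic_eq_sum_remainderCoeff hQ hm, eval_finsetSum]
  refine Finset.sum_congr rfl fun l _ => ?_
  rw [eval_mul, eval_C, eval_pow, eval_X, mul_comm]

theorem coeff_det_mk_eval [Nontrivial A] {m : ℕ} (x : Fin m → A) (f : Fin m → ℕ → A[X]) (N : ℕ) :
    PowerSeries.coeff N
        (Matrix.of fun i c : Fin m => PowerSeries.mk fun d => (f c d).eval (x i)).det =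
      (Matrix.vandermonde x).det * PowerSeries.coeff N (Matrix.of fun c l : Fin m =>
        PowerSeries.mk fun d => remainderCoeff (∏ i, (X - C (x i))) l (f c d)).det := by
  have hroot (i : Fin m) : (∏ i, (X - C (x i))).IsRoot (x i) :=
    dvd_iff_isRoot.mp (Finset.dvd_prod_of_mem _ (Finset.mem_univ i))
  have hdeg : (∏ i, (X - C (x i))).natDegree = m :=
    (natDegree_finsetProd_X_sub_C_eq_card _ _).trans (Finset.card_fin m)
  have hmul : (Matrix.of fun i c : Fin m => PowerSeries.mk fun d => (f c d).eval (x i)) =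
      PowerSeries.C.mapMatrix (Matrix.vandermonde x) * (Matrix.of fun c l : Fin m =>
        PowerSeries.mk fun d => remainderCoeff (∏ i, (X - C (x i))) l (f c d)).transpose := by
    refine Matrix.ext fun i c => PowerSeries.ext fun d => ?_
    simp only [Matrix.mul_apply, Matrix.of_apply, Matrix.transpose_apply, RingHom.mapMatrix_apply,
      Matrix.map_apply, Matrix.vandermonde_apply, PowerSeries.coeff_C_mul, PowerSeries.coeff_mk,
      map_sum, eval_eq_sum_remainderCoeff (monic_prod_X_sub_C x Finset.univ) hdeg (hroot i)]
  rw [hmul, Matrix.det_mul, Matrix.det_transpose, ← RingHom.map_det, PowerSeries.coeff_C_mul]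

theorem coeff_det_congr {ι : Type*} [Fintype ι] [DecidableEq ι] {M M' : Matrix ι ι (PowerSeries A)}
    {N : ℕ} (h : ∀ i j, ∀ d ≤ N, PowerSeries.coeff d (M i j) = PowerSeries.coeff d (M' i j)) :
    PowerSeries.coeff N M.det = PowerSeries.coeff N M'.det := by
  rw [coeff_det, coeff_det]
  refine Finset.sum_congr rfl fun d hd => congrArg _ (Matrix.ext fun i j => ?_)
  have hd := Fintype.mem_piFinset.mp (Finset.mem_filter.mp hd).1 i
  exact h i j (d i) (Nat.lt_succ_iff.mp (Finset.mem_range.mp hd))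

theorem coeff_mul_eq_sum_fin [Nontrivial A] {p : ℕ} (f g : A[X]) (l : Fin p) :
    (f * g).coeff l = ∑ b : Fin p, f.coeff b * (X ^ (b : ℕ) * g).coeff l := by
  have hcoeff (l : Fin p) (f : A[X]) : remainderCoeff (X ^ p) l f = f.coeff l := by
    simpa using remainderCoeff_X_pow_mul (Q := 1) l.is_lt f
  simpa only [hcoeff] using remainderCoeff_mul (monic_X_pow p) (natDegree_X_pow p) l f g

theorem det_mk_coeff_mul [Nontrivial A] {p : ℕ} (f : Fin p → ℕ → A[X]) (g : A[X]) :
    (Matrix.of fun c l : Fin p => PowerSeries.mk fun d => (f c d * g).coeff l).det =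
      (Matrix.of fun c l : Fin p => PowerSeries.mk fun d => (f c d).coeff l).det *
        PowerSeries.C (g.coeff 0 ^ p) := by
  let G : Matrix (Fin p) (Fin p) A := Matrix.of fun b l => (X ^ (b : ℕ) * g).coeff l
  have hmul : (Matrix.of fun c l : Fin p => PowerSeries.mk fun d => (f c d * g).coeff l) =
      (Matrix.of fun c l : Fin p => PowerSeries.mk fun d => (f c d).coeff l) *
        PowerSeries.C.mapMatrix G := by
    refine Matrix.ext fun c l => PowerSeries.ext fun d => ?_
    simp only [G, Matrix.mul_apply, Matrix.of_apply, RingHom.mapMatrix_apply, Matrix.map_apply,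
      PowerSeries.coeff_mul_C, PowerSeries.coeff_mk, map_sum]
    exact coeff_mul_eq_sum_fin _ g l
  have hG : G.IsUpperTriangular := fun b l h => by
    simp only [G, Matrix.of_apply]
    rw [coeff_X_pow_mul']
    exact if_neg (not_le.mpr (Fin.lt_def.mp h))
  have hdet : G.det = g.coeff 0 ^ p := by
    rw [Matrix.det_of_isUpperTriangular hG]
    simp [G, coeff_X_pow_mul']
  rw [hmul, Matrix.det_mul, ← RingHom.map_det, hdet]

end Interpolation

section Quotient

/-- The monic polynomial whose roots are the variables `x_j`, the Chern roots of the tautological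
bundle. -/
def chernPolynomial : R[X] := ∏ i : Fin 6, (X - C (MvPowerSeries.X i))

/-- The first Chern class `∑ j, x_j`. -/
def varSum : R := ∑ j, MvPowerSeries.X j

/-- The factor of the variable `x_i` in `T_d` with `∑ j, d j = n`, as a function of `d i = d`. -/
def varFactor (n d : ℕ) (i : Fin 6) : R :=
  (∏ a ∈ Finset.range (n - d), (varSum + ((a : R) + 1) - MvPowerSeries.X i)) *
    (∏ a ∈ Finset.range d, (MvPowerSeries.X i + ((a : R) + 1)) ^ 8)⁻¹

/-- The factor contributed by the three line bundles `O(1)`. -/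
def lineFactor (n : ℕ) : R := (∏ a ∈ Finset.range n, (varSum + ((a : R) + 1))) ^ 3

theorem constantCoeff_varSum : MvPowerSeries.constantCoeff varSum = 0 := by
  simp [varSum]

theorem constantCoeff_lineFactor (n : ℕ) :
    MvPowerSeries.constantCoeff (lineFactor n) = (n.factorial : ℚ) ^ 3 := by
  simp [lineFactor, map_prod, constantCoeff_varSum, ← Finset.prod_range_add_one_eq_factorial]

theorem monic_chernPolynomial : chernPolynomial.Monic := monic_prod_X_sub_C _ _

theorem map_constantCoeff_chernPolynomial :
    chernPolynomial.map MvPowerSeries.constantCoeff = X ^ 6 := by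
  simp [chernPolynomial, Polynomial.map_prod]

theorem isCoprime_chernPolynomial_X_add_C {r : R} (hr : MvPowerSeries.constantCoeff r ≠ 0) :
    IsCoprime chernPolynomial (X + C r) := by
  refine IsCoprime.prod_left fun i _ => ?_
  rw [← sub_neg_eq_add, ← C_neg]
  refine isCoprime_X_sub_C_of_isUnit_sub (MvPowerSeries.isUnit_iff_constantCoeff.mpr ?_)
  simpa using hr

theorem exists_chernPolynomial_dvd_sub_one (d : ℕ) : ∃ e : R[X],
    chernPolynomial ∣ e * ∏ a ∈ Finset.range d, (X + C ((a : R) + 1)) ^ 8 - 1 := by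
  obtain ⟨v, e, hve⟩ : IsCoprime chernPolynomial
      (∏ a ∈ Finset.range d, (X + C ((a : R) + 1)) ^ 8) :=
    IsCoprime.prod_right fun a _ => (isCoprime_chernPolynomial_X_add_C (by
      simpa using Nat.cast_add_one_ne_zero a)).pow_right
  exact ⟨e, -v, by linear_combination hve⟩

theorem eval_eq_inv_of_dvd {d : ℕ} {e : R[X]}
    (h : chernPolynomial ∣ e * ∏ a ∈ Finset.range d, (X + C ((a : R) + 1)) ^ 8 - 1) (i : Fin 6) :
    e.eval (MvPowerSeries.X i) =
      (∏ a ∈ Finset.range d, (MvPowerSeries.X i + ((a : R) + 1)) ^ 8)⁻¹ := by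
  have hroot := dvd_iff_isRoot.mp ((Finset.dvd_prod_of_mem
    (fun i : Fin 6 => (X - C (MvPowerSeries.X i) : R[X])) (Finset.mem_univ i)).trans h)
  have hne : MvPowerSeries.constantCoeff
      (∏ a ∈ Finset.range d, (MvPowerSeries.X i + ((a : R) + 1)) ^ 8) ≠ 0 := by
    simp [map_prod, Finset.prod_ne_zero_iff, Nat.cast_add_one_ne_zero]
  rw [IsRoot, eval_sub, eval_mul, eval_one, sub_eq_zero, eval_prod] at hroot
  simpa [MvPowerSeries.eq_inv_iff_mul_eq_one hne] using hroot

theorem exists_eval_eq_varFactor (n d : ℕ) : ∃ g : R[X],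
    (∀ i, g.eval (MvPowerSeries.X i) = varFactor n d i) ∧
      X ^ 6 ∣ g.map MvPowerSeries.constantCoeff * ∏ a ∈ Finset.range d, (X + C (a + 1 : ℚ)) ^ 8 -
        ∏ a ∈ Finset.range (n - d), (C (a + 1 : ℚ) - X) := by
  obtain ⟨e, he⟩ := exists_chernPolynomial_dvd_sub_one d
  let g : R[X] := ∏ a ∈ Finset.range (n - d), (C (varSum + ((a : R) + 1)) - X)
  have hg : g.map MvPowerSeries.constantCoeff =
      ∏ a ∈ Finset.range (n - d), (C (a + 1 : ℚ) - X) := by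
    simp [g, Polynomial.map_prod, constantCoeff_varSum]
  refine ⟨g * e, fun i => ?_, ?_⟩
  · rw [eval_mul, eval_eq_inv_of_dvd he, varFactor, eval_prod]
    simp
  · have h := map_dvd (mapRingHom MvPowerSeries.constantCoeff) he
    rw [coe_mapRingHom, map_constantCoeff_chernPolynomial] at h
    rw [Polynomial.map_mul, hg, mul_assoc, ← mul_sub_one]
    refine dvd_mul_of_dvd_right (h.trans (dvd_of_eq ?_)) _
    simp [Polynomial.map_prod]

theorem prod_sub_X_mul_prod_X_sub {n d : ℕ} (hd : d ≤ n) :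
    (∏ a ∈ Finset.range (n - d), (C (a + 1 : ℚ) - X)) *
        ∏ a ∈ Finset.range d, (X - C (n - a : ℚ)) =
      (-1) ^ d * ∏ a ∈ Finset.range n, (C (a + 1 : ℚ) - X) := by
  have hreflect : ∏ a ∈ Finset.range d, (C (((n - d + a : ℕ) : ℚ) + 1) - X) =
      (-1) ^ d * ∏ a ∈ Finset.range d, (X - C (n - a : ℚ)) := by
    rw [← Finset.prod_range_reflect]
    conv_rhs => rw [← Finset.card_range d, ← Finset.prod_const, Finset.card_range,
      ← Finset.prod_mul_distrib]
    refine Finset.prod_congr rfl fun a ha => ?_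
    have ha := Finset.mem_range.mp ha
    rw [neg_one_mul, neg_sub, show n - d + (d - 1 - a) = n - 1 - a by lia,
      Nat.cast_sub (by lia), Nat.cast_sub (by lia)]
    congr 2
    push_cast
    ring
  conv_rhs => rw [← Nat.sub_add_cancel hd, Finset.prod_range_add, hreflect]
  rw [mul_left_comm, ← mul_assoc ((-1) ^ d), ← mul_pow, neg_one_mul, neg_neg, one_pow, one_mul]

theorem X_pow_dvd_sub_of_isShiftInverse {n d : ℕ} {u : ℕ → ℚ[X]} {g : ℚ[X]}
    (hu : IsShiftInverse (nodePolynomial n) 1 n u) (hd : d ≤ n)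
    (hg : X ^ 6 ∣ g * ∏ a ∈ Finset.range d, (X + C (a + 1 : ℚ)) ^ 8 -
      ∏ a ∈ Finset.range (n - d), (C (a + 1 : ℚ) - X)) :
    X ^ 6 ∣ g - (-1) ^ d * (u d * ∏ a ∈ Finset.range n, (C (a + 1 : ℚ) - X)) := by
  have hnode : X ^ 6 ∣ u d * ((∏ a ∈ Finset.range d, (X + C (a + 1 : ℚ)) ^ 8) *
      ∏ a ∈ Finset.range d, (X - C (n - a : ℚ))) - 1 := by
    have h := hu d hd
    rw [← map_one (AdjoinRoot.mk _), AdjoinRoot.mk_eq_mk] at h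
    have hprod : ∏ a ∈ Finset.range d, taylor (1 * (a + 1) : ℚ) (nodePolynomial n) =
        (∏ a ∈ Finset.range d, (X + C (a + 1 : ℚ)) ^ 8) *
          ∏ a ∈ Finset.range d, (X - C (n - a : ℚ)) := by
      rw [← Finset.prod_mul_distrib]
      refine Finset.prod_congr rfl fun a _ => ?_
      rw [taylor_nodePolynomial, C_neg, sub_neg_eq_add, one_mul,
        show (n + 1 - (a + 1) : ℚ) = n - a by ring]
    rw [hprod] at h
    exact (Dvd.intro (X ^ 2 * (X - C (n + 1 : ℚ))) (by rw [nodePolynomial]; ring)).trans h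
  rw [mul_left_comm, ← prod_sub_X_mul_prod_X_sub hd]
  exact (dvd_sub (hg.mul_left (u d * ∏ a ∈ Finset.range d, (X - C (n - a : ℚ))))
    (hnode.mul_left g)).trans (dvd_of_eq (by ring))

theorem prod_pairs_sub (z : Fin 6 → R) :
    ∏ p ∈ pairs, (z p.1 - z p.2) = -(Matrix.vandermonde z).det := by
  have h : ∏ p ∈ pairs, (z p.2 - z p.1) = (Matrix.vandermonde z).det := by
    rw [Matrix.det_vandermonde, Finset.prod_sigma', pairs]
    refine Finset.prod_bij' (fun p _ => ⟨p.1, p.2⟩) (fun p _ => (p.1, p.2)) ?_ ?_ ?_ ?_ ?_ <;>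
      simp
  have hcard : pairs.card = 15 := by decide
  rw [← h, Finset.prod_congr rfl fun p _ => (neg_sub (z p.2) (z p.1)).symm, Finset.prod_neg, hcard]
  ring

theorem Cc_natCast (a : ℕ) : Cc (a : ℚ) = (a : R) := map_natCast MvPowerSeries.C a

theorem prod_pairs_sub_add (d : Fin 6 → ℕ) :
    ∏ p ∈ pairs, (MvPowerSeries.X p.1 - MvPowerSeries.X p.2 + Cc ((d p.1 : ℚ) - (d p.2 : ℚ))) =
      -(Matrix.vandermonde fun i => MvPowerSeries.X i + (d i : R)).det := by
  rw [← prod_pairs_sub]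
  refine Finset.prod_congr rfl fun p _ => ?_
  rw [show Cc ((d p.1 : ℚ) - (d p.2 : ℚ)) = (d p.1 : R) - (d p.2 : R) by
    rw [← Cc_natCast, ← Cc_natCast]
    exact map_sub MvPowerSeries.C _ _]
  ring

theorem ws_eq : ws = (List.ofFn fun i : Fin 6 => 1 - Pi.single i 1) ++ List.replicate 3 1 := by
  decide

/-- The factor of `T_d` contributed by the line bundle of weight `w`. -/
def weightFactor (d w : Fin 6 → ℕ) : R :=
  ∏ m ∈ Finset.Icc 1 (∑ j, w j * d j),
    ((∑ j, Cc (w j : ℚ) * MvPowerSeries.X j) + Cc (m : ℚ))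

theorem weightFactor_eq {d w : Fin 6 → ℕ} {N : ℕ} {y : R} (hd : ∑ j, w j * d j = N)
    (hy : ∑ j, (w j : R) * MvPowerSeries.X j = y) :
    weightFactor d w = ∏ a ∈ Finset.range N, (y + ((a : R) + 1)) := by
  simp only [weightFactor, hd, Cc_natCast, hy]
  rw [← Finset.Ico_add_one_right_eq_Icc, Finset.prod_Ico_eq_prod_range, Nat.add_sub_cancel]
  simp only [Nat.cast_add, Nat.cast_one, add_comm (1 : R)]

theorem weightFactor_one (d : Fin 6 → ℕ) :
    weightFactor d 1 = ∏ a ∈ Finset.range (∑ j, d j), (varSum + ((a : R) + 1)) :=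
  weightFactor_eq (by simp) (by simp [varSum])

theorem sum_one_sub_single_mul {ι A : Type*} [Fintype ι] [DecidableEq ι] [CommRing A] (i : ι)
    (y : ι → A) : ∑ j, ((1 - Pi.single i 1 : ι → ℕ) j : A) * y j = ∑ j, y j - y i := by
  rw [← Finset.add_sum_erase _ y (Finset.mem_univ i), add_sub_cancel_left,
    ← Finset.add_sum_erase _ _ (Finset.mem_univ i)]
  simp only [Pi.sub_apply, Pi.one_apply, Pi.single_eq_same, Nat.sub_self, Nat.cast_zero, zero_mul,
    zero_add]
  refine Finset.sum_congr rfl fun j hj => ?_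
  rw [Pi.single_eq_of_ne (Finset.ne_of_mem_erase hj), Nat.sub_zero, Nat.cast_one, one_mul]

theorem weightFactor_one_sub_single (d : Fin 6 → ℕ) (i : Fin 6) :
    weightFactor d (1 - Pi.single i 1) =
      ∏ a ∈ Finset.range (∑ j, d j - d i), (varSum + ((a : R) + 1) - MvPowerSeries.X i) := by
  have hsum : ∑ j, (1 - Pi.single i 1 : Fin 6 → ℕ) j * d j = ∑ j, d j - d i := by
    have hle : d i ≤ ∑ j, d j := Finset.single_le_sum_of_canonicallyOrdered (Finset.mem_univ i)
    zify [hle]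
    exact sum_one_sub_single_mul i fun j => (d j : ℤ)
  rw [weightFactor_eq hsum (sum_one_sub_single_mul i MvPowerSeries.X), varSum]
  exact Finset.prod_congr rfl fun a _ => by ring

theorem inv_prod_eq_prod_inv {σ ι K : Type*} [Field K] (s : Finset ι) (u : ι → MvPowerSeries σ K) :
    (∏ j ∈ s, u j)⁻¹ = ∏ j ∈ s, (u j)⁻¹ := by
  classical
  induction s using Finset.induction_on with
  | empty =>
    rw [Finset.prod_empty, Finset.prod_empty, MvPowerSeries.inv_eq_iff_mul_eq_one] <;> simp
  | insert a s ha ih =>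
    rw [Finset.prod_insert ha, Finset.prod_insert ha, MvPowerSeries.mul_inv_rev, ih, mul_comm]

theorem T_eq {d : Fin 6 → ℕ} {N : ℕ} (hd : ∑ j, d j = N) :
    T d = -(lineFactor N * ((Matrix.vandermonde fun i => MvPowerSeries.X i + (d i : R)).det *
      ∏ i, varFactor N (d i) i)) := by
  have hinv : (∏ j, ∏ m ∈ Finset.Icc 1 (d j), (MvPowerSeries.X j + Cc (m : ℚ)) ^ n)⁻¹ =
      ∏ j, (∏ a ∈ Finset.range (d j), (MvPowerSeries.X j + ((a : R) + 1)) ^ 8)⁻¹ := by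
    rw [inv_prod_eq_prod_inv]
    refine Finset.prod_congr rfl fun j _ => ?_
    simp only [← Finset.Ico_add_one_right_eq_Icc, Finset.prod_Ico_eq_prod_range,
      Nat.add_sub_cancel, Cc_natCast, Nat.cast_add, Nat.cast_one, add_comm (1 : R), n]
  have hws : (ws.map (weightFactor d)).prod = (∏ i, ∏ a ∈ Finset.range (N - d i),
      (varSum + ((a : R) + 1) - MvPowerSeries.X i)) * lineFactor N := by
    rw [ws_eq, List.map_append, List.prod_append, List.map_replicate, List.prod_replicate,
      weightFactor_one, List.map_ofFn, List.prod_ofFn, lineFactor, hd]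
    simp only [Function.comp_apply, weightFactor_one_sub_single, hd]
  calc T d = _ * (ws.map (weightFactor d)).prod * _ := rfl
    _ = _ := by
      rw [prod_pairs_sub_add, hws, hinv]
      simp only [varFactor, Finset.prod_mul_distrib]
      ring

theorem F_eq (N : ℕ) : F N = -(lineFactor N * PowerSeries.coeff N (Matrix.of fun i c : Fin 6 =>
    PowerSeries.mk fun d => (MvPowerSeries.X i + (d : R)) ^ (c : ℕ) * varFactor N d i).det) := by
  rw [F, coeff_det_mk_pow_mul, Finset.mul_sum, ← Finset.sum_neg_distrib]
  exact Finset.sum_congr rfl fun d hd => T_eq (Finset.mem_filter.mp hd).2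

theorem Vand_ne_zero : Vand ≠ 0 := by
  refine Finset.prod_ne_zero_iff.mpr fun p hp => sub_ne_zero.mpr fun h => ?_
  exact (Finset.mem_filter.mp hp).2.ne (MvPowerSeries.X_inj.mp h)

theorem coeff_det_mk_coeff_eq {N : ℕ} {g : ℕ → ℚ[X]}
    (hg : ∀ d, X ^ 6 ∣ g d * ∏ a ∈ Finset.range d, (X + C (a + 1 : ℚ)) ^ 8 -
      ∏ a ∈ Finset.range (N - d), (C (a + 1 : ℚ) - X)) :
    (N.factorial : ℚ) ^ 3 * PowerSeries.coeff N (Matrix.of fun c l : Fin 6 =>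
      PowerSeries.mk fun d => ((X + C (d : ℚ)) ^ (c : ℕ) * g d).coeff l).det =
    (-1) ^ N * solutionCoeff N := by
  obtain ⟨u, hu⟩ := exists_isShiftInverse fun a ha => isCoprime_taylor_nodePolynomial (n := N) ha
  let U : ℚ[X] := ∏ a ∈ Finset.range N, (C (a + 1 : ℚ) - X)
  let M : Matrix (Fin 6) (Fin 6) (PowerSeries ℚ) := Matrix.of fun c l =>
    PowerSeries.mk fun d => ((X + C (d : ℚ)) ^ (c : ℕ) * u d).coeff l
  have hU : U.coeff 0 = N.factorial := by
    simp [U, coeff_zero_eq_eval_zero, eval_prod, ← Finset.prod_range_add_one_eq_factorial]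
  have hM : M = (shiftMatrix (nodePolynomial N) u 9).submatrix
      (Fin.castAdd 3) (Fin.castAdd 3) := by
    refine Matrix.ext fun c l => PowerSeries.ext fun d => ?_
    rw [Matrix.submatrix_apply, coeff_shiftMatrix, nodePolynomial,
      show (X ^ 8 * (X - C (N + 1 : ℚ)) : ℚ[X]) = X ^ 6 * (X ^ 2 * (X - C (N + 1 : ℚ))) by ring,
      Fin.val_castAdd, Fin.val_castAdd, remainderCoeff_X_pow_mul l.is_lt]
    simp only [M, Matrix.of_apply, PowerSeries.coeff_mk]
  have hcoeff : PowerSeries.coeff N (Matrix.of fun c l : Fin 6 =>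
      PowerSeries.mk fun d => ((X + C (d : ℚ)) ^ (c : ℕ) * g d).coeff l).det =
      PowerSeries.coeff N (PowerSeries.rescale (-1 : ℚ) (Matrix.of fun c l : Fin 6 =>
        PowerSeries.mk fun d => ((X + C (d : ℚ)) ^ (c : ℕ) * u d * U).coeff l).det) := by
    rw [RingHom.map_det]
    refine coeff_det_congr fun c l d hd => ?_
    simp only [RingHom.mapMatrix_apply, Matrix.map_apply, Matrix.of_apply, PowerSeries.coeff_mk,
      PowerSeries.coeff_rescale]
    have hdvd := X_pow_dvd_sub_of_isShiftInverse hu hd (hg d)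
    rw [coeff_eq_of_X_pow_dvd_sub (g := C ((-1) ^ d) * ((X + C (d : ℚ)) ^ (c : ℕ) * u d * U))
      (hdvd.trans ⟨(X + C (d : ℚ)) ^ (c : ℕ), ?_⟩) l.is_lt, coeff_C_mul]
    rw [C_pow, C_neg, C_1]
    ring
  rw [hcoeff, PowerSeries.coeff_rescale, det_mk_coeff_mul, PowerSeries.coeff_mul_C, hU,
    ← coeff_det_shiftMatrix_nodePolynomial hu, ← hM]
  ring

theorem exists_F_eq (N : ℕ) : ∃ G : R, F N = Vand * G ∧
    (-1 : ℚ) ^ N * MvPowerSeries.constantCoeff G = solutionCoeff N := by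
  choose g hg hg' using fun d => exists_eval_eq_varFactor N d
  let M : Matrix (Fin 6) (Fin 6) (PowerSeries R) := Matrix.of fun c l => PowerSeries.mk fun d =>
    remainderCoeff chernPolynomial l ((X + C (d : R)) ^ (c : ℕ) * g d)
  have hF : F N = Vand * (lineFactor N * PowerSeries.coeff N M.det) := by
    have h := coeff_det_mk_eval MvPowerSeries.X
      (fun c d => (X + C (d : R)) ^ (c : ℕ) * g d : Fin 6 → ℕ → R[X]) N
    simp only [eval_mul, eval_pow, eval_add, eval_X, eval_C, hg] at h
    rw [F_eq, h, Vand, prod_pairs_sub]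
    simp only [M, chernPolynomial]
    ring
  have hconst : MvPowerSeries.constantCoeff (PowerSeries.coeff N M.det) =
      PowerSeries.coeff N (Matrix.of fun c l : Fin 6 => PowerSeries.mk fun d =>
        ((X + C (d : ℚ)) ^ (c : ℕ) * (g d).map MvPowerSeries.constantCoeff).coeff l).det := by
    rw [← PowerSeries.coeff_map, RingHom.map_det]
    refine congrArg _ (congrArg _ (Matrix.ext fun c l => PowerSeries.ext fun d => ?_))
    simp only [M, RingHom.mapMatrix_apply, Matrix.map_apply, Matrix.of_apply,
      PowerSeries.coeff_map, PowerSeries.coeff_mk]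
    rw [← remainderCoeff_map _ monic_chernPolynomial, map_constantCoeff_chernPolynomial,
      ← mul_one (X ^ 6), remainderCoeff_X_pow_mul l.is_lt]
    simp
  refine ⟨_, hF, ?_⟩
  rw [map_mul, constantCoeff_lineFactor, hconst, coeff_det_mk_coeff_eq hg', ← mul_assoc,
    ← mul_pow, neg_one_mul, neg_neg, one_pow, one_mul]

theorem constantCoeff_quotient {N : ℕ} {G : R} (hG : F N = Vand * G) :
    (-1 : ℚ) ^ N * MvPowerSeries.constantCoeff G = solutionCoeff N := by
  obtain ⟨G', hG', hconst⟩ := exists_F_eq N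
  rwa [mul_left_cancel₀ Vand_ne_zero (hG.symm.trans hG')]

end Quotient

end DualDeterminant

/-- every `F_δ` is divisible by the Vandermonde `Δ`, and the series
`I₀ = Σ a_δ q^δ` with `a_δ = (−1)^δ·(F_δ/Δ)(0)` is annihilated by the stated
Picard–Fuchs operator. -/
theorem stmt_9 :
    (∀ δ : ℕ, ∃ G : R, F δ = Vand * G) ∧
    (∀ G : ℕ → R, (∀ δ : ℕ, F δ = Vand * G δ) →
      ∀ I₀ : PowerSeries ℚ,
        I₀ = PowerSeries.mk (fun δ => (-1 : ℚ) ^ δ * MvPowerSeries.constantCoeff (G δ)) →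
        361 * th^[4] I₀ - 19 * PowerSeries.X * (700 * th^[4] I₀ + 1238 * th^[3] I₀ + 999 * th^[2] I₀ + 380 * th I₀ + 57 * I₀) + PowerSeries.X ^ 2 * (-64745 * th^[4] I₀ - 368006 * th^[3] I₀ - 609133 * th^[2] I₀ - 412756 * th I₀ - 102258 * I₀) + 27 * PowerSeries.X ^ 3 * (6397 * th^[4] I₀ + 12198 * th^[3] I₀ - 11923 * th^[2] I₀ - 27360 * th I₀ - 11286 * I₀) + 729 * PowerSeries.X ^ 4 * (64 * th^[4] I₀ + 1154 * th^[3] I₀ + 2425 * th^[2] I₀ + 1848 * th I₀ + 486 * I₀) - 177147 * PowerSeries.X ^ 5 * ((fun g => th g + g) ((fun g => th g + g) ((fun g => th g + g) ((fun g => th g + g) (I₀))))) = 0) := by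
  refine ⟨fun δ => (exists_F_eq δ).imp fun _ h => h.1, fun G hG I₀ hI => ?_⟩
  obtain rfl : I₀ = PowerSeries.mk solutionCoeff :=
    hI.trans (congrArg PowerSeries.mk (funext fun δ => constantCoeff_quotient (hG δ)))
  exact picardFuchs_solutionCoeff

end Stmt9
end
end

section
/- Take k = 3, n = 6 and the weight vectors w¹ = (1,1,0), w² = (1,0,1), w³ = (0,1,1), w⁴ = w⁵ = (1,1,1), w⁶ = (2,2,2) in the Vandermonde-quotient construction. Then for every δ ≥ 0 the power series F_δ ∈ ℚ[[x₁,x₂,x₃]] is divisible by Δ = (x₁−x₂)(x₁−x₃)(x₂−x₃), and the resulting series I₀(q) = Σ_{δ≥0} a_δ q^δ with a_δ = (F_δ/Δ)(0) satisfies {θ⁴ − 8q(2θ+1)²(3θ²+3θ+1) + 64q²(θ+1)²(2θ+1)(2θ+3)} I₀ = 0. -/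
noncomputable section
namespace Stmt10

/-- The multivariable power series ring `ℚ[[x₁,…,x_3]]`. -/
abbrev R := MvPowerSeries (Fin 3) ℚ

/-- The constant `a` in `R`. -/
def Cc (a : ℚ) : R := MvPowerSeries.C a

/-- The pairs `i < j`. -/
def pairs : Finset (Fin 3 × Fin 3) := Finset.univ.filter fun p => p.1 < p.2

/-- The Vandermonde element `Δ = ∏_{i<j}(x_i − x_j)`. -/
def Vand : R := ∏ p ∈ pairs, (MvPowerSeries.X p.1 - MvPowerSeries.X p.2)

/-- The weight vectors. -/
def ws : List (Fin 3 → ℕ) := [![1, 1, 0], ![1, 0, 1], ![0, 1, 1], ![1, 1, 1], ![1, 1, 1], ![2, 2, 2]]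

/-- `n = 6`. -/
def n : ℕ := 6

/-- The term `T_d` of the Vandermonde-quotient construction:
`T_d = ∏_{i<j}(x_i−x_j+d_i−d_j) · ∏_s ∏_{m=1}^{⟨wˢ,d⟩}(⟨wˢ,x⟩+m) · u_d⁻¹`. -/
def T (d : Fin 3 → ℕ) : R :=
  (∏ p ∈ pairs,
      (MvPowerSeries.X p.1 - MvPowerSeries.X p.2 + Cc ((d p.1 : ℚ) - (d p.2 : ℚ)))) *
    (ws.map fun w =>
      ∏ m ∈ Finset.Icc 1 (∑ j, w j * d j),
        ((∑ j, Cc ((w j : ℚ)) * MvPowerSeries.X j) + Cc (m : ℚ))).prod *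
    (∏ j, ∏ m ∈ Finset.Icc 1 (d j), (MvPowerSeries.X j + Cc (m : ℚ)) ^ n)⁻¹

/-- `F_δ = Σ_{d₁+⋯+d_k=δ} T_d`. -/
def F (δ : ℕ) : R :=
  ∑ d ∈ (Fintype.piFinset fun _ : Fin 3 => Finset.range (δ + 1)).filter
      (fun d => ∑ j, d j = δ), T d

/-- The Euler operator `θ = q·d/dq` on `ℚ[[q]]`. -/
def th (f : PowerSeries ℚ) : PowerSeries ℚ :=
  PowerSeries.mk fun d => (d : ℚ) * PowerSeries.coeff d f

/-!
Modulo `x_i - x_j`, exchanging `d_i` and `d_j` negates `T_d`, so `F_δ` vanishes there; as the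
`x_i - x_j` are pairwise non-associated primes, their product `Δ` divides `F_δ`.

For the differential equation put `y = x + d`. Up to a factor depending only on `x₁ + x₂ + x₃` and
`|d|`, the product of `T_d` with `∏_{i<j} (x_i + x_j)` is the Vandermonde product of
`y₁², y₂², y₃²` times a weight whose shift in the direction `d_i` multiplies it by
`(y₁ + y₂) (y₁ + y₃) (y₂ + y₃) / ((y_i + 1)⁶ (y_{i+1} + y_{i+2}))`. Summation by parts therefore
relates the moments of symmetric functions of `y` over `|d| = m + 1` to those over `|d| = m`,
with boundary terms divisible by some `x_i⁶ (x_{i+1} + x_{i+2})`, of degree `7`. Truncating in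
degree `7` kills them and still sees the constant term of `F_δ / Δ`, because
`Δ ∏_{i<j} (x_i + x_j)` has degree `6`. Eliminating the moments of `e₂` and `e₃` leaves a
three-term recurrence for the moments of `1`, which is the Picard–Fuchs equation.
-/

lemma prod_dvd_of_prime {ι M : Type*} [CommMonoidWithZero M] {s : Finset ι} {f : ι → M} {a : M}
    (hprime : ∀ i ∈ s, Prime (f i)) (hf : (s : Set ι).Pairwise fun i j => ¬ f i ∣ f j)
    (ha : ∀ i ∈ s, f i ∣ a) : ∏ i ∈ s, f i ∣ a := by
  classical
  induction s using Finset.induction_on with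
  | empty => exact one_dvd a
  | insert i s his ih =>
    rw [Finset.coe_insert] at hf
    simp only [Finset.forall_mem_insert] at hprime ha
    obtain ⟨b, rfl⟩ := ih hprime.2 (hf.mono (Set.subset_insert ..)) ha.2
    rw [Finset.prod_insert his, mul_comm]
    refine mul_dvd_mul_left _ <| (hprime.1.dvd_or_dvd ha.1).resolve_left fun h => ?_
    obtain ⟨j, hj, hij⟩ := (hprime.1.dvd_finsetProd_iff f).1 h
    exact hf (Set.mem_insert ..) (Set.mem_insert_of_mem _ hj) (ne_of_mem_of_not_mem hj his).symm hij

section LinearForms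

open MvPowerSeries

variable {σ k : Type*} [CommRing k]

lemma X_dvd_iff_one_le_weightedOrder [DecidableEq σ] (i : σ) (f : MvPowerSeries σ k) :
    X i ∣ f ↔ 1 ≤ f.weightedOrder (Pi.single i 1) := by
  rw [X_dvd_iff]
  constructor
  · refine fun hf => nat_le_weightedOrder _ fun d hd => hf d ?_
    rwa [Finsupp.weight_single_one_apply, Nat.lt_one_iff] at hd
  · refine fun hf d hd => coeff_eq_zero_of_lt_weightedOrder (Pi.single i 1) (lt_of_lt_of_le ?_ hf)
    rw [Finsupp.weight_single_one_apply, hd]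
    exact zero_lt_one

lemma prime_X [IsDomain k] (i : σ) : Prime (X i : MvPowerSeries σ k) := by
  classical
  refine ⟨nonZeroDivisors.ne_zero X_mem_nonzeroDivisors, ?_, fun f g hfg => ?_⟩
  · rw [isUnit_iff_constantCoeff, constantCoeff_X]
    exact not_isUnit_zero
  · simpa only [X_dvd_iff_one_le_weightedOrder, weightedOrder_mul, Order.one_le_iff_ne_zero, ne_eq,
      add_eq_zero, not_and_or] using hfg

variable [Finite σ] [DecidableEq σ]

lemma hasSubst_update_X (i : σ) {f : MvPowerSeries σ k} (hf : constantCoeff f = 0) :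
    HasSubst (Function.update X i f) := by
  refine hasSubst_of_constantCoeff_zero fun s => ?_
  rcases eq_or_ne s i with rfl | hs
  · rwa [Function.update_self]
  · rw [Function.update_of_ne hs, constantCoeff_X]

/-- The substitution `X i ↦ f`, fixing the other variables. -/
def substVar (i : σ) (f : MvPowerSeries σ k) (hf : constantCoeff f = 0) :
    MvPowerSeries σ k →ₐ[k] MvPowerSeries σ k :=
  substAlgHom (hasSubst_update_X i hf)

lemma substVar_X (i : σ) {f : MvPowerSeries σ k} (hf : constantCoeff f = 0) (s : σ) :
    substVar i f hf (X s) = Function.update X i f s :=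
  substAlgHom_X _ s

lemma substVar_substVar (i : σ) {f g : MvPowerSeries σ k} (hf : constantCoeff f = 0)
    (hg : constantCoeff g = 0) (hgf : substVar i g hg f = X i) (h : MvPowerSeries σ k) :
    substVar i g hg (substVar i f hf h) = h := by
  have hX (s : σ) : subst (Function.update X i g) (Function.update X i f s) = X s := by
    rcases eq_or_ne s i with rfl | hs
    · rwa [Function.update_self, ← substAlgHom_apply (hasSubst_update_X s hg)]
    · rw [Function.update_of_ne hs, subst_X (hasSubst_update_X i hg), Function.update_of_ne hs]
  rw [substVar, substVar, substAlgHom_apply, substAlgHom_apply,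
    subst_comp_subst_apply (hasSubst_update_X i hf) (hasSubst_update_X i hg), funext hX,
    subst_self, id]

omit [DecidableEq σ] in
lemma prime_X_sub_X [IsDomain k] {i j : σ} (hij : i ≠ j) :
    Prime (X i - X j : MvPowerSeries σ k) := by
  classical
  have hsub : constantCoeff (X i - X j : MvPowerSeries σ k) = 0 := by simp
  have hadd : constantCoeff (X i + X j : MvPowerSeries σ k) = 0 := by simp
  let shear : MvPowerSeries σ k ≃ₐ[k] MvPowerSeries σ k := AlgEquiv.ofAlgHom
    (substVar i (X i - X j) hsub) (substVar i (X i + X j) hadd)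
    (AlgHom.ext <| substVar_substVar i hadd hsub <| by simp [substVar_X, hij.symm])
    (AlgHom.ext <| substVar_substVar i hsub hadd <| by simp [substVar_X, hij.symm])
  have hshear : shear (X i) = X i - X j := (substVar_X i hsub i).trans (Function.update_self ..)
  exact hshear ▸ (MulEquiv.prime_iff shear).2 (prime_X i)

lemma not_X_sub_X_dvd_X_sub_X [Nontrivial k] {i j a b : σ}
    (hab : Function.update id i j a ≠ Function.update id i j b) :
    ¬ (X i - X j : MvPowerSeries σ k) ∣ X a - X b := by
  intro hdvd
  let collapse := substVar i (X j : MvPowerSeries σ k) (constantCoeff_X j)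
  have hcollapse (s : σ) : collapse (X s) = X (Function.update id i j s) := by
    simp only [collapse, substVar_X, Function.update_apply, id, apply_ite X]
  have hzero : collapse (X i - X j) = 0 := by
    simp only [map_sub, hcollapse, Function.update_apply, id, if_true, ite_self, sub_self]
  have himage := map_dvd collapse hdvd
  rw [hzero, zero_dvd_iff, map_sub, hcollapse, hcollapse, sub_eq_zero, X_inj] at himage
  exact hab himage

end LinearForms

section Terms

variable {B C : Type*} [CommRing B] [CommRing C]

/-- The rising product `x (x + 1) ⋯ (x + m - 1)`. -/
def rising (x : B) (m : ℕ) : B := (ascPochhammer B m).eval x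

lemma rising_zero (x : B) : rising x 0 = 1 := by
  rw [rising, ascPochhammer_zero, Polynomial.eval_one]

lemma rising_succ (x : B) (m : ℕ) : rising x (m + 1) = rising x m * (x + m) :=
  ascPochhammer_succ_eval m x

lemma rising_succ_left (x : B) (m : ℕ) : rising x (m + 1) = x * rising (x + 1) m := by
  simp [rising, ascPochhammer_succ_left]

lemma rising_one (m : ℕ) : rising (1 : B) m = m.factorial := ascPochhammer_eval_one B m

lemma map_rising (φ : B →+* C) (x : B) (m : ℕ) : φ (rising x m) = rising (φ x) m := by
  rw [rising, rising, ← ascPochhammer_map φ, Polynomial.eval_map_apply]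

lemma prod_Icc_add_natCast (x : B) (m : ℕ) : ∏ k ∈ Finset.Icc 1 m, (x + k) = rising (x + 1) m := by
  induction m with
  | zero => rw [rising_zero, Finset.Icc_eq_empty (by decide), Finset.prod_empty]
  | succ m ih =>
    rw [Finset.prod_Icc_succ_top (by lia), ih, rising_succ]
    push_cast
    ring

/-- The Vandermonde product `∏_{i<j} (y i - y j)`. -/
def vandermonde (y : Fin 3 → B) : B := ∏ p ∈ pairs, (y p.1 - y p.2)

lemma vandermonde_eq (y : Fin 3 → B) :
    vandermonde y = (y 0 - y 1) * (y 0 - y 2) * (y 1 - y 2) := by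
  have hpairs : pairs = {(0, 1), (0, 2), (1, 2)} := by decide
  rw [vandermonde, hpairs, Finset.prod_insert (by decide), Finset.prod_pair (by decide), mul_assoc]

lemma vandermonde_comp_perm (σ : Equiv.Perm (Fin 3)) (y : Fin 3 → B) :
    vandermonde (y ∘ σ) = Equiv.Perm.sign σ * vandermonde y := by
  have hdet (z : Fin 3 → B) : vandermonde z = -(Matrix.vandermonde z).det := by
    rw [vandermonde_eq, Matrix.det_fin_three]
    simp only [Matrix.vandermonde_apply, Fin.val_zero, Fin.val_one, Fin.val_two]
    ring
  rw [hdet, hdet, mul_neg, ← Matrix.det_permute]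
  rfl

/-- The product `(y 0 + y 1) (y 0 + y 2) (y 1 + y 2)` of the weights of `Λ²S*`. -/
def pairSum (y : Fin 3 → B) : B := ∏ i, (y (i + 1) + y (i + 2))

lemma vandermonde_sq (y : Fin 3 → B) : vandermonde (y ^ 2) = vandermonde y * pairSum y := by
  simp only [vandermonde_eq, pairSum, Fin.prod_univ_three, Pi.pow_apply, Fin.reduceAdd]
  ring

lemma prod_pair_comp_perm (g : Fin 3 → Fin 3 → B) (hg : ∀ i j, g i j = g j i)
    (σ : Equiv.Perm (Fin 3)) : ∏ i, g (σ (i + 1)) (σ (i + 2)) = ∏ i, g (i + 1) (i + 2) := by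
  have hcompl (i : Fin 3) : (σ (i + 1) = σ i + 1 ∧ σ (i + 2) = σ i + 2) ∨
      (σ (i + 1) = σ i + 2 ∧ σ (i + 2) = σ i + 1) := by
    revert σ i
    decide
  rw [← Equiv.prod_comp σ fun i => g (i + 1) (i + 2)]
  refine Finset.prod_congr rfl fun i _ => ?_
  rcases hcompl i with ⟨h₁, h₂⟩ | ⟨h₁, h₂⟩
  · rw [h₁, h₂]
  · rw [h₁, h₂, hg]

/-- The factor of `T d` contributed by `O(1)^{⊕2} ⊕ O(2)`, as a function of `e = x₁ + x₂ + x₃`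
and `m = d₁ + d₂ + d₃`. -/
def twist (e : B) (m : ℕ) : B := rising (e + 1) m ^ 2 * rising (2 * e + 1) (2 * m)

/-- The numerator of `T d`, at a point `x` of a commutative ring. -/
def numer (x : Fin 3 → B) (d : Fin 3 → ℕ) : B :=
  vandermonde (fun i => x i + d i) *
    (∏ i, rising (x (i + 1) + x (i + 2) + 1) (d (i + 1) + d (i + 2))) *
    twist (∑ i, x i) (∑ i, d i)

/-- The denominator `u_d` of `T d`, at a point `x` of a commutative ring. -/
def denom (x : Fin 3 → B) (d : Fin 3 → ℕ) : B := ∏ i, rising (x i + 1) (d i) ^ 6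

lemma map_twist (φ : B →+* C) (e : B) (m : ℕ) : φ (twist e m) = twist (φ e) m := by
  simp only [twist, map_mul, map_pow, map_rising, map_add, map_one, map_ofNat]

lemma map_numer (φ : B →+* C) (x : Fin 3 → B) (d : Fin 3 → ℕ) :
    φ (numer x d) = numer (φ ∘ x) d := by
  simp only [numer, vandermonde, map_mul, map_prod, map_sub, map_twist, map_rising, map_add,
    map_one, map_natCast, map_sum, Function.comp_apply]

lemma map_denom (φ : B →+* C) (x : Fin 3 → B) (d : Fin 3 → ℕ) :
    φ (denom x d) = denom (φ ∘ x) d := by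
  simp only [denom, map_prod, map_pow, map_rising, map_add, map_one, Function.comp_apply]

lemma numer_comp_perm (σ : Equiv.Perm (Fin 3)) (x : Fin 3 → B) (d : Fin 3 → ℕ) :
    numer (x ∘ σ) (d ∘ σ) = Equiv.Perm.sign σ * numer x d := by
  have hpair := prod_pair_comp_perm (fun i j => rising (x i + x j + 1) (d i + d j))
    (fun i j => by rw [add_comm (x i), add_comm (d i)]) σ
  have hvand := vandermonde_comp_perm σ fun i => x i + (d i : B)
  simp only [numer, Function.comp_apply, hpair, Equiv.sum_comp σ x, Equiv.sum_comp σ d]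
  rw [← mul_assoc, ← mul_assoc, ← hvand]
  rfl

lemma denom_comp_perm (σ : Equiv.Perm (Fin 3)) (x : Fin 3 → B) (d : Fin 3 → ℕ) :
    denom (x ∘ σ) (d ∘ σ) = denom x d :=
  Equiv.prod_comp σ fun i => rising (x i + 1) (d i) ^ 6

end Terms

section Divisibility

open MvPowerSeries

/-- The shifted point `x + d` over the power series ring. -/
def shift (d : Fin 3 → ℕ) (i : Fin 3) : R := X i + (d i : R)

lemma constantCoeff_denom_ne_zero (d : Fin 3 → ℕ) :
    constantCoeff (denom (X : Fin 3 → R) d) ≠ 0 := by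
  simp only [denom, map_prod, map_pow, map_rising, map_add, constantCoeff_X, map_one, zero_add,
    rising_one]
  positivity

lemma denom_eq_prod (d : Fin 3 → ℕ) :
    denom (X : Fin 3 → R) d = ∏ j, ∏ m ∈ Finset.Icc 1 (d j), (X j + Cc (m : ℚ)) ^ n := by
  simp only [denom, n, Cc, map_natCast, Finset.prod_pow, prod_Icc_add_natCast]

lemma prod_ws_eq (d : Fin 3 → ℕ) :
    (ws.map fun w => ∏ m ∈ Finset.Icc 1 (∑ j, w j * d j),
      ((∑ j, Cc (w j : ℚ) * X j) + Cc (m : ℚ))).prod =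
    (∏ i, rising (X (i + 1) + X (i + 2) + 1) (d (i + 1) + d (i + 2))) *
      twist (∑ i, X i : R) (∑ i, d i) := by
  have hpair : rising (X 0 + X 2 + 1 : R) (d 0 + d 2) = rising (X 2 + X 0 + 1) (d 2 + d 0) := by
    rw [add_comm (X 0), add_comm (d 0)]
  simp [ws, Cc, prod_Icc_add_natCast, Fin.sum_univ_three, Fin.prod_univ_three, twist, hpair,
    mul_add]
  ring

lemma T_mul_denom (d : Fin 3 → ℕ) : T d * denom X d = numer X d := by
  have hvand : ∏ p ∈ pairs, (X p.1 - X p.2 + Cc ((d p.1 : ℚ) - d p.2)) =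
      vandermonde (shift d) := by
    refine Finset.prod_congr rfl fun p _ => ?_
    rw [shift, shift, Cc, map_sub, map_natCast, map_natCast, add_sub_add_comm]
  rw [T, ← denom_eq_prod, mul_assoc,
    MvPowerSeries.inv_mul_cancel _ (constantCoeff_denom_ne_zero d), mul_one, hvand, prod_ws_eq,
    numer, mul_assoc]
  rfl

lemma F_eq_sum (δ : ℕ) : F δ = ∑ d ∈ Finset.piAntidiag Finset.univ δ, T d := by
  rw [F]
  congr 1
  ext d
  simp only [Finset.mem_filter, Fintype.mem_piFinset, Finset.mem_range, Finset.mem_piAntidiag,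
    Finset.mem_univ, implies_true, and_true, and_iff_right_iff_imp]
  rintro rfl i
  exact Nat.lt_succ_of_le (Finset.single_le_sum (fun _ _ => Nat.zero_le _) (Finset.mem_univ i))

lemma sum_piAntidiag_comp_perm {ι M : Type*} [Fintype ι] [DecidableEq ι] [AddCommMonoid M]
    (σ : Equiv.Perm ι) (f : (ι → ℕ) → M) (m : ℕ) :
    ∑ d ∈ Finset.piAntidiag Finset.univ m, f (d ∘ σ) =
      ∑ d ∈ Finset.piAntidiag Finset.univ m, f d := by
  have hmem (τ : Equiv.Perm ι) (d : ι → ℕ) (hd : d ∈ Finset.piAntidiag Finset.univ m) :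
      d ∘ τ ∈ Finset.piAntidiag Finset.univ m := by
    simpa [Equiv.sum_comp τ d] using hd
  exact Finset.sum_nbij' (· ∘ σ) (· ∘ σ.symm) (hmem σ) (hmem σ.symm)
    (fun d _ => funext fun k => by simp) (fun d _ => funext fun k => by simp) fun _ _ => rfl

variable {B : Type*} [CommRing B] (φ : R →+* B)

lemma map_T_comp_perm (σ : Equiv.Perm (Fin 3)) (hσ : (φ ∘ X) ∘ σ = φ ∘ X) (d : Fin 3 → ℕ) :
    φ (T (d ∘ σ)) = Equiv.Perm.sign σ * φ (T d) := by
  have hunit : IsUnit (denom (φ ∘ X) d) := by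
    rw [← map_denom]
    exact (isUnit_iff_constantCoeff.2 (constantCoeff_denom_ne_zero d).isUnit).map φ
  have hT (d : Fin 3 → ℕ) : φ (T d) * denom (φ ∘ X) d = numer (φ ∘ X) d := by
    rw [← map_denom, ← map_mul, T_mul_denom, map_numer]
  apply hunit.mul_right_cancel
  calc φ (T (d ∘ σ)) * denom (φ ∘ X) d = φ (T (d ∘ σ)) * denom (φ ∘ X) (d ∘ σ) := by
        conv_rhs => rw [← hσ, denom_comp_perm]
    _ = numer (φ ∘ X) (d ∘ σ) := hT _
    _ = Equiv.Perm.sign σ * numer (φ ∘ X) d := by rw [← numer_comp_perm, hσ]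
    _ = Equiv.Perm.sign σ * φ (T d) * denom (φ ∘ X) d := by rw [mul_assoc, hT]

lemma map_F_eq_zero {i j : Fin 3} (hij : i ≠ j) (hX : φ (X i) = φ (X j)) (δ : ℕ) :
    φ (F δ) = 0 := by
  have hσ : (φ ∘ X) ∘ Equiv.swap i j = φ ∘ X := by
    funext k
    simp only [Function.comp_apply, Equiv.swap_apply_def]
    split_ifs with hi hj
    · rw [hi, hX]
    · rw [hj, hX]
    · rfl
  have hneg : φ (F δ) = -φ (F δ) := by
    conv_lhs => rw [F_eq_sum, ← sum_piAntidiag_comp_perm (Equiv.swap i j), map_sum]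
    simp only [map_T_comp_perm φ _ hσ, Equiv.Perm.sign_swap hij, Units.val_neg, Units.val_one,
      Int.cast_neg, Int.cast_one, neg_one_mul, Finset.sum_neg_distrib, F_eq_sum, map_sum]
  have htwo : φ (C 2⁻¹) * φ 2 = 1 := by
    rw [← map_mul, ← map_ofNat C 2, ← map_mul, inv_mul_cancel₀ two_ne_zero, map_one, map_one]
  calc φ (F δ) = φ (C 2⁻¹) * φ 2 * φ (F δ) := by rw [htwo, one_mul]
    _ = φ (C 2⁻¹) * (φ (F δ) + φ (F δ)) := by rw [map_ofNat]; ring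
    _ = 0 := by nth_rw 1 [hneg]; rw [neg_add_cancel, mul_zero]

lemma X_sub_X_dvd_F {i j : Fin 3} (hij : i ≠ j) (δ : ℕ) : (X i - X j : R) ∣ F δ := by
  rw [← Ideal.mem_span_singleton, ← Ideal.Quotient.eq_zero_iff_mem]
  refine map_F_eq_zero _ hij ?_ δ
  rw [Ideal.Quotient.eq, Ideal.mem_span_singleton]

lemma Vand_dvd_F (δ : ℕ) : Vand ∣ F δ := by
  have hlt {p : Fin 3 × Fin 3} (hp : p ∈ pairs) : p.1 ≠ p.2 := (Finset.mem_filter.1 hp).2.ne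
  refine prod_dvd_of_prime (fun p hp => prime_X_sub_X (hlt hp)) ?_
    fun p hp => X_sub_X_dvd_F (hlt hp) δ
  have hcollapse : ∀ p ∈ pairs, ∀ q ∈ pairs, p ≠ q →
      Function.update id p.1 p.2 q.1 ≠ Function.update id p.1 p.2 q.2 := by decide
  exact fun p hp q hq hpq => not_X_sub_X_dvd_X_sub_X (hcollapse p hp q hq hpq)

end Divisibility

section Telescoping

open MvPowerSeries

lemma sum_piAntidiag_succ {ι M : Type*} [Fintype ι] [DecidableEq ι] [AddCommMonoid M] (i : ι)
    (f : (ι → ℕ) → M) (hf : ∀ d, d i = 0 → f d = 0) (m : ℕ) :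
    ∑ d ∈ Finset.piAntidiag Finset.univ (m + 1), f d =
      ∑ d ∈ Finset.piAntidiag Finset.univ m, f (d + Pi.single i 1) := by
  refine (Finset.sum_of_injOn (· + Pi.single i 1) (add_left_injective _).injOn ?_ ?_
    fun _ _ => rfl).symm
  · intro d hd
    simpa [Finset.sum_add_distrib] using hd
  · refine fun d hd himage => hf d (by_contra fun hdi => himage ?_)
    obtain ⟨e, rfl⟩ : ∃ e, d = e + Pi.single i 1 :=
      le_iff_exists_add'.1 <|
        update_le_iff.2 ⟨Nat.one_le_iff_ne_zero.2 hdi, fun j _ => Nat.zero_le _⟩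
    refine ⟨e, ?_, rfl⟩
    simpa [Finset.sum_add_distrib] using hd

lemma prod_univ_cyclic {M : Type*} [CommMonoid M] (f : Fin 3 → M) (i : Fin 3) :
    ∏ j, f j = f i * f (i + 1) * f (i + 2) := by
  rw [← Equiv.prod_comp (Equiv.addLeft i) f, Fin.prod_univ_three]
  simp

lemma prod_pair_cyclic {M : Type*} [CommMonoid M] (g : Fin 3 → Fin 3 → M) (i : Fin 3) :
    ∏ j, g (j + 1) (j + 2) = g (i + 1) (i + 2) * g (i + 2) i * g i (i + 1) := by
  have hi : i + 1 + 1 = i + 2 ∧ i + 1 + 2 = i ∧ i + 2 + 1 = i ∧ i + 2 + 2 = i + 1 := by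
    revert i; decide
  rw [prod_univ_cyclic _ i, hi.1, hi.2.1, hi.2.2.1, hi.2.2.2]

/-- The factor of `T d` left after removing the Vandermonde factor and `twist`, with each
`rising (x_i + x_j + 1)` started one step earlier so that all its relations are telescoping. -/
def weight (d : Fin 3 → ℕ) : R :=
  (∏ i, rising (X (i + 1) + X (i + 2)) (d (i + 1) + d (i + 2))) * (denom X d)⁻¹

lemma denom_ne_zero (d : Fin 3 → ℕ) : denom (X : Fin 3 → R) d ≠ 0 :=
  fun h => constantCoeff_denom_ne_zero d (by rw [h, map_zero])

lemma weight_mul_denom (d : Fin 3 → ℕ) : weight d * denom X d =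
    ∏ i, rising (X (i + 1) + X (i + 2)) (d (i + 1) + d (i + 2)) := by
  rw [weight, mul_assoc, MvPowerSeries.inv_mul_cancel _ (constantCoeff_denom_ne_zero d), mul_one]

lemma shift_add_single (d : Fin 3 → ℕ) (i : Fin 3) :
    shift (d + Pi.single i 1) = shift d + Pi.single i 1 := by
  funext j
  rcases eq_or_ne j i with rfl | hj <;> simp [shift, *, add_assoc]

lemma denom_add_single (d : Fin 3 → ℕ) (i : Fin 3) :
    denom X (d + Pi.single i 1) = denom X d * (shift d i + 1) ^ 6 := by
  have hi : i + 1 ≠ i ∧ i + 2 ≠ i := by revert i; decide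
  simp only [denom, prod_univ_cyclic _ i, shift, Pi.add_apply, Pi.single_eq_same,
    Pi.single_eq_of_ne hi.1, Pi.single_eq_of_ne hi.2, rising_succ, add_zero]
  ring

lemma pow_mul_weight_add_single (d : Fin 3 → ℕ) (i : Fin 3) :
    (shift d i + 1) ^ 6 * (shift d (i + 1) + shift d (i + 2)) * weight (d + Pi.single i 1) =
      pairSum (shift d) * weight d := by
  have hi : i + 1 ≠ i ∧ i + 2 ≠ i := by revert i; decide
  let g (d : Fin 3 → ℕ) (j k : Fin 3) : R := rising (X j + X k) (d j + d k)
  have hg : (shift d (i + 1) + shift d (i + 2)) * ∏ j, g (d + Pi.single i 1) (j + 1) (j + 2) =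
      pairSum (shift d) * ∏ j, g d (j + 1) (j + 2) := by
    rw [prod_pair_cyclic _ i, prod_pair_cyclic _ i, pairSum,
      prod_pair_cyclic (fun j k => shift d j + shift d k) i]
    simp only [g, shift, Pi.add_apply, Pi.single_eq_same, Pi.single_eq_of_ne hi.1,
      Pi.single_eq_of_ne hi.2, add_zero, add_right_comm _ 1, ← add_assoc, rising_succ]
    push_cast
    ring
  apply mul_right_cancel₀ (denom_ne_zero d)
  rw [mul_assoc (pairSum _), weight_mul_denom, ← hg, ← weight_mul_denom, denom_add_single]
  ring

/-- Power series truncated below total degree `7`, one more than the degree of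
`vandermonde (X ^ 2)`. -/
abbrev Trunc : Type := R ⧸ IsLocalRing.maximalIdeal R ^ 7

lemma X_mem_maximalIdeal (i : Fin 3) : (X i : R) ∈ IsLocalRing.maximalIdeal R := by
  rw [IsLocalRing.mem_maximalIdeal, mem_nonunits_iff, isUnit_iff_constantCoeff, constantCoeff_X]
  exact not_isUnit_zero

lemma pow_mul_weight_mem (d : Fin 3 → ℕ) {i : Fin 3} (hd : d i = 0) :
    shift d i ^ 6 * (shift d (i + 1) + shift d (i + 2)) * weight d ∈
      IsLocalRing.maximalIdeal R ^ 7 := by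
  have hboundary : (shift d (i + 1) + shift d (i + 2)) *
      rising (X (i + 1) + X (i + 2)) (d (i + 1) + d (i + 2)) =
      (X (i + 1) + X (i + 2)) * rising (X (i + 1) + X (i + 2) + 1) (d (i + 1) + d (i + 2)) := by
    rw [← rising_succ_left, rising_succ, shift, shift]
    push_cast
    ring
  rw [weight, prod_pair_cyclic (fun j k => rising (X j + X k) (d j + d k)) i, shift, hd,
    Nat.cast_zero, add_zero, pow_succ _ 6]
  have hmem := Ideal.mul_mem_mul (Ideal.pow_mem_pow (X_mem_maximalIdeal i) 6)
    (add_mem (X_mem_maximalIdeal (i + 1)) (X_mem_maximalIdeal (i + 2)))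
  convert Ideal.mul_mem_right (rising (X (i + 1) + X (i + 2) + 1) (d (i + 1) + d (i + 2)) *
    rising (X (i + 2) + X i) (d (i + 2) + d i) * rising (X i + X (i + 1)) (d i + d (i + 1)) *
    (denom X d)⁻¹) _ hmem using 1
  rw [hd]
  linear_combination (X i ^ 6 * rising (X (i + 2) + X i) (d (i + 2) + 0) *
    rising (X i + X (i + 1)) (0 + d (i + 1)) * (denom X d)⁻¹) * hboundary

end Telescoping

section Moments

open MvPowerSeries

/-- The sum of `f (x + d)` over `|d| = m`, weighted by `vandermonde ((x + d) ^ 2) * weight d` and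
truncated. -/
def moment (m : ℕ) : ((Fin 3 → R) → R) →ₗ[R] Trunc :=
  Submodule.mkQ (IsLocalRing.maximalIdeal R ^ 7) ∘ₗ
    ∑ d ∈ Finset.piAntidiag Finset.univ m,
      (vandermonde (shift d ^ 2) * weight d) • LinearMap.proj (shift d)

lemma moment_apply (m : ℕ) (f : (Fin 3 → R) → R) :
    moment m f = Ideal.Quotient.mk _ (∑ d ∈ Finset.piAntidiag Finset.univ m,
      f (shift d) * (vandermonde (shift d ^ 2) * weight d)) := by
  simp only [moment, LinearMap.comp_apply, LinearMap.sum_apply, LinearMap.smul_apply,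
    LinearMap.proj_apply, smul_eq_mul, mul_comm _ (f _)]
  rfl

/- Summing by parts the function `h (y_{i+1}, y_{i+2}) f(y)` in each direction `i`. -/
lemma moment_succ_mul {P f Q : (Fin 3 → R) → R} {h : R → R → R}
    (hP : ∀ y, P y * vandermonde (y ^ 2) =
      ∑ i, y i ^ 6 * (y (i + 1) + y (i + 2)) * h (y (i + 1)) (y (i + 2)))
    (hQ : ∀ y, Q y * vandermonde y = ∑ i, h (y (i + 1)) (y (i + 2)) * f (y + Pi.single i 1))
    (m : ℕ) : moment (m + 1) (P * f) = moment m Q := by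
  let term (i : Fin 3) (d : Fin 3 → ℕ) : R :=
    shift d i ^ 6 * (shift d (i + 1) + shift d (i + 2)) *
      (h (shift d (i + 1)) (shift d (i + 2)) * f (shift d)) * weight d
  have hboundary (i : Fin 3) (d : Fin 3 → ℕ) (hd : d i = 0) :
      (Ideal.Quotient.mk _ (term i d) : Trunc) = 0 := by
    rw [Ideal.Quotient.eq_zero_iff_mem]
    change _ * _ * _ ∈ _
    rw [mul_right_comm]
    exact Ideal.mul_mem_right _ _ (pow_mul_weight_mem d hd)
  have hterm (i : Fin 3) (d : Fin 3 → ℕ) : term i (d + Pi.single i 1) =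
      h (shift d (i + 1)) (shift d (i + 2)) * f (shift d + Pi.single i 1) *
        (pairSum (shift d) * weight d) := by
    have hi : i + 1 ≠ i ∧ i + 2 ≠ i := by revert i; decide
    rw [← pow_mul_weight_add_single d i]
    simp only [term, shift_add_single, Pi.add_apply, Pi.single_eq_same, Pi.single_eq_of_ne hi.1,
      Pi.single_eq_of_ne hi.2, add_zero]
    ring
  calc moment (m + 1) (P * f)
      = ∑ i, ∑ d ∈ Finset.piAntidiag Finset.univ (m + 1), Ideal.Quotient.mk _ (term i d) := by
        rw [Finset.sum_comm, moment_apply, map_sum]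
        refine Finset.sum_congr rfl fun d _ => ?_
        rw [← map_sum, ← Finset.sum_mul]
        simp only [← mul_assoc _ _ (f _), ← Finset.sum_mul, ← hP]
        rw [Pi.mul_apply, ← mul_assoc, mul_right_comm (P _)]
    _ = ∑ i, ∑ d ∈ Finset.piAntidiag Finset.univ m,
          Ideal.Quotient.mk _ (term i (d + Pi.single i 1)) :=
        Finset.sum_congr rfl fun i _ =>
          sum_piAntidiag_succ i (fun d => Ideal.Quotient.mk _ (term i d)) (hboundary i) m
    _ = moment m Q := by
        rw [Finset.sum_comm, moment_apply, map_sum]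
        refine Finset.sum_congr rfl fun d _ => ?_
        rw [← map_sum]
        simp only [hterm, ← Finset.sum_mul, ← hQ]
        rw [vandermonde_sq, mul_assoc, mul_assoc (vandermonde _)]

variable {B : Type*} [CommRing B]

/-- The first elementary symmetric polynomial. -/
def e₁ (y : Fin 3 → B) : B := y 0 + y 1 + y 2

/-- The second elementary symmetric polynomial. -/
def e₂ (y : Fin 3 → B) : B := y 0 * y 1 + y 0 * y 2 + y 1 * y 2

/-- The third elementary symmetric polynomial. -/
def e₃ (y : Fin 3 → B) : B := y 0 * y 1 * y 2

/-- The linear form `x₁ + x₂ + x₃ + m`, the common value of `e₁ (x + d)` for `|d| = m`. -/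
def degreeForm (m : ℕ) : R := ∑ i, X i + (m : R)

/-- The truncation of `degreeForm m`. -/
def degreeShift (m : ℕ) : Trunc := Ideal.Quotient.mk _ (degreeForm m)

lemma degreeShift_succ (m : ℕ) : degreeShift (m + 1) = degreeShift m + 1 := by
  rw [degreeShift, degreeShift, degreeForm, degreeForm, Nat.cast_succ, ← add_assoc,
    map_add _ _ 1, map_one]

lemma moment_e₁_mul (m : ℕ) (f : (Fin 3 → R) → R) :
    moment m (e₁ * f) = degreeShift m * moment m f := by
  rw [moment_apply, moment_apply, degreeShift, ← map_mul, Finset.mul_sum]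
  refine congrArg _ (Finset.sum_congr rfl fun d hd => ?_)
  have he₁ : e₁ (shift d) = degreeForm m := by
    rw [degreeForm, ← (Finset.mem_piAntidiag.1 hd).1, Fin.sum_univ_three, Fin.sum_univ_three,
      e₁, shift, shift, shift]
    push_cast
    ring
  rw [Pi.mul_apply, he₁, mul_assoc]

lemma moment_two_mul (m : ℕ) (f : (Fin 3 → R) → R) : moment m (2 * f) = 2 * moment m f := by
  rw [two_mul, map_add, two_mul]

/- In the next three lemmas `P` runs through the elementary symmetric polynomials of
`y₁², y₂², y₃²`, whose vanishing presents the cohomology of the Lagrangian Grassmannian. -/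
lemma moment_succ_e₁_sq {f Q : (Fin 3 → R) → R}
    (hQ : ∀ y, Q y * vandermonde y = ∑ i, (y (i + 1) - y (i + 2)) * f (y + Pi.single i 1)) (m : ℕ) :
    degreeShift (m + 1) ^ 2 * moment (m + 1) f - 2 * moment (m + 1) (e₂ * f) = moment m Q := by
  have hP (y : Fin 3 → R) : (e₁ * e₁ - 2 * e₂ : (Fin 3 → R) → R) y * vandermonde (y ^ 2) =
      ∑ i, y i ^ 6 * (y (i + 1) + y (i + 2)) * (y (i + 1) - y (i + 2)) := by
    simp only [Pi.sub_apply, Pi.mul_apply, Pi.ofNat_apply, Pi.pow_apply, vandermonde_eq, e₁, e₂,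
      Fin.sum_univ_three, Fin.reduceAdd]
    ring
  rw [← moment_succ_mul (h := fun a b => a - b) hP hQ, sub_mul, map_sub, mul_assoc, mul_assoc,
    moment_e₁_mul, moment_e₁_mul, moment_two_mul, sq, mul_assoc]

lemma moment_succ_e₂_sq {f Q : (Fin 3 → R) → R}
    (hQ : ∀ y, Q y * vandermonde y = ∑ i, (y (i + 1) - y (i + 2)) *
      (y (i + 1) ^ 2 + y (i + 2) ^ 2) * f (y + Pi.single i 1)) (m : ℕ) :
    moment (m + 1) (e₂ ^ 2 * f) - 2 * degreeShift (m + 1) * moment (m + 1) (e₃ * f) =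
      moment m Q := by
  have hP (y : Fin 3 → R) : (e₂ ^ 2 - 2 * (e₁ * e₃) : (Fin 3 → R) → R) y * vandermonde (y ^ 2) =
      ∑ i, y i ^ 6 * (y (i + 1) + y (i + 2)) *
        ((y (i + 1) - y (i + 2)) * (y (i + 1) ^ 2 + y (i + 2) ^ 2)) := by
    simp only [Pi.sub_apply, Pi.mul_apply, Pi.ofNat_apply, Pi.pow_apply, vandermonde_eq, e₁, e₂,
      e₃, Fin.sum_univ_three, Fin.reduceAdd]
    ring
  rw [← moment_succ_mul (h := fun a b => (a - b) * (a ^ 2 + b ^ 2)) hP hQ, sub_mul, map_sub,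
    mul_assoc 2 (e₁ * e₃), mul_assoc e₁, moment_two_mul, moment_e₁_mul, mul_assoc 2]

lemma moment_succ_e₃_sq {f Q : (Fin 3 → R) → R}
    (hQ : ∀ y, Q y * vandermonde y = ∑ i, (y (i + 1) - y (i + 2)) *
      (y (i + 1) ^ 2 * y (i + 2) ^ 2) * f (y + Pi.single i 1)) (m : ℕ) :
    moment (m + 1) (e₃ ^ 2 * f) = moment m Q := by
  have hP (y : Fin 3 → R) : (e₃ ^ 2 : (Fin 3 → R) → R) y * vandermonde (y ^ 2) =
      ∑ i, y i ^ 6 * (y (i + 1) + y (i + 2)) *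
        ((y (i + 1) - y (i + 2)) * (y (i + 1) ^ 2 * y (i + 2) ^ 2)) := by
    simp only [Pi.pow_apply, vandermonde_eq, e₃, Fin.sum_univ_three, Fin.reduceAdd]
    ring
  exact moment_succ_mul (h := fun a b => (a - b) * (a ^ 2 * b ^ 2)) hP hQ m

end Moments

section Relations

open MvPowerSeries

lemma vandermonde_X_sq_mem : vandermonde (X ^ 2 : Fin 3 → R) ∈ IsLocalRing.maximalIdeal R ^ 6 := by
  have hpair (i j : Fin 3) : ((X ^ 2 : Fin 3 → R) i - (X ^ 2 : Fin 3 → R) j) ∈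
      IsLocalRing.maximalIdeal R ^ 2 :=
    sub_mem (Ideal.pow_mem_pow (X_mem_maximalIdeal i) 2)
      (Ideal.pow_mem_pow (X_mem_maximalIdeal j) 2)
  rw [vandermonde_eq, show 6 = 2 + 2 + 2 from rfl, pow_add, pow_add]
  exact Ideal.mul_mem_mul (Ideal.mul_mem_mul (hpair 0 1) (hpair 0 2)) (hpair 1 2)

lemma moment_zero_eq_zero {f : (Fin 3 → R) → R} (hf : f X ∈ IsLocalRing.maximalIdeal R) :
    moment 0 f = 0 := by
  have hshift : shift 0 = X := funext fun i => by simp [shift]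
  rw [moment_apply, Finset.piAntidiag_zero, Finset.sum_singleton, hshift,
    Ideal.Quotient.eq_zero_iff_mem, pow_succ', ← mul_assoc]
  exact Ideal.mul_mem_right _ _ (Ideal.mul_mem_mul hf vandermonde_X_sq_mem)

lemma moment_zero_e₃ : moment 0 e₃ = 0 :=
  moment_zero_eq_zero (Ideal.mul_mem_left _ _ (X_mem_maximalIdeal 2))

lemma two_mul_moment_e₂ (m : ℕ) : 2 * moment m e₂ = degreeShift m ^ 2 * moment m 1 := by
  rcases m with _ | m
  · have he₁ : moment 0 (e₁ * (e₁ * 1)) = 0 := moment_zero_eq_zero <|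
      Ideal.mul_mem_right _ _ <|
        add_mem (add_mem (X_mem_maximalIdeal 0) (X_mem_maximalIdeal 1)) (X_mem_maximalIdeal 2)
    have he₂ : moment 0 e₂ = 0 := moment_zero_eq_zero <|
      add_mem (add_mem (Ideal.mul_mem_left _ _ (X_mem_maximalIdeal 1))
        (Ideal.mul_mem_left _ _ (X_mem_maximalIdeal 2)))
        (Ideal.mul_mem_left _ _ (X_mem_maximalIdeal 2))
    rw [moment_e₁_mul, moment_e₁_mul, ← mul_assoc, ← sq] at he₁
    rw [he₁, he₂, mul_zero]
  · have h := moment_succ_e₁_sq (f := 1) (Q := 0) (fun y => by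
      simp [Fin.sum_univ_three]
      ring) m
    rw [mul_one, map_zero, sub_eq_zero] at h
    exact h.symm

lemma eight_mul_moment_succ_e₃ (m : ℕ) :
    8 * degreeShift (m + 1) * moment (m + 1) e₃ =
      degreeShift (m + 1) ^ 4 * moment (m + 1) 1 + 4 * moment m 1 := by
  have h₁ := moment_succ_e₁_sq (f := e₂) (Q := 0) (fun y => by
    simp [Fin.sum_univ_three, e₂]
    ring) m
  have h₂ := moment_succ_e₂_sq (f := 1) (Q := -1) (fun y => by
    simp [Fin.sum_univ_three, vandermonde_eq]
    ring) m
  have he₂ := two_mul_moment_e₂ (m + 1)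
  rw [← sq, map_zero] at h₁
  rw [mul_one, mul_one, map_neg] at h₂
  linear_combination degreeShift (m + 1) ^ 2 * he₂ - 2 * h₁ - 4 * h₂

lemma pow_four_mul_moment_succ_e₃ (m : ℕ) :
    degreeShift (m + 1) ^ 4 * moment (m + 1) e₃ =
      (4 * degreeShift (m + 1) * degreeShift m ^ 2 + 2 * degreeShift (m + 1) ^ 2 - 1) * moment m 1 -
        4 * moment m e₃ := by
  have h₁ := moment_succ_e₁_sq (f := e₃) (Q := 1) (fun y => by
    simp [Fin.sum_univ_three, vandermonde_eq, e₃]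
    ring) m
  have h₂ := moment_succ_e₁_sq (f := e₂ * e₃) (Q := e₂ + e₁ * 1) (fun y => by
    simp [Fin.sum_univ_three, vandermonde_eq, e₁, e₂, e₃]
    ring) m
  have h₃ := moment_succ_e₂_sq (f := e₃) (Q := e₁ * (e₁ * 1) - 2 * e₂ - e₃) (fun y => by
    simp [Fin.sum_univ_three, vandermonde_eq, e₁, e₂, e₃]
    ring) m
  have h₄ := moment_succ_e₃_sq (f := 1) (Q := e₂) (fun y => by
    simp [Fin.sum_univ_three, vandermonde_eq, e₂]
    ring) m
  have he₂ := two_mul_moment_e₂ m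
  rw [← mul_assoc, ← sq, map_add, moment_e₁_mul] at h₂
  rw [← sq, map_sub, map_sub, moment_e₁_mul, moment_e₁_mul, moment_two_mul] at h₃
  rw [mul_one] at h₄
  rw [degreeShift_succ] at *
  linear_combination (degreeShift m + 1) ^ 2 * h₁ + 2 * h₂ + 4 * h₃ + 8 * (degreeShift m + 1) * h₄ +
    (4 * degreeShift m + 1) * he₂

lemma moment_one_one : degreeShift 1 ^ 8 * moment 1 1 =
    (8 * degreeShift 1 * (4 * degreeShift 1 * degreeShift 0 ^ 2 + 2 * degreeShift 1 ^ 2 - 1) -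
      4 * degreeShift 1 ^ 4) * moment 0 1 := by
  have h := pow_four_mul_moment_succ_e₃ 0
  rw [moment_zero_e₃] at h
  linear_combination 8 * degreeShift 1 * h - degreeShift 1 ^ 4 * eight_mul_moment_succ_e₃ 0

lemma moment_add_two_one (m : ℕ) :
    degreeShift (m + 2) ^ 8 * degreeShift (m + 1) * moment (m + 2) 1 =
      (8 * degreeShift (m + 2) * degreeShift (m + 1) *
          (4 * degreeShift (m + 2) * degreeShift (m + 1) ^ 2 + 2 * degreeShift (m + 2) ^ 2 - 1) -
        4 * degreeShift (m + 2) ^ 4 * degreeShift (m + 1) -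
        4 * degreeShift (m + 2) * degreeShift (m + 1) ^ 4) * moment (m + 1) 1 -
      16 * degreeShift (m + 2) * moment m 1 := by
  linear_combination
    8 * degreeShift (m + 2) * degreeShift (m + 1) * pow_four_mul_moment_succ_e₃ (m + 1) -
    degreeShift (m + 2) ^ 4 * degreeShift (m + 1) * eight_mul_moment_succ_e₃ (m + 1) -
    4 * degreeShift (m + 2) * eight_mul_moment_succ_e₃ m

end Relations

section ConstantTerms

open MvPowerSeries

lemma order_X_add_C_mul_X {i j : Fin 3} (hij : i ≠ j) (c : ℚ) :
    (X i + C c * X j : R).order = 1 := by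
  refine le_antisymm ?_ (one_le_order_iff_constCoeff_eq_zero.2 (by simp))
  have hcoeff : coeff (Finsupp.single i 1) (X i + C c * X j : R) = 1 := by
    simp [coeff_X, Finsupp.single_left_inj, hij]
  simpa using order_le (hcoeff.trans_ne one_ne_zero)

lemma order_vandermonde_X_sq : (vandermonde (X ^ 2 : Fin 3 → R)).order = 6 := by
  have hadd {i j : Fin 3} (hij : i ≠ j) : (X i + X j : R).order = 1 := by
    simpa using order_X_add_C_mul_X hij 1
  have hsub {i j : Fin 3} (hij : i ≠ j) : (X i - X j : R).order = 1 := by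
    simpa [sub_eq_add_neg] using order_X_add_C_mul_X hij (-1)
  rw [vandermonde_sq, vandermonde_eq, pairSum, Fin.prod_univ_three]
  simp only [order_mul]
  rw [hsub (by decide), hsub (by decide), hsub (by decide), hadd (by decide), hadd (by decide),
    hadd (by decide)]
  norm_num

lemma le_order_of_mem_pow {f : R} {m : ℕ} (hf : f ∈ IsLocalRing.maximalIdeal R ^ m) :
    m ≤ f.order := by
  induction m generalizing f with
  | zero => simp
  | succ m ih =>
    rw [pow_succ] at hf
    induction hf using Submodule.mul_induction_on' with
    | mem_mul_mem a ha b hb =>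
      have hb : 1 ≤ b.order := by
        rw [one_le_order_iff_constCoeff_eq_zero]
        rwa [IsLocalRing.mem_maximalIdeal, mem_nonunits_iff, isUnit_iff_constantCoeff,
          isUnit_iff_ne_zero, not_not] at hb
      rw [Nat.cast_succ, order_mul]
      exact add_le_add (ih ha) hb
    | add a _ b _ ha hb => exact (le_min ha hb).trans (min_order_le_add)

lemma constantCoeff_eq_zero_of_mk {h : R}
    (hh : (Ideal.Quotient.mk _ (vandermonde (X ^ 2) * h) : Trunc) = 0) : constantCoeff h = 0 := by
  have horder := le_order_of_mem_pow (Ideal.Quotient.eq_zero_iff_mem.1 hh)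
  rw [order_mul, order_vandermonde_X_sq, Nat.cast_ofNat, show (7 : ℕ∞) = 6 + 1 from rfl] at horder
  rw [← one_le_order_iff_constCoeff_eq_zero]
  exact (ENat.add_le_add_iff_left (by decide)).1 horder

lemma constantCoeff_degreeForm (m : ℕ) : constantCoeff (degreeForm m) = m := by
  rw [degreeForm, map_add, map_sum, Finset.sum_eq_zero fun i _ => constantCoeff_X i, zero_add,
    map_natCast]

lemma pairSum_mul_T (d : Fin 3 → ℕ) : pairSum X * T d =
    twist (∑ i, X i) (∑ i, d i) * (vandermonde (shift d ^ 2) * weight d) := by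
  have hrising : pairSum X * ∏ i, rising (X (i + 1) + X (i + 2) + 1 : R) (d (i + 1) + d (i + 2)) =
      pairSum (shift d) * (weight d * denom X d) := by
    rw [weight_mul_denom, pairSum, pairSum, ← Finset.prod_mul_distrib, ← Finset.prod_mul_distrib]
    refine Finset.prod_congr rfl fun i _ => ?_
    rw [← rising_succ_left, rising_succ, shift, shift]
    push_cast
    ring
  have hshift : vandermonde (fun i => X i + (d i : R)) = vandermonde (shift d) := rfl
  apply mul_right_cancel₀ (denom_ne_zero d)
  rw [mul_assoc, T_mul_denom, numer, hshift, vandermonde_sq]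
  linear_combination vandermonde (shift d) * twist (∑ i, X i) (∑ i, d i) * hrising

lemma mk_twist_mul_moment_one (m : ℕ) :
    Ideal.Quotient.mk _ (twist (∑ i, X i) m) * moment m 1 =
      Ideal.Quotient.mk _ (pairSum X * F m) := by
  rw [moment_apply, ← map_mul, F_eq_sum, Finset.mul_sum, Finset.mul_sum]
  refine congrArg _ (Finset.sum_congr rfl fun d hd => ?_)
  rw [pairSum_mul_T, (Finset.mem_piAntidiag.1 hd).1, Pi.one_apply, one_mul]

lemma constantCoeff_twist (m : ℕ) : constantCoeff (twist (∑ i, X i : R) m) =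
    (m.factorial : ℚ) ^ 2 * (2 * m).factorial := by
  rw [map_twist, map_sum, Finset.sum_eq_zero fun i _ => constantCoeff_X i, twist, mul_zero,
    zero_add, rising_one, rising_one]

lemma exists_moment_one_eq {m : ℕ} {G : R} (hG : F m = Vand * G) :
    ∃ v : R, moment m 1 = Ideal.Quotient.mk _ (vandermonde (X ^ 2) * v) ∧
      constantCoeff G = (m.factorial : ℚ) ^ 2 * (2 * m).factorial * constantCoeff v := by
  have hne : constantCoeff (twist (∑ i, X i : R) m) ≠ 0 := by
    rw [constantCoeff_twist]
    positivity
  have htwist := MvPowerSeries.mul_inv_cancel _ hne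
  refine ⟨(twist (∑ i, X i) m)⁻¹ * G, ?_, ?_⟩
  · have hVand : pairSum X * F m = vandermonde (X ^ 2) * G := by
      rw [hG, vandermonde_sq, mul_comm (vandermonde _), mul_assoc]
      rfl
    rw [mul_left_comm, map_mul, ← hVand, ← mk_twist_mul_moment_one, ← mul_assoc, ← map_mul,
      mul_comm (_)⁻¹, htwist, map_one (Ideal.Quotient.mk _), one_mul]
  · rw [← constantCoeff_twist, ← map_mul, ← mul_assoc, htwist, one_mul]

end ConstantTerms

section Recurrence

open MvPowerSeries

variable {v : ℕ → R}
  (hv : ∀ m, moment m 1 = Ideal.Quotient.mk _ (vandermonde (X ^ 2) * v m))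
include hv

lemma constantCoeff_one_eq : constantCoeff (v 1) = 4 * constantCoeff (v 0) := by
  have hrel := moment_one_one
  simp only [hv, degreeShift] at hrel
  have hzero := constantCoeff_eq_zero_of_mk (h := degreeForm 1 ^ 8 * v 1 -
    (8 * degreeForm 1 * (4 * degreeForm 1 * degreeForm 0 ^ 2 + 2 * degreeForm 1 ^ 2 - 1) -
      4 * degreeForm 1 ^ 4) * v 0) (by
    simp only [map_mul, map_sub, map_add, map_pow, map_ofNat, map_one] at hrel ⊢
    linear_combination hrel)
  simp only [map_mul, map_sub, map_add, map_pow, map_ofNat, map_one,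
    constantCoeff_degreeForm] at hzero
  push_cast at hzero
  linear_combination hzero

lemma constantCoeff_recurrence (m : ℕ) :
    (m + 2 : ℚ) ^ 7 * (m + 1) * constantCoeff (v (m + 2)) -
      4 * (m + 1) * (2 * m + 3) * (3 * m ^ 2 + 9 * m + 7) * constantCoeff (v (m + 1)) +
      16 * constantCoeff (v m) = 0 := by
  have hrel := moment_add_two_one m
  simp only [hv, degreeShift] at hrel
  have hzero := constantCoeff_eq_zero_of_mk (h :=
    degreeForm (m + 2) ^ 8 * degreeForm (m + 1) * v (m + 2) -
      (8 * degreeForm (m + 2) * degreeForm (m + 1) *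
          (4 * degreeForm (m + 2) * degreeForm (m + 1) ^ 2 + 2 * degreeForm (m + 2) ^ 2 - 1) -
        4 * degreeForm (m + 2) ^ 4 * degreeForm (m + 1) -
        4 * degreeForm (m + 2) * degreeForm (m + 1) ^ 4) * v (m + 1) +
      16 * degreeForm (m + 2) * v m) (by
    simp only [map_mul, map_sub, map_add, map_pow, map_ofNat, map_one] at hrel ⊢
    linear_combination hrel)
  have hm : (m + 2 : ℚ) ≠ 0 := by positivity
  apply mul_left_cancel₀ hm
  simp only [map_mul, map_sub, map_add, map_pow, map_ofNat, map_one,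
    constantCoeff_degreeForm] at hzero
  push_cast at hzero
  linear_combination hzero

omit hv

variable {G : ℕ → R} (hG : ∀ m, F m = Vand * G m)
include hG

lemma constantCoeff_quotient_one : constantCoeff (G 1) = 8 * constantCoeff (G 0) := by
  choose v hv hcoeff using fun m => exists_moment_one_eq (hG m)
  simp only [hcoeff, constantCoeff_one_eq hv, Nat.factorial]
  push_cast
  ring

lemma constantCoeff_quotient_recurrence (m : ℕ) :
    (m + 2 : ℚ) ^ 4 * constantCoeff (G (m + 2)) -
      8 * (2 * m + 3) ^ 2 * (3 * (m + 1) ^ 2 + 3 * (m + 1) + 1) * constantCoeff (G (m + 1)) +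
      64 * (m + 1) ^ 2 * (2 * m + 1) * (2 * m + 3) * constantCoeff (G m) = 0 := by
  choose v hv hcoeff using fun m => exists_moment_one_eq (hG m)
  have hfactorial (k : ℕ) :
      (2 * (k + 1)).factorial = (2 * k + 2) * (2 * k + 1) * (2 * k).factorial := by
    rw [Nat.mul_add, Nat.factorial_succ, Nat.factorial_succ, mul_assoc]
  simp only [hcoeff, hfactorial, Nat.factorial_succ]
  push_cast
  linear_combination (4 * (m + 1) ^ 2 * (2 * m + 1) * (2 * m + 3) *
    ((m.factorial : ℚ) ^ 2 * (2 * m).factorial)) * constantCoeff_recurrence hv m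

end Recurrence

section PicardFuchs

lemma coeff_th (f : PowerSeries ℚ) (m : ℕ) :
    PowerSeries.coeff m (th f) = m * PowerSeries.coeff m f :=
  PowerSeries.coeff_mk _ _

lemma coeff_ofNat_mul (c : ℕ) [c.AtLeastTwo] (f : PowerSeries ℚ) (m : ℕ) :
    PowerSeries.coeff m (ofNat(c) * f) = ofNat(c) * PowerSeries.coeff m f := by
  rw [← map_ofNat (PowerSeries.C (R := ℚ)) c, PowerSeries.coeff_C_mul]

/-- The operator `θ⁴ - 8q(2θ+1)²(3θ²+3θ+1) + 64q²(θ+1)²(2θ+1)(2θ+3)`. -/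
def picardFuchs (f : PowerSeries ℚ) : PowerSeries ℚ :=
  th^[4] f - 8 * PowerSeries.X * ((fun g => 2 * th g + g) ((fun g => 2 * th g + g)
    (3 * th^[2] f + 3 * th f + f))) + 64 * PowerSeries.X ^ 2 * ((fun g => th g + g)
    ((fun g => th g + g) ((fun g => 2 * th g + g) ((fun g => 2 * th g + 3 * g) f))))

lemma picardFuchs_mk_eq_zero {a : ℕ → ℚ} (hinit : a 1 = 8 * a 0)
    (hrec : ∀ m : ℕ, (m + 2 : ℚ) ^ 4 * a (m + 2) -
      8 * (2 * m + 3) ^ 2 * (3 * (m + 1) ^ 2 + 3 * (m + 1) + 1) * a (m + 1) +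
      64 * (m + 1) ^ 2 * (2 * m + 1) * (2 * m + 3) * a m = 0) :
    picardFuchs (PowerSeries.mk a) = 0 := by
  ext m
  simp only [picardFuchs, Function.iterate_succ, Function.iterate_zero, Function.comp_apply, id,
    pow_two, mul_assoc, map_add, map_sub, map_zero, coeff_ofNat_mul]
  match m with
  | 0 => simp [coeff_th]
  | 1 =>
    simp only [PowerSeries.coeff_succ_X_mul, PowerSeries.coeff_zero_X_mul, map_add,
      coeff_ofNat_mul, coeff_th, PowerSeries.coeff_mk]
    push_cast
    linear_combination hinit
  | m + 2 =>
    simp only [PowerSeries.coeff_succ_X_mul, map_add,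
      coeff_ofNat_mul, coeff_th, PowerSeries.coeff_mk]
    push_cast
    linear_combination hrec m

end PicardFuchs

/-- every `F_δ` is divisible by the Vandermonde `Δ`, and the series
`I₀ = Σ a_δ q^δ` with `a_δ = (F_δ/Δ)(0)` is annihilated by the stated
Picard–Fuchs operator. -/
theorem stmt_10 :
    (∀ δ : ℕ, ∃ G : R, F δ = Vand * G) ∧
    (∀ G : ℕ → R, (∀ δ : ℕ, F δ = Vand * G δ) →
      ∀ I₀ : PowerSeries ℚ,
        I₀ = PowerSeries.mk (fun δ => MvPowerSeries.constantCoeff (G δ)) →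
        th^[4] I₀ - 8 * PowerSeries.X * ((fun g => 2 * th g + g) ((fun g => 2 * th g + g) (3 * th^[2] I₀ + 3 * th I₀ + I₀))) + 64 * PowerSeries.X ^ 2 * ((fun g => th g + g) ((fun g => th g + g) ((fun g => 2 * th g + g) ((fun g => 2 * th g + 3 * g) (I₀))))) = 0) := by
  refine ⟨Vand_dvd_F, ?_⟩
  rintro G hG I₀ rfl
  exact picardFuchs_mk_eq_zero (constantCoeff_quotient_one hG)
    (constantCoeff_quotient_recurrence hG)

end Stmt10
end
end
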